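/- arXiv:1211.6080 — 3 statements merged into one kernel-verified Lean document; each statement's English description precedes it below -/
import Mathlib

section
/- Let X, Y be real Hilbert spaces, U ⊆ X and V ⊆ Y open, F : U → V a C^{1,1}-diffeomorphism, Ω ⊆ U a closed ball centered at x₀, and F(Ω) closed. Let 𝒟² be any one of the four generalized second-order directional derivative operators. Then F(Ω) is convex if and only if 𝒟²(y ↦ ⟨x−x₀, F'(x)⁻¹F(y)⟩)(x,h²) ≤ 1 for all x ∈ ∂Ω and all h ∈ X with h ⟂ (x−x₀) and ‖h‖ = 1. -/
open Filter Topology Metric RealInnerProductSpace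

/-- Lower right generalized second-order directional derivative
`D̲²₊f(x,h,k) = liminf_{t↓0} (f'(x+th)k − f'(x)k)/t`. -/
noncomputable def lowD2p {X : Type*} [NormedAddCommGroup X] [NormedSpace ℝ X]
    (f : X → ℝ) (x h k : X) : ℝ :=
  liminf (fun t : ℝ => (fderiv ℝ f (x + t • h) k - fderiv ℝ f x k) / t) (𝓝[>] (0:ℝ))

/-- Upper right generalized second-order directional derivative. -/
noncomputable def upD2p {X : Type*} [NormedAddCommGroup X] [NormedSpace ℝ X]
    (f : X → ℝ) (x h k : X) : ℝ :=
  limsup (fun t : ℝ => (fderiv ℝ f (x + t • h) k - fderiv ℝ f x k) / t) (𝓝[>] (0:ℝ))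

/-- Lower left generalized second-order directional derivative. -/
noncomputable def lowD2m {X : Type*} [NormedAddCommGroup X] [NormedSpace ℝ X]
    (f : X → ℝ) (x h k : X) : ℝ :=
  liminf (fun t : ℝ => (fderiv ℝ f (x + t • h) k - fderiv ℝ f x k) / t) (𝓝[<] (0:ℝ))

/-- Upper left generalized second-order directional derivative. -/
noncomputable def upD2m {X : Type*} [NormedAddCommGroup X] [NormedSpace ℝ X]
    (f : X → ℝ) (x h k : X) : ℝ :=
  limsup (fun t : ℝ => (fderiv ℝ f (x + t • h) k - fderiv ℝ f x k) / t) (𝓝[<] (0:ℝ))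

/-- `F : U → V` is a `C^{1,1}`-diffeomorphism with inverse `G`. -/
def IsC11DiffeoOn {X Y : Type*} [NormedAddCommGroup X] [NormedSpace ℝ X]
    [NormedAddCommGroup Y] [NormedSpace ℝ Y]
    (F : X → Y) (G : Y → X) (U : Set X) (V : Set Y) : Prop :=
  Set.MapsTo F U V ∧ Set.MapsTo G V U ∧
    (∀ x ∈ U, G (F x) = x) ∧ (∀ y ∈ V, F (G y) = y) ∧
    ContDiffOn ℝ 1 F U ∧
    (∀ x ∈ U, ∃ ε > 0, ∃ L : NNReal,
      LipschitzOnWith L (fun y => fderiv ℝ F y) (ball x ε ∩ U)) ∧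
    ContDiffOn ℝ 1 G V ∧
    (∀ y ∈ V, ∃ ε > 0, ∃ L : NNReal,
      LipschitzOnWith L (fun z => fderiv ℝ G z) (ball y ε ∩ V))

/-!
Write `φ y = ‖F⁻¹ y - x₀‖² / 2`, so that `F(Ω)` is a sublevel set of `φ`. Since `φ ∘ F` is half the
squared distance to `x₀`, whose second derivative in the direction `h` is `‖h‖²`, and since
`φ'(F x) = ⟨x - x₀, F'(x)⁻¹ ·⟩`, the chain rule for second-order quotients gives
`upper 𝒟²(φ'(F x) ∘ F)(x,h²) = ‖h‖² - lower 𝒟²φ(F x,v²)` with `v = F'(x)h`, and likewise with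
upper and lower exchanged. The condition of the theorem thus says that `𝒟²φ ≥ 0` in the directions
tangent to the boundary of `F(Ω)`.

Over a tangent line `p + t v` the level set of `φ` is a `C¹` graph `t ↦ p + t v + u(t) e` with
`φ'(p)e > 0`, and the Dini derivatives of `u'` have the sign opposite to those of `φ'`.
If `F(Ω)` is convex, its supporting hyperplanes at two nearby boundary points force `u' ≤ 0` to the
right of `0`. Conversely, the sign condition makes `u'` nonincreasing, so a segment contained in
`F(Ω)` that touches the boundary at an interior point stays on the boundary from there on. Hence
segments in `F(Ω)` with endpoints in `F(int Ω)` lie in `F(int Ω)`, and a connectedness argument on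
the set of endpoints visible from a given point shows that `F(int Ω)` is convex.
-/

open scoped NNReal
open Asymptotics

/-- The first-order difference quotient of `f'(·)h` at `x` in the direction `h`, whose one-sided
lower and upper limits at `0` are the four generalized derivatives `𝒟²f(x,h²)`. -/
noncomputable def secondQuotient {E : Type*} [NormedAddCommGroup E] [NormedSpace ℝ E]
    (f : E → ℝ) (x h : E) (t : ℝ) : ℝ :=
  (fderiv ℝ f (x + t • h) h - fderiv ℝ f x h) / t

/-- `f` is of class `C^{1,1}` near the point `x`. -/
def C11At {E F : Type*} [NormedAddCommGroup E] [NormedSpace ℝ E] [NormedAddCommGroup F]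
    [NormedSpace ℝ F] (f : E → F) (x : E) : Prop :=
  ContDiffAt ℝ 1 f x ∧ ∃ K : ℝ≥0, ∃ s ∈ 𝓝 x, LipschitzOnWith K (fderiv ℝ f) s

section C11At

variable {E F G ι : Type*} [NormedAddCommGroup E] [NormedSpace ℝ E] [NormedAddCommGroup F]
  [NormedSpace ℝ F] [NormedAddCommGroup G] [NormedSpace ℝ G]

lemma hasDerivAt_add_smul (x v : E) (τ : ℝ) : HasDerivAt (fun t : ℝ => x + t • v) v τ := by
  simpa using ((hasDerivAt_id τ).smul_const v).const_add x

lemma tendsto_add_smul_nhds_zero (x v : E) : Tendsto (fun t : ℝ => x + t • v) (𝓝 0) (𝓝 x) := by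
  simpa using (hasDerivAt_add_smul x v 0).continuousAt.tendsto

lemma exists_lipschitzOnWith_comp {α β γ : Type*} [PseudoEMetricSpace α] [PseudoEMetricSpace β]
    [PseudoEMetricSpace γ] {g : β → γ} {f : α → β} {x : α}
    (hg : ∃ K : ℝ≥0, ∃ s ∈ 𝓝 (f x), LipschitzOnWith K g s)
    (hf : ∃ K : ℝ≥0, ∃ s ∈ 𝓝 x, LipschitzOnWith K f s) :
    ∃ K : ℝ≥0, ∃ s ∈ 𝓝 x, LipschitzOnWith K (g ∘ f) s := by
  obtain ⟨K, s, hs, hgK⟩ := hg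
  obtain ⟨L, t, ht, hfL⟩ := hf
  have hfx : ContinuousAt f x := hfL.continuousOn.continuousAt ht
  exact ⟨K * L, t ∩ f ⁻¹' s, inter_mem ht (hfx hs),
    hgK.comp (hfL.mono Set.inter_subset_left) fun _ hy => hy.2⟩

lemma exists_lipschitzOnWith_prodMk {α β γ : Type*} [PseudoEMetricSpace α] [PseudoEMetricSpace β]
    [PseudoEMetricSpace γ] {f : α → β} {g : α → γ} {x : α}
    (hf : ∃ K : ℝ≥0, ∃ s ∈ 𝓝 x, LipschitzOnWith K f s)
    (hg : ∃ K : ℝ≥0, ∃ s ∈ 𝓝 x, LipschitzOnWith K g s) :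
    ∃ K : ℝ≥0, ∃ s ∈ 𝓝 x, LipschitzOnWith K (fun y => (f y, g y)) s := by
  obtain ⟨K, s, hs, hfK⟩ := hf
  obtain ⟨L, t, ht, hgL⟩ := hg
  exact ⟨max K L, s ∩ t, inter_mem hs ht,
    (hfK.mono Set.inter_subset_left).prodMk (hgL.mono Set.inter_subset_right)⟩

namespace C11At

lemma of_contDiff {f : E → F} (hf : ContDiff ℝ 2 f) (x : E) : C11At f x :=
  ⟨hf.contDiffAt.of_le (by norm_num),
    (hf.contDiffAt.fderiv_right (m := 1) (by norm_num)).exists_lipschitzOnWith⟩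

lemma differentiableAt {f : E → F} {x : E} (hf : C11At f x) : DifferentiableAt ℝ f x :=
  hf.1.differentiableAt one_ne_zero

lemma eventually {f : E → F} {x : E} (hf : C11At f x) : ∀ᶠ y in 𝓝 x, C11At f y := by
  obtain ⟨hf, K, s, hs, hK⟩ := hf
  filter_upwards [hf.eventually (by simp), eventually_mem_nhds_iff.2 hs] with y hy hys
  exact ⟨hy, K, s, hys, hK⟩

lemma comp {g : F → G} {f : E → F} {x : E} (hg : C11At g (f x)) (hf : C11At f x) :
    C11At (g ∘ f) x := by
  have hfc : ContinuousAt f x := hf.1.continuousAt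
  have hderiv : ∀ᶠ y in 𝓝 x, fderiv ℝ (g ∘ f) y = (fderiv ℝ g (f y)).comp (fderiv ℝ f y) := by
    filter_upwards [hfc.eventually hg.eventually, hf.eventually] with y hgy hfy
    exact fderiv_comp y hgy.differentiableAt hfy.differentiableAt
  have hbilin : ContDiff ℝ 1 fun p : (F →L[ℝ] G) × (E →L[ℝ] F) => p.1.comp p.2 :=
    isBoundedBilinearMap_comp.contDiff
  obtain ⟨K, s, hs, hK⟩ := exists_lipschitzOnWith_comp
    (f := fun y => (fderiv ℝ g (f y), fderiv ℝ f y)) hbilin.contDiffAt.exists_lipschitzOnWith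
    (exists_lipschitzOnWith_prodMk
      (exists_lipschitzOnWith_comp hg.2 hf.1.exists_lipschitzOnWith) hf.2)
  refine ⟨hg.1.comp x hf.1, K, s ∩ _, inter_mem hs hderiv, ?_⟩
  intro y hy z hz
  rw [hy.2, hz.2]
  exact hK hy.1 hz.1

lemma isBigO_fderiv_sub {f : E → F} {x : E} (hf : C11At f x) {l : Filter ι} {a b : ι → E}
    (ha : Tendsto a l (𝓝 x)) (hb : Tendsto b l (𝓝 x)) :
    (fun t => fderiv ℝ f (a t) - fderiv ℝ f (b t)) =O[l] fun t => a t - b t := by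
  obtain ⟨K, s, hs, hK⟩ := hf.2
  refine IsBigO.of_bound K ?_
  filter_upwards [ha hs, hb hs] with t hat hbt
  simpa only [dist_eq_norm] using hK.dist_le_mul _ hat _ hbt

lemma isBigO_fderiv_line_sub {f : E → F} {x : E} (hf : C11At f x) (v : E) :
    (fun t : ℝ => fderiv ℝ f (x + t • v) - fderiv ℝ f x) =O[𝓝 0] fun t => t := by
  refine (hf.isBigO_fderiv_sub (tendsto_add_smul_nhds_zero x v) tendsto_const_nhds).trans ?_
  simpa only [add_sub_cancel_left, smul_eq_mul, mul_one] using
    (isBigO_refl (fun t : ℝ => t) (𝓝 0)).smul (isBigO_const_const v (one_ne_zero (α := ℝ)) (𝓝 0))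

lemma isLittleO_fderiv_curve_sub {f : E → F} {γ : ℝ → E} {v : E} {τ : ℝ} (hf : C11At f (γ τ))
    (hγ : HasDerivAt γ v τ) :
    (fun t => fderiv ℝ f (γ (τ + t)) - fderiv ℝ f (γ τ + t • v)) =o[𝓝 0] fun t : ℝ => t := by
  have hadd : Tendsto (τ + ·) (𝓝 0) (𝓝 τ) := (map_add_left_nhds_zero τ).le
  refine (hf.isBigO_fderiv_sub (hγ.continuousAt.tendsto.comp hadd)
    (tendsto_add_smul_nhds_zero _ v)).trans_isLittleO ?_
  simpa only [Function.comp_apply, sub_sub] using hasDerivAt_iff_isLittleO_nhds_zero.1 hγ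

lemma isBigO_secondQuotient {f : E → ℝ} {x : E} (hf : C11At f x) (h : E) :
    secondQuotient f x h =O[𝓝 0] fun _ => (1 : ℝ) := by
  have happly : (fun t : ℝ => fderiv ℝ f (x + t • h) h - fderiv ℝ f x h) =O[𝓝 0] fun t => t :=
    ((ContinuousLinearMap.apply ℝ ℝ h).isBigO_comp _ _).trans (hf.isBigO_fderiv_line_sub h)
  refine (happly.mul (isBigO_refl (fun t : ℝ => t⁻¹) _)).trans ?_
  refine IsBigO.of_bound 1 (Eventually.of_forall fun t => ?_)
  rcases eq_or_ne t 0 with rfl | ht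
  · simp
  · simp [mul_inv_cancel₀ ht]

end C11At

end C11At

section SecondQuotient

variable {E F : Type*} [NormedAddCommGroup E] [NormedSpace ℝ E] [NormedAddCommGroup F]
  [NormedSpace ℝ F]

lemma secondQuotient_smul (f : E → ℝ) (x h : E) (c t : ℝ) :
    secondQuotient f x (c • h) t = c ^ 2 * secondQuotient f x h (c * t) := by
  rcases eq_or_ne c 0 with rfl | hc
  · simp [secondQuotient]
  · simp only [secondQuotient, smul_smul, map_smul, smul_eq_mul, mul_comm t c]
    field_simp

lemma secondQuotient_neg (f : E → ℝ) (x h : E) :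
    secondQuotient f x (-h) = secondQuotient f x h ∘ Neg.neg := by
  ext t
  simpa using secondQuotient_smul f x h (-1) t

lemma lowD2m_eq_lowD2p_neg (f : E → ℝ) (x h : E) : lowD2m f x h h = lowD2p f x (-h) (-h) := by
  change liminf (secondQuotient f x h) _ = liminf (secondQuotient f x (-h)) _
  rw [secondQuotient_neg, liminf_comp]
  simp

lemma upD2m_eq_upD2p_neg (f : E → ℝ) (x h : E) : upD2m f x h h = upD2p f x (-h) (-h) := by
  change limsup (secondQuotient f x h) _ = limsup (secondQuotient f x (-h)) _
  rw [secondQuotient_neg, limsup_comp]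
  simp

lemma secondQuotient_congr {f g : E → ℝ} {x : E} (hfg : f =ᶠ[𝓝 x] g) (h : E) :
    secondQuotient f x h =ᶠ[𝓝 0] secondQuotient g x h := by
  filter_upwards [(tendsto_add_smul_nhds_zero x h).eventually (hfg.fderiv (𝕜 := ℝ))] with t ht
  rw [secondQuotient, secondQuotient, ht, hfg.fderiv_eq]

namespace C11At

variable {f : E → ℝ} {x : E} (hf : C11At f x) (h : E)
include hf

lemma isBoundedUnder_le_secondQuotient :
    IsBoundedUnder (· ≤ ·) (𝓝[>] 0) (secondQuotient f x h) :=
  (isBoundedUnder_le_abs.1 <| (isBigO_one_iff ℝ).1 <|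
    (hf.isBigO_secondQuotient h).mono nhdsWithin_le_nhds).1

lemma isBoundedUnder_ge_secondQuotient :
    IsBoundedUnder (· ≥ ·) (𝓝[>] 0) (secondQuotient f x h) :=
  (isBoundedUnder_le_abs.1 <| (isBigO_one_iff ℝ).1 <|
    (hf.isBigO_secondQuotient h).mono nhdsWithin_le_nhds).2

lemma lowD2p_le_upD2p : lowD2p f x h h ≤ upD2p f x h h :=
  liminf_le_limsup (hf.isBoundedUnder_le_secondQuotient h) (hf.isBoundedUnder_ge_secondQuotient h)

lemma le_upD2p_iff {a : ℝ} :
    a ≤ upD2p f x h h ↔ ∀ b < a, ∃ᶠ t in 𝓝[>] 0, b < secondQuotient f x h t :=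
  le_limsup_iff (hf.isBoundedUnder_ge_secondQuotient h).isCoboundedUnder_le
    (hf.isBoundedUnder_le_secondQuotient h)

lemma le_lowD2p_iff {a : ℝ} :
    a ≤ lowD2p f x h h ↔ ∀ b < a, ∀ᶠ t in 𝓝[>] 0, b < secondQuotient f x h t :=
  le_liminf_iff (hf.isBoundedUnder_le_secondQuotient h).isCoboundedUnder_ge
    (hf.isBoundedUnder_ge_secondQuotient h)

lemma lowD2p_smul {c : ℝ} (hc : 0 < c) :
    lowD2p f x (c • h) (c • h) = c ^ 2 * lowD2p f x h h := by
  have hquot : secondQuotient f x (c • h) = (c ^ 2 * ·) ∘ secondQuotient f x h ∘ (c * ·) :=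
    funext (secondQuotient_smul f x h c)
  have hmap : map (c * ·) (𝓝[>] (0 : ℝ)) = 𝓝[>] 0 := by
    conv_lhs => rw [← comap_mulLeft_nhdsGT_zero hc]
    exact map_comap_of_surjective (mul_left_surjective₀ hc.ne') _
  change liminf (secondQuotient f x (c • h)) _ = c ^ 2 * liminf (secondQuotient f x h) _
  rw [hquot, ← Function.comp_assoc, liminf_comp, hmap]
  exact (Monotone.map_liminf_of_continuousAt (monotone_mul_left_of_nonneg (sq_nonneg c)) _
    (continuous_const_mul _).continuousAt
    (hf.isBoundedUnder_le_secondQuotient h).isCoboundedUnder_ge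
    (hf.isBoundedUnder_ge_secondQuotient h)).symm

end C11At

lemma isLittleO_clm_apply {ι : Type*} {l : Filter ι} {A : ι → E →L[ℝ] F} {w : ι → E} {a b : ι → ℝ}
    (hA : A =O[l] a) (hw : w =o[l] b) : (fun t => A t (w t)) =o[l] fun t => a t * b t :=
  (isBigO_of_le l fun t => by simpa using (A t).le_opNorm (w t)).trans_isLittleO
    (hA.norm_left.mul_isLittleO hw.norm_left)

-- The increment of `(φ ∘ f)'k` exceeds the sum of the other two by
-- `(φ'(f y) - φ'(f x))(f'(y)k - v) + (φ'(f y) - φ'(f x + tv))v`, where `y = x + tk`, `v = f'(x)k`.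
lemma tendsto_secondQuotient_comp_sub {φ : F → ℝ} {f : E → F} {x : E} (hφ : C11At φ (f x))
    (hf : C11At f x) (k : E) :
    Tendsto (fun t => secondQuotient (φ ∘ f) x k t -
      (secondQuotient φ (f x) (fderiv ℝ f x k) t + secondQuotient (fderiv ℝ φ (f x) ∘ f) x k t))
      (𝓝 0) (𝓝 0) := by
  set v := fderiv ℝ f x k
  have hγ : HasDerivAt (fun t : ℝ => f (x + t • k)) v 0 :=
    hf.differentiableAt.hasFDerivAt.comp_hasDerivAt_of_eq 0 (hasDerivAt_add_smul x k 0) (by simp)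
  have hγx : Tendsto (fun t : ℝ => x + t • k) (𝓝 0) (𝓝 x) :=
    tendsto_add_smul_nhds_zero x k
  have hcurve : (fun t : ℝ => fderiv ℝ φ (f (x + t • k)) - fderiv ℝ φ (f x + t • v))
      =o[𝓝 0] fun t : ℝ => t := by
    simpa using C11At.isLittleO_fderiv_curve_sub (by simpa using hφ) hγ
  have hincr : (fun t : ℝ => fderiv ℝ φ (f (x + t • k)) - fderiv ℝ φ (f x)) =O[𝓝 0] fun t => t := by
    simpa using hcurve.isBigO.add (hφ.isBigO_fderiv_line_sub v)
  have hvel : (fun t : ℝ => fderiv ℝ f (x + t • k) k - v) =o[𝓝 0] fun _ => (1 : ℝ) := by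
    rw [isLittleO_one_iff, ← sub_self v]
    exact (((hf.1.continuousAt_fderiv one_ne_zero).clm_apply
      continuousAt_const).tendsto.comp hγx).sub_const v
  have hprod : (fun t : ℝ => (fderiv ℝ φ (f (x + t • k)) - fderiv ℝ φ (f x))
      (fderiv ℝ f (x + t • k) k - v)) =o[𝓝 0] fun t => t := by
    simpa using isLittleO_clm_apply hincr hvel
  refine (hprod.add (((ContinuousLinearMap.apply ℝ ℝ v).isBigO_comp _ _).trans_isLittleO
    hcurve)).tendsto_div_nhds_zero.congr' ?_
  filter_upwards [hγx.eventually hf.eventually,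
    (hf.1.continuousAt.tendsto.comp hγx).eventually hφ.eventually] with t hft hφt
  have hlin (y : E) (hy : C11At f y) :
      fderiv ℝ (fderiv ℝ φ (f x) ∘ f) y = (fderiv ℝ φ (f x)).comp (fderiv ℝ f y) :=
    ((fderiv ℝ φ (f x)).hasFDerivAt.comp y hy.differentiableAt.hasFDerivAt).fderiv
  simp only [secondQuotient, hlin _ hft, hlin _ hf,
    fderiv_comp (x + t • k) hφt.differentiableAt hft.differentiableAt,
    fderiv_comp _ hφ.differentiableAt hf.differentiableAt]
  simp only [ContinuousLinearMap.comp_apply, ContinuousLinearMap.apply_apply, map_sub,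
    _root_.sub_apply]
  ring

lemma limsup_eq_sub_liminf_of_tendsto_add {ι : Type*} {l : Filter ι} [l.NeBot] {u v : ι → ℝ}
    {a : ℝ} (h : Tendsto (u + v) l (𝓝 a)) (hu : IsBoundedUnder (· ≤ ·) l u)
    (hu' : IsBoundedUnder (· ≥ ·) l u) (hv : IsBoundedUnder (· ≤ ·) l v)
    (hv' : IsBoundedUnder (· ≥ ·) l v) : limsup v l = a - liminf u l := by
  have hle : limsup v l + liminf u l ≤ limsup (v + u) l :=
    le_limsup_add hv hv'.isCoboundedUnder_le hu hu'
  have hge : liminf (v + u) l ≤ limsup v l + liminf u l :=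
    liminf_add_le hv' hv hu' hu.isCoboundedUnder_ge
  rw [add_comm v, h.limsup_eq] at hle
  rw [add_comm v, h.liminf_eq] at hge
  linarith

end SecondQuotient

section LevelSet

variable {E : Type*} [NormedAddCommGroup E] [NormedSpace ℝ E] {φ : E → ℝ} {p v e : E} {u : ℝ → ℝ}

/-- Over a neighbourhood of `0`, the `C¹` graph `t ↦ p + t • v + u t • e` stays in the level set of
`φ` through `p` and is tangent to `v` at `p`. -/
structure IsLevelGraph (φ : E → ℝ) (p v e : E) (u : ℝ → ℝ) : Prop where
  apply_zero : u 0 = 0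
  deriv_zero : deriv u 0 = 0
  contDiffAt : ContDiffAt ℝ 1 u 0
  eventually_eq : ∀ᶠ t in 𝓝 (0 : ℝ), φ (p + t • v + u t • e) = φ p

lemma exists_isLevelGraph (hφ : ContDiffAt ℝ 1 φ p) (hv : fderiv ℝ φ p v = 0)
    (he : fderiv ℝ φ p e ≠ 0) : ∃ u, IsLevelGraph φ p v e u := by
  let A : ℝ × ℝ →L[ℝ] E :=
    (ContinuousLinearMap.fst ℝ ℝ ℝ).smulRight v + (ContinuousLinearMap.snd ℝ ℝ ℝ).smulRight e
  let H : ℝ × ℝ → ℝ := fun z => φ (p + A z)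
  have hA : HasFDerivAt (fun z => p + A z) A (0, 0) := A.hasFDerivAt.const_add p
  have hpA : p + A (0, 0) = p := by simp [A]
  have hH : ContDiffAt ℝ 1 H (0, 0) :=
    ContDiffAt.comp (0, 0) (by rwa [hpA]) (by fun_prop)
  have hHd : HasFDerivAt H ((fderiv ℝ φ p).comp A) (0, 0) :=
    HasFDerivAt.comp (0, 0) (by simpa only [hpA] using
      (hφ.differentiableAt one_ne_zero).hasFDerivAt) hA
  have hinv : (fderiv ℝ H (0, 0) ∘L .inr ℝ ℝ ℝ).IsInvertible := by
    refine ⟨ContinuousLinearEquiv.unitsEquivAut ℝ (Units.mk0 _ he), ?_⟩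
    ext
    simp [hHd.fderiv, A]
  set u := hH.implicitFunction one_ne_zero hinv
  have hu0 : u 0 = 0 := hH.implicitFunction_apply_self one_ne_zero hinv
  have hu : ContDiffAt ℝ 1 u 0 := hH.contDiffAt_implicitFunction one_ne_zero hinv
  have hlevel : ∀ᶠ t in 𝓝 (0 : ℝ), H (t, u t) = φ p := by
    filter_upwards [hH.eventually_apply_implicitFunction one_ne_zero hinv] with t ht
    rw [ht, show H (0, 0) = φ p from congrArg φ hpA]
  refine ⟨u, hu0, ?_, hu, hlevel.mono fun t ht => by simpa [H, A, add_assoc] using ht⟩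
  have hgraph : HasDerivAt (fun t => (t, u t)) ((1 : ℝ), deriv u 0) 0 :=
    (hasDerivAt_id 0).prodMk (hu.differentiableAt one_ne_zero).hasDerivAt
  have hcomp : HasDerivAt (fun t => H (t, u t)) ((fderiv ℝ φ p).comp A (1, deriv u 0)) 0 :=
    hHd.comp_hasDerivAt_of_eq 0 hgraph (by rw [hu0])
  have hzero := hcomp.unique ((hasDerivAt_const 0 (φ p)).congr_of_eventuallyEq hlevel)
  simpa [A, hv, he] using hzero

lemma exists_pos_apply {N : E →L[ℝ] ℝ} (hN : N ≠ 0) : ∃ e, 0 < N e := by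
  obtain ⟨e, he⟩ := DFunLike.ne_iff.1 hN
  rcases lt_or_gt_of_ne he with hneg | hpos
  · exact ⟨-e, by simpa using hneg⟩
  · exact ⟨e, by simpa using hpos⟩

lemma eventually_fderiv_apply_pos (hφ : ContDiffAt ℝ 1 φ p) (he : 0 < fderiv ℝ φ p e) :
    ∀ᶠ q in 𝓝 p, 0 < fderiv ℝ φ q e :=
  ((hφ.continuousAt_fderiv one_ne_zero).clm_apply continuousAt_const).eventually
    (lt_mem_nhds he)

namespace IsLevelGraph

lemma eventually_hasDerivAt (hu : IsLevelGraph φ p v e u) : ∀ᶠ s in 𝓝 (0 : ℝ),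
    HasDerivAt (fun t => p + t • v + u t • e) (v + deriv u s • e) s := by
  filter_upwards [hu.contDiffAt.eventually (by simp)] with s hs
  simpa using (((hasDerivAt_id s).smul_const v).const_add p).fun_add
    ((hs.differentiableAt one_ne_zero).hasDerivAt.smul_const e)

lemma tendsto_curve (hu : IsLevelGraph φ p v e u) :
    Tendsto (fun t => p + t • v + u t • e) (𝓝 0) (𝓝 p) := by
  simpa [hu.apply_zero] using hu.eventually_hasDerivAt.self_of_nhds.continuousAt.tendsto

end IsLevelGraph

lemma fderiv_apply_eq_zero_of_level_curve {β : ℝ → E} {β' : E} {τ c : ℝ}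
    (hφ : DifferentiableAt ℝ φ (β τ)) (hβ : HasDerivAt β β' τ) (hc : ∀ᶠ s in 𝓝 τ, φ (β s) = c) :
    fderiv ℝ φ (β τ) β' = 0 :=
  (hφ.hasFDerivAt.comp_hasDerivAt τ hβ).unique ((hasDerivAt_const τ c).congr_of_eventuallyEq hc)

-- Since `φ'(β s)(v + w s • e) = 0`, the sum equals
-- `-(φ'(β(τ+t)) - φ'(β τ + tν))ν / t` with `ν = v + w τ • e`.
lemma tendsto_slope_mul_add_secondQuotient {β : ℝ → E} {w : ℝ → ℝ} {τ c : ℝ}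
    (hφ : C11At φ (β τ)) (hβ : ∀ᶠ s in 𝓝 τ, HasDerivAt β (v + w s • e) s)
    (hc : ∀ᶠ s in 𝓝 τ, φ (β s) = c) :
    Tendsto (fun t => slope w τ (τ + t) * fderiv ℝ φ (β (τ + t)) e +
      secondQuotient φ (β τ) (v + w τ • e) t) (𝓝 0) (𝓝 0) := by
  set ν := v + w τ • e
  have hadd : Tendsto (τ + ·) (𝓝 0) (𝓝 τ) := (map_add_left_nhds_zero τ).le
  have htangent : ∀ᶠ s in 𝓝 τ, fderiv ℝ φ (β s) (v + w s • e) = 0 := by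
    filter_upwards [hβ, hc.eventually_nhds,
      hβ.self_of_nhds.continuousAt.eventually hφ.eventually] with s hβs hcs hφs
    exact fderiv_apply_eq_zero_of_level_curve hφs.differentiableAt hβs hcs
  have hnum := (((ContinuousLinearMap.apply ℝ ℝ ν).isBigO_comp _ _).trans_isLittleO
    (hφ.isLittleO_fderiv_curve_sub hβ.self_of_nhds)).tendsto_div_nhds_zero.neg
  rw [neg_zero] at hnum
  refine hnum.congr' ?_
  filter_upwards [hadd.eventually htangent] with t ht
  have hν : fderiv ℝ φ (β (τ + t)) ν = -((w (τ + t) - w τ) * fderiv ℝ φ (β (τ + t)) e) := by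
    simp only [ν, map_add, map_smul, smul_eq_mul] at ht ⊢
    linear_combination ht
  simp only [ContinuousLinearMap.apply_apply, _root_.sub_apply, hν, secondQuotient,
    htangent.self_of_nhds, slope_def_field, add_sub_cancel_left, ν]
  ring

end LevelSet

section Forward

variable {E : Type*} [NormedAddCommGroup E] [NormedSpace ℝ E] {φ : E → ℝ} {S V : Set E}
  {p q v : E}

lemma fderiv_sub_nonpos_of_isMaxOn (hS : Convex ℝ S) (hp : p ∈ S) (hq : q ∈ S)
    (hmax : IsMaxOn φ S p) (hφ : DifferentiableAt ℝ φ p) : fderiv ℝ φ p (q - p) ≤ 0 :=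
  hmax.localize.hasFDerivWithinAt_nonpos hφ.hasFDerivAt.hasFDerivWithinAt
    (sub_mem_posTangentConeAt_of_segment_subset (hS.segment_subset hp hq))

-- Supporting hyperplanes at `p` and at the curve point over `t` give `t * u' t ≤ u t ≤ 0`.
lemma IsLevelGraph.eventually_deriv_nonpos {e : E} {u : ℝ → ℝ} (hu : IsLevelGraph φ p v e u)
    (hV : IsOpen V) (hp : p ∈ V) (hS : Convex ℝ {q ∈ V | φ q ≤ φ p}) (hφ : C11At φ p)
    (hv : fderiv ℝ φ p v = 0) (he : 0 < fderiv ℝ φ p e) :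
    ∀ᶠ t in 𝓝[>] (0 : ℝ), deriv u t ≤ 0 := by
  filter_upwards [hu.eventually_hasDerivAt.filter_mono nhdsWithin_le_nhds,
    hu.eventually_eq.eventually_nhds.filter_mono nhdsWithin_le_nhds,
    (hu.tendsto_curve.eventually (hφ.eventually.and ((eventually_fderiv_apply_pos hφ.1 he).and
      (hV.mem_nhds hp)))).filter_mono nhdsWithin_le_nhds, self_mem_nhdsWithin]
    with t hder hlevel ⟨hφq, hqe, hqV⟩ ht
  set q := p + t • v + u t • e with hq
  have hφqp : φ q = φ p := hlevel.self_of_nhds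
  have hmax (a : E) (ha : φ a = φ p) : IsMaxOn φ {q ∈ V | φ q ≤ φ p} a :=
    fun b hb => hb.2.trans ha.ge
  have hsupp_p := fderiv_sub_nonpos_of_isMaxOn hS ⟨hp, le_rfl⟩ ⟨hqV, hφqp.le⟩ (hmax p rfl)
    hφ.differentiableAt
  have hsupp_q := fderiv_sub_nonpos_of_isMaxOn hS ⟨hqV, hφqp.le⟩ ⟨hp, le_rfl⟩ (hmax q hφqp)
    hφq.differentiableAt
  have htangent : fderiv ℝ φ q (v + deriv u t • e) = 0 :=
    fderiv_apply_eq_zero_of_level_curve hφq.differentiableAt hder hlevel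
  have hut : u t * fderiv ℝ φ p e ≤ 0 := by
    simpa [hq, add_assoc, hv] using hsupp_p
  have hpq : p - q = -(t • v + u t • e) := by rw [hq]; abel
  simp only [hpq, map_neg, map_add, map_smul, smul_eq_mul] at hsupp_q htangent
  have hut' : u t ≤ 0 := nonpos_of_mul_nonpos_left hut he
  have htu : t * deriv u t ≤ u t :=
    le_of_mul_le_mul_right (by linear_combination hsupp_q + t * htangent) hqe
  exact nonpos_of_mul_nonpos_right (htu.trans hut') ht

theorem lowD2p_nonneg_of_convex_sublevel (hV : IsOpen V) (hp : p ∈ V)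
    (hS : Convex ℝ {q ∈ V | φ q ≤ φ p}) (hφ : C11At φ p) (hN : fderiv ℝ φ p ≠ 0)
    (hv : fderiv ℝ φ p v = 0) : 0 ≤ lowD2p φ p v v := by
  obtain ⟨e, he⟩ : ∃ e, 0 < fderiv ℝ φ p e := exists_pos_apply hN
  obtain ⟨u, hu⟩ := exists_isLevelGraph hφ.1 hv he.ne'
  have hkey := tendsto_slope_mul_add_secondQuotient (w := deriv u)
    (by simpa [hu.apply_zero] using hφ) hu.eventually_hasDerivAt hu.eventually_eq
  simp only [zero_add, hu.deriv_zero, hu.apply_zero, zero_smul, add_zero] at hkey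
  refine (hφ.le_lowD2p_iff v).2 fun b hb => ?_
  filter_upwards [hu.eventually_deriv_nonpos hV hp hS hφ hv he,
    (hkey.eventually (lt_mem_nhds hb)).filter_mono nhdsWithin_le_nhds,
    (hu.tendsto_curve.eventually (eventually_fderiv_apply_pos hφ.1 he)).filter_mono
      nhdsWithin_le_nhds,
    self_mem_nhdsWithin] with t hderiv hsum hqe ht
  have hslope : slope (deriv u) 0 t ≤ 0 := by
    rw [slope_def_field, hu.deriv_zero, sub_zero, sub_zero]
    exact div_nonpos_of_nonpos_of_nonneg hderiv (le_of_lt ht)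
  linarith [mul_nonpos_of_nonpos_of_nonneg hslope hqe.le]

end Forward

section Backward

lemma eventually_le_of_liminf_slope_deriv_le_zero {u : ℝ → ℝ} {a : ℝ} (hu : ContDiffAt ℝ 1 u a)
    (ha : deriv u a ≤ 0)
    (hslope : ∀ᶠ τ in 𝓝 a, ∀ ρ > 0, ∃ᶠ t in 𝓝[>] τ, slope (deriv u) τ t < ρ) :
    ∀ᶠ t in 𝓝[>] a, u t ≤ u a := by
  obtain ⟨b, hab, hb⟩ := mem_nhdsGE_iff_exists_Icc_subset.1
    (((hu.eventually (by simp)).and hslope).filter_mono (nhdsWithin_le_nhds (s := Set.Ici a)))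
  have hdiff (t : ℝ) (ht : t ∈ Set.Icc a b) : DifferentiableAt ℝ u t :=
    (hb ht).1.differentiableAt one_ne_zero
  have hderiv_cont : ContinuousOn (deriv u) (Set.Icc a b) := fun t ht =>
    (((hb ht).1.continuousAt_fderiv one_ne_zero).clm_apply
      continuousAt_const).continuousWithinAt
  have hderiv_nonpos : ∀ ⦃t⦄, t ∈ Set.Icc a b → deriv u t ≤ 0 :=
    image_le_of_liminf_slope_right_le_deriv_boundary hderiv_cont ha continuousOn_const
      (fun t _ => hasDerivWithinAt_const t _ 0) fun t ht => (hb ⟨ht.1, ht.2.le⟩).2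
  have hanti : AntitoneOn u (Set.Icc a b) :=
    antitoneOn_of_deriv_nonpos (convex_Icc a b)
      (fun t ht => (hdiff t ht).continuousAt.continuousWithinAt)
      (fun t ht => (hdiff t (interior_subset ht)).differentiableWithinAt)
      fun t ht => hderiv_nonpos (interior_subset ht)
  filter_upwards [Ioc_mem_nhdsGT hab] with t ht
  exact hanti ⟨le_rfl, hab.le⟩ ⟨ht.1.le, ht.2⟩ ht.1.le

variable {E : Type*} [NormedAddCommGroup E] [NormedSpace ℝ E] {φ : E → ℝ} {p v e : E}

lemma eventually_add_smul_le_of_nonpos (hφ : ContDiffAt ℝ 1 φ p) (he : 0 < fderiv ℝ φ p e) :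
    ∀ᶠ z : E × ℝ in 𝓝 (p, 0), z.2 ≤ 0 → φ (z.1 + z.2 • e) ≤ φ z.1 := by
  have hstrict : HasStrictFDerivAt φ (fderiv ℝ φ p) p := hφ.hasStrictFDerivAt one_ne_zero
  have hpair : Tendsto (fun z : E × ℝ => (z.1 + z.2 • e, z.1)) (𝓝 (p, 0)) (𝓝 (p, p)) :=
    Continuous.tendsto' (by fun_prop) _ _ (by simp)
  have hlittle : (fun z : E × ℝ => φ (z.1 + z.2 • e) - φ z.1 - z.2 * fderiv ℝ φ p e)
      =o[𝓝 (p, 0)] fun z => z.2 := by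
    have h := (hstrict.isLittleO.comp_tendsto hpair).trans_isBigO
      (IsBigO.of_bound ‖e‖ (Eventually.of_forall fun z : E × ℝ => by
        simp [norm_smul, mul_comm]) : _ =O[𝓝 (p, 0)] fun z : E × ℝ => z.2)
    simpa [Function.comp_def] using h
  filter_upwards [hlittle.bound he] with z hz hz_nonpos
  have := (abs_le.1 hz).2
  rw [Real.norm_of_nonpos hz_nonpos] at this
  linarith

lemma IsLevelGraph.eventually_frequently_slope_lt {u : ℝ → ℝ} (hu : IsLevelGraph φ p v e u)
    (hφ : C11At φ p) (he : 0 < fderiv ℝ φ p e)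
    (hD : ∀ᶠ q in 𝓝 p, φ q = φ p → ∀ v, fderiv ℝ φ q v = 0 → 0 ≤ upD2p φ q v v) :
    ∀ᶠ τ in 𝓝 0, ∀ ρ > 0, ∃ᶠ t in 𝓝[>] τ, slope (deriv u) τ t < ρ := by
  filter_upwards [hu.eventually_hasDerivAt.eventually_nhds, hu.eventually_eq.eventually_nhds,
    hu.tendsto_curve.eventually (hD.and (hφ.eventually.and (eventually_fderiv_apply_pos hφ.1 he)))]
    with τ hβ hlevel ⟨hDτ, hφτ, hm⟩ ρ hρ
  set β : ℝ → E := fun t => p + t • v + u t • e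
  set m := fderiv ℝ φ (β τ) e
  have htangent : fderiv ℝ φ (β τ) (v + deriv u τ • e) = 0 :=
    fderiv_apply_eq_zero_of_level_curve hφτ.differentiableAt hβ.self_of_nhds hlevel
  have hfreq : ∃ᶠ t in 𝓝[>] 0, -(ρ * m / 4) < secondQuotient φ (β τ) (v + deriv u τ • e) t :=
    (hφτ.le_upD2p_iff _).1 (hDτ hlevel.self_of_nhds _ htangent) _ (neg_lt_zero.2 (by positivity))
  have hsum := (tendsto_slope_mul_add_secondQuotient hφτ hβ hlevel).eventually
    (gt_mem_nhds (show 0 < ρ * m / 4 by positivity))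
  have hadd : Tendsto (τ + ·) (𝓝 0) (𝓝 τ) := (map_add_left_nhds_zero τ).le
  have hpos := (hβ.self_of_nhds.continuousAt.tendsto.comp hadd).eventually
    (((hφτ.1.continuousAt_fderiv one_ne_zero).clm_apply continuousAt_const).eventually
      (lt_mem_nhds (half_lt_self hm)))
  have hshift : Tendsto (τ + ·) (𝓝[>] 0) (𝓝[>] τ) := by
    simp [Tendsto, map_add_left_nhdsGT]
  refine hshift.frequently (hfreq.mp ?_)
  filter_upwards [hsum.filter_mono nhdsWithin_le_nhds, hpos.filter_mono nhdsWithin_le_nhds]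
    with t hsum hpos hquot
  by_contra! hge
  have hprod : ρ * (m / 2) ≤ slope (deriv u) τ (τ + t) * fderiv ℝ φ (β (τ + t)) e :=
    mul_le_mul hge hpos.le (by positivity) (hρ.le.trans hge)
  linarith

theorem eventually_le_add_smul_of_upD2p_nonneg (hφ : C11At φ p) (hN : fderiv ℝ φ p ≠ 0)
    (hD : ∀ᶠ q in 𝓝 p, φ q = φ p → ∀ v, fderiv ℝ φ q v = 0 → 0 ≤ upD2p φ q v v)
    (hv : fderiv ℝ φ p v = 0) : ∀ᶠ t : ℝ in 𝓝[>] 0, φ p ≤ φ (p + t • v) := by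
  obtain ⟨e, he⟩ := exists_pos_apply hN
  obtain ⟨u, hu⟩ := exists_isLevelGraph hφ.1 hv he.ne'
  have hu_nonpos : ∀ᶠ t in 𝓝[>] 0, u t ≤ u 0 :=
    eventually_le_of_liminf_slope_deriv_le_zero hu.contDiffAt hu.deriv_zero.le
      (hu.eventually_frequently_slope_lt hφ he hD)
  have hpair : Tendsto (fun t => (p + t • v, u t)) (𝓝 0) (𝓝 (p, 0)) :=
    (tendsto_add_smul_nhds_zero p v).prodMk_nhds
      (by simpa only [hu.apply_zero] using hu.contDiffAt.continuousAt.tendsto)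
  filter_upwards [hu_nonpos, hu.eventually_eq.filter_mono nhdsWithin_le_nhds,
    (hpair.eventually (eventually_add_smul_le_of_nonpos hφ.1 he)).filter_mono nhdsWithin_le_nhds]
    with t hut hlevel hmono
  exact hlevel.ge.trans (hmono (hut.trans_eq hu.apply_zero))

end Backward

section Convexity

lemma isOpen_setOf_segment_subset {E : Type*} [AddCommGroup E] [Module ℝ E] [TopologicalSpace E]
    [IsTopologicalAddGroup E] [ContinuousSMul ℝ E] {O : Set E} (hO : IsOpen O) (a : E) :
    IsOpen {b | segment ℝ a b ⊆ O} := by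
  simp only [segment_eq_image', Set.image_subset_iff]
  refine isOpen_iff_eventually.2 fun b hb =>
    isCompact_Icc.eventually_forall_of_forall_eventually fun t ht => ?_
  have hcont : Continuous fun z : E × ℝ => a + z.2 • (z.1 - a) := by fun_prop
  exact hcont.continuousAt.eventually (hO.mem_nhds (hb ht))

lemma convex_of_isPreconnected_of_segment_subset {E : Type*} [AddCommGroup E] [Module ℝ E]
    [TopologicalSpace E] [IsTopologicalAddGroup E] [ContinuousSMul ℝ E] {O : Set E}
    (hO : IsOpen O) (hpre : IsPreconnected O)
    (hseg : ∀ a ∈ O, ∀ b ∈ O, segment ℝ a b ⊆ closure O → segment ℝ a b ⊆ O) :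
    Convex ℝ O := by
  rw [convex_iff_segment_subset]
  intro a ha b hb
  suffices hsub : O ⊆ {b | segment ℝ a b ⊆ O} from hsub hb
  refine hpre.subset_of_closure_inter_subset (isOpen_setOf_segment_subset hO a)
    ⟨a, ha, by simpa using ha⟩ fun y hy => hseg a ha y hy.2 ?_
  simp only [segment_eq_image', Set.image_subset_iff] at hy ⊢
  intro t ht
  have hcont : Continuous fun z : E => a + t • (z - a) := by fun_prop
  exact map_mem_closure (f := fun z : E => a + t • (z - a)) hcont hy.1 fun z hz => hz ht

variable {E : Type*} [NormedAddCommGroup E] [NormedSpace ℝ E] {φ : E → ℝ} {V : Set E} {c : ℝ}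

lemma eventually_eq_right_of_touching {p v : E} (hφ : ∀ᶠ q in 𝓝 p, C11At φ q)
    (hle : ∀ᶠ t : ℝ in 𝓝 0, φ (p + t • v) ≤ φ p) (hN : fderiv ℝ φ p ≠ 0)
    (hD : ∀ᶠ q in 𝓝 p, φ q = φ p → ∀ v, fderiv ℝ φ q v = 0 → 0 ≤ upD2p φ q v v) :
    ∀ᶠ t : ℝ in 𝓝[>] 0, φ (p + t • v) = φ p := by
  have hder : HasDerivAt (fun t : ℝ => φ (p + t • v)) (fderiv ℝ φ p v) 0 :=
    hφ.self_of_nhds.differentiableAt.hasFDerivAt.comp_hasDerivAt_of_eq 0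
      (hasDerivAt_add_smul p v 0) (by simp)
  have hmax : IsLocalMax (fun t : ℝ => φ (p + t • v)) 0 := by
    simpa [IsLocalMax, IsMaxFilter] using hle
  filter_upwards [hle.filter_mono nhdsWithin_le_nhds, eventually_le_add_smul_of_upD2p_nonneg
    hφ.self_of_nhds hN hD (hmax.hasDerivAt_eq_zero hder)] with t hle hge
  exact le_antisymm hle hge

lemma lt_of_eventually_eq_right {g : ℝ → ℝ} {a b : ℝ} (hg : ContinuousOn g (Set.Icc a b))
    (hle : ∀ t ∈ Set.Icc a b, g t ≤ c) (ha : g a ≠ c) (hb : g b ≠ c)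
    (hright : ∀ τ ∈ Set.Ioo a b, g τ = c → ∀ᶠ t in 𝓝[>] τ, g t = c) :
    ∀ t ∈ Set.Icc a b, g t < c := by
  intro t₀ ht₀
  refine (hle t₀ ht₀).lt_of_ne fun htouch => hb ?_
  suffices hsubset : Set.Icc t₀ b ⊆ {t | g t = c} from hsubset (Set.right_mem_Icc.2 ht₀.2)
  refine IsClosed.Icc_subset_of_forall_mem_nhdsWithin ?_ htouch ?_
  · rw [Set.inter_comm]
    exact (hg.mono (Set.Icc_subset_Icc_left ht₀.1)).preimage_isClosed_of_isClosed isClosed_Icc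
      isClosed_singleton
  · rintro τ ⟨hτ, hτ_mem⟩
    refine hright τ ⟨(ht₀.1.trans hτ_mem.1).lt_of_ne ?_, hτ_mem.2⟩ hτ
    rintro rfl
    exact ha hτ

lemma segment_subset_lt_of_segment_subset_le (hV : IsOpen V) (hφ : ∀ p ∈ V, C11At φ p)
    (hN : ∀ p ∈ V, φ p = c → fderiv ℝ φ p ≠ 0)
    (hD : ∀ p ∈ V, φ p = c → ∀ v, fderiv ℝ φ p v = 0 → 0 ≤ upD2p φ p v v) {a b : E}
    (ha : φ a < c) (hb : φ b < c) (hab : segment ℝ a b ⊆ {q ∈ V | φ q ≤ c}) :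
    segment ℝ a b ⊆ {q ∈ V | φ q < c} := by
  rw [segment_eq_image', Set.image_subset_iff] at hab ⊢
  set γ : ℝ → E := fun t => a + t • (b - a) with hγ
  have hγc : Continuous γ := by fun_prop
  have hcont : ContinuousOn (φ ∘ γ) (Set.Icc 0 1) := fun t ht =>
    ((hφ _ (hab ht).1).1.continuousAt.comp hγc.continuousAt).continuousWithinAt
  refine fun t ht => ⟨(hab ht).1, lt_of_eventually_eq_right hcont (fun s hs => (hab hs).2)
    (by simp [hγ, ha.ne]) (by simp [hγ, hb.ne]) (fun τ hτ_mem hτ => ?_) t ht⟩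
  have hτV : γ τ ∈ V := (hab ⟨hτ_mem.1.le, hτ_mem.2.le⟩).1
  have hshift (s : ℝ) : γ τ + s • (b - a) = γ (τ + s) := by simp only [hγ]; module
  have hadd : Tendsto (τ + ·) (𝓝 0) (𝓝 τ) := (map_add_left_nhds_zero τ).le
  have hmax : ∀ᶠ s : ℝ in 𝓝 0, φ (γ τ + s • (b - a)) ≤ φ (γ τ) := by
    filter_upwards [hadd.eventually (Icc_mem_nhds hτ_mem.1 hτ_mem.2)] with s hs
    rw [hshift]
    exact (hab hs).2.trans_eq hτ.symm
  have hmap : map (τ + ·) (𝓝[>] 0) = 𝓝[>] τ := by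
    simp [map_add_left_nhdsGT]
  rw [← hmap, eventually_map]
  filter_upwards [eventually_eq_right_of_touching ((hV.eventually_mem hτV).mono hφ) hmax
    (hN _ hτV hτ) ((hV.eventually_mem hτV).mono fun q hq hqc => hD q hq (hqc.trans hτ))] with s hs
  rw [Function.comp_apply, ← hshift]
  exact hs.trans hτ

lemma closure_sublevel_eq (hV : IsOpen V)
    (hN : ∀ p ∈ V, φ p = c → fderiv ℝ φ p ≠ 0) (hclosed : IsClosed {q ∈ V | φ q ≤ c}) :
    closure {q ∈ V | φ q < c} = {q ∈ V | φ q ≤ c} := by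
  refine Set.Subset.antisymm (closure_minimal (fun q hq => ⟨hq.1, hq.2.le⟩) hclosed) ?_
  rintro p ⟨hpV, hp⟩
  rcases hp.lt_or_eq with hlt | heq
  · exact subset_closure ⟨hpV, hlt⟩
  by_contra hmem
  have hmin : IsLocalMin φ p := by
    filter_upwards [hV.mem_nhds hpV, isClosed_closure.isOpen_compl.mem_nhds hmem] with q hqV hq
    rw [heq]
    exact not_lt.1 fun hlt => hq (subset_closure ⟨hqV, hlt⟩)
  exact hN p hpV heq hmin.fderiv_eq_zero

theorem convex_sublevel_of_upD2p_nonneg (hV : IsOpen V) (hφ : ∀ p ∈ V, C11At φ p)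
    (hclosed : IsClosed {q ∈ V | φ q ≤ c}) (hpre : IsPreconnected {q ∈ V | φ q < c})
    (hN : ∀ p ∈ V, φ p = c → fderiv ℝ φ p ≠ 0)
    (hD : ∀ p ∈ V, φ p = c → ∀ v, fderiv ℝ φ p v = 0 → 0 ≤ upD2p φ p v v) :
    Convex ℝ {q ∈ V | φ q ≤ c} := by
  have hopen : IsOpen {q ∈ V | φ q < c} :=
    ContinuousOn.isOpen_inter_preimage
      (fun p hp => (hφ p hp).1.continuousAt.continuousWithinAt) hV isOpen_Iio
  have hclosure := closure_sublevel_eq hV hN hclosed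
  rw [← hclosure]
  refine (convex_of_isPreconnected_of_segment_subset hopen hpre fun a ha b hb hab => ?_).closure
  exact segment_subset_lt_of_segment_subset_le hV hφ hN hD ha.2 hb.2 (hclosure ▸ hab)

end Convexity

section Diffeomorphism

section ChainRule

variable {E F : Type*} [NormedAddCommGroup E] [NormedSpace ℝ E] [NormedAddCommGroup F]
  [NormedSpace ℝ F] {G : Type*} [NormedAddCommGroup G] [NormedSpace ℝ G] {φ : F → ℝ} {f : E → F}
  {x k : E} {a : ℝ}

lemma tendsto_secondQuotient_add_of_comp (hφ : C11At φ (f x)) (hf : C11At f x)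
    (h : Tendsto (secondQuotient (φ ∘ f) x k) (𝓝[>] 0) (𝓝 a)) :
    Tendsto (secondQuotient φ (f x) (fderiv ℝ f x k) + secondQuotient (fderiv ℝ φ (f x) ∘ f) x k)
      (𝓝[>] 0) (𝓝 a) := by
  simpa [Pi.add_def] using
    h.sub ((tendsto_secondQuotient_comp_sub hφ hf k).mono_left nhdsWithin_le_nhds)

lemma C11At.clm_comp (hf : C11At f x) (L : F →L[ℝ] G) : C11At (L ∘ f) x :=
  (C11At.of_contDiff L.contDiff (f x)).comp hf

lemma upD2p_fderiv_comp (hφ : C11At φ (f x)) (hf : C11At f x)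
    (h : Tendsto (secondQuotient (φ ∘ f) x k) (𝓝[>] 0) (𝓝 a)) :
    upD2p (fderiv ℝ φ (f x) ∘ f) x k k
      = a - lowD2p φ (f x) (fderiv ℝ f x k) (fderiv ℝ f x k) := by
  have hg : C11At (fderiv ℝ φ (f x) ∘ f) x := hf.clm_comp (fderiv ℝ φ (f x))
  exact limsup_eq_sub_liminf_of_tendsto_add (tendsto_secondQuotient_add_of_comp hφ hf h)
    (hφ.isBoundedUnder_le_secondQuotient _) (hφ.isBoundedUnder_ge_secondQuotient _)
    (hg.isBoundedUnder_le_secondQuotient _) (hg.isBoundedUnder_ge_secondQuotient _)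

lemma lowD2p_fderiv_comp (hφ : C11At φ (f x)) (hf : C11At f x)
    (h : Tendsto (secondQuotient (φ ∘ f) x k) (𝓝[>] 0) (𝓝 a)) :
    lowD2p (fderiv ℝ φ (f x) ∘ f) x k k
      = a - upD2p φ (f x) (fderiv ℝ f x k) (fderiv ℝ f x k) := by
  have hg : C11At (fderiv ℝ φ (f x) ∘ f) x := hf.clm_comp (fderiv ℝ φ (f x))
  have hsum := tendsto_secondQuotient_add_of_comp hφ hf h
  rw [add_comm] at hsum
  rw [eq_sub_iff_add_eq', ← eq_sub_iff_add_eq]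
  exact limsup_eq_sub_liminf_of_tendsto_add hsum
    (hg.isBoundedUnder_le_secondQuotient _) (hg.isBoundedUnder_ge_secondQuotient _)
    (hφ.isBoundedUnder_le_secondQuotient _) (hφ.isBoundedUnder_ge_secondQuotient _)

end ChainRule

section HalfSqDist

variable {X : Type*} [NormedAddCommGroup X]

/-- Half the squared distance to `x₀`, whose sublevel sets are the balls centred at `x₀`. The
factor `1/2` normalizes its second derivative in the direction `h` to `‖h‖²`. -/
noncomputable def halfSqDist (x₀ x : X) : ℝ :=
  ‖x - x₀‖ ^ 2 / 2

lemma halfSqDist_lt_iff {x₀ x : X} {r : ℝ} (hr : 0 ≤ r) :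
    halfSqDist x₀ x < r ^ 2 / 2 ↔ x ∈ ball x₀ r := by
  rw [halfSqDist, div_lt_div_iff_of_pos_right two_pos, sq_lt_sq₀ (norm_nonneg _) hr,
    mem_ball_iff_norm]

lemma halfSqDist_le_iff {x₀ x : X} {r : ℝ} (hr : 0 ≤ r) :
    halfSqDist x₀ x ≤ r ^ 2 / 2 ↔ x ∈ closedBall x₀ r := by
  rw [halfSqDist, div_le_div_iff_of_pos_right two_pos, sq_le_sq₀ (norm_nonneg _) hr,
    mem_closedBall_iff_norm]

lemma halfSqDist_eq_iff {x₀ x : X} {r : ℝ} (hr : 0 ≤ r) :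
    halfSqDist x₀ x = r ^ 2 / 2 ↔ x ∈ sphere x₀ r := by
  rw [halfSqDist, div_left_inj' two_ne_zero, sq_eq_sq₀ (norm_nonneg _) hr, mem_sphere_iff_norm]

variable [InnerProductSpace ℝ X]

lemma contDiff_halfSqDist (x₀ : X) : ContDiff ℝ 2 (halfSqDist x₀) :=
  ((contDiff_id.sub contDiff_const).norm_sq ℝ).div_const 2

lemma fderiv_halfSqDist_apply (x₀ x h : X) : fderiv ℝ (halfSqDist x₀) x h = ⟪x - x₀, h⟫ := by
  have hsq : HasFDerivAt (fun y => ‖y - x₀‖ ^ 2) (2 • innerSL ℝ (x - x₀)) x :=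
    ((hasFDerivAt_id x).sub_const x₀).norm_sq
  have hhalf : HasFDerivAt (halfSqDist x₀) ((2 : ℝ)⁻¹ • (2 • innerSL ℝ (x - x₀))) x :=
    (hsq.const_mul (2 : ℝ)⁻¹).congr_of_eventuallyEq (.of_forall fun y => div_eq_inv_mul _ _)
  rw [hhalf.fderiv]
  simp [inner_sub_left]

lemma secondQuotient_halfSqDist (x₀ x h : X) {t : ℝ} (ht : t ≠ 0) :
    secondQuotient (halfSqDist x₀) x h t = ‖h‖ ^ 2 := by
  simp only [secondQuotient, fderiv_halfSqDist_apply]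
  rw [← inner_sub_left, sub_sub_sub_cancel_right, add_sub_cancel_left, real_inner_smul_left,
    real_inner_self_eq_norm_sq, mul_div_cancel_left₀ _ ht]

end HalfSqDist

namespace IsC11DiffeoOn

variable {X Y : Type*} [NormedAddCommGroup X] [NormedSpace ℝ X] [NormedAddCommGroup Y]
  [NormedSpace ℝ Y] {F : X → Y} {G : Y → X} {U : Set X} {V : Set Y} (hF : IsC11DiffeoOn F G U V)
include hF

lemma mapsTo : Set.MapsTo F U V := hF.1

lemma symm : IsC11DiffeoOn G F V U :=
  let ⟨hFU, hGV, hGF, hFG, hFsmooth, hFlip, hGsmooth, hGlip⟩ := hF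
  ⟨hGV, hFU, hFG, hGF, hGsmooth, hGlip, hFsmooth, hFlip⟩

lemma left_inv {x : X} (hx : x ∈ U) : G (F x) = x := hF.2.2.1 x hx

lemma c11At (hU : IsOpen U) {x : X} (hx : x ∈ U) : C11At F x := by
  obtain ⟨-, -, -, -, hsmooth, hlip, -⟩ := hF
  obtain ⟨ε, hε, K, hK⟩ := hlip x hx
  exact ⟨hsmooth.contDiffAt (hU.mem_nhds hx), K, _,
    inter_mem (ball_mem_nhds x hε) (hU.mem_nhds hx), hK⟩

lemma image_sep (P : X → Prop) : F '' {x ∈ U | P x} = {y ∈ V | P (G y)} := by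
  ext y
  constructor
  · rintro ⟨x, ⟨hx, hPx⟩, rfl⟩
    exact ⟨hF.mapsTo hx, (hF.left_inv hx).symm ▸ hPx⟩
  · rintro ⟨hy, hPy⟩
    exact ⟨G y, ⟨hF.symm.mapsTo hy, hPy⟩, hF.symm.left_inv hy⟩

lemma comp_inverse_comp_eventuallyEq (hU : IsOpen U) {x : X} (hx : x ∈ U) (ψ : X → ℝ) :
    (ψ ∘ G) ∘ F =ᶠ[𝓝 x] ψ := by
  filter_upwards [hU.mem_nhds hx] with y hy
  simp only [Function.comp_apply, hF.left_inv hy]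

lemma c11At_comp_inverse (hV : IsOpen V) {ψ : X → ℝ} (hψ : ContDiff ℝ 2 ψ) {y : Y} (hy : y ∈ V) :
    C11At (ψ ∘ G) y :=
  (C11At.of_contDiff hψ _).comp (hF.symm.c11At hV hy)

lemma fderiv_comp_inverse (hU : IsOpen U) (hV : IsOpen V) {ψ : X → ℝ} (hψ : ContDiff ℝ 2 ψ) {x : X}
    (hx : x ∈ U) : (fderiv ℝ (ψ ∘ G) (F x)).comp (fderiv ℝ F x) = fderiv ℝ ψ x := by
  rw [← fderiv_comp x (hF.c11At_comp_inverse hV hψ (hF.mapsTo hx)).differentiableAt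
    (hF.c11At hU hx).differentiableAt]
  exact (hF.comp_inverse_comp_eventuallyEq hU hx ψ).fderiv_eq

end IsC11DiffeoOn

namespace IsC11DiffeoOn

variable {X Y : Type*} [NormedAddCommGroup X] [InnerProductSpace ℝ X] [NormedAddCommGroup Y]
  [NormedSpace ℝ Y] {F : X → Y} {G : Y → X} {U : Set X} {V : Set Y} (hF : IsC11DiffeoOn F G U V)
  (hU : IsOpen U) (hV : IsOpen V) {x₀ : X} {r : ℝ}
include hF

lemma image_closedBall (hr : 0 ≤ r) (hΩ : closedBall x₀ r ⊆ U) :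
    F '' closedBall x₀ r = {y ∈ V | (halfSqDist x₀ ∘ G) y ≤ r ^ 2 / 2} := by
  have hsep : closedBall x₀ r = {x ∈ U | halfSqDist x₀ x ≤ r ^ 2 / 2} :=
    Set.ext fun x => by simpa only [Set.mem_ofPred_eq, halfSqDist_le_iff hr] using
      (and_iff_right_of_imp (@hΩ x)).symm
  rw [hsep]
  exact hF.image_sep (halfSqDist x₀ · ≤ r ^ 2 / 2)

lemma image_ball (hr : 0 ≤ r) (hΩ : ball x₀ r ⊆ U) :
    F '' ball x₀ r = {y ∈ V | (halfSqDist x₀ ∘ G) y < r ^ 2 / 2} := by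
  have hsep : ball x₀ r = {x ∈ U | halfSqDist x₀ x < r ^ 2 / 2} :=
    Set.ext fun x => by simpa only [Set.mem_ofPred_eq, halfSqDist_lt_iff hr] using
      (and_iff_right_of_imp (@hΩ x)).symm
  rw [hsep]
  exact hF.image_sep (halfSqDist x₀ · < r ^ 2 / 2)

include hU

lemma tendsto_secondQuotient_halfSqDist {x : X} (hx : x ∈ U) (h : X) :
    Tendsto (secondQuotient ((halfSqDist x₀ ∘ G) ∘ F) x h) (𝓝[>] 0) (𝓝 (‖h‖ ^ 2)) := by
  refine tendsto_const_nhds.congr' ?_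
  filter_upwards [nhdsWithin_le_nhds (secondQuotient_congr
    (hF.comp_inverse_comp_eventuallyEq hU hx (halfSqDist x₀)) h), self_mem_nhdsWithin] with t ht ht0
  rw [ht, secondQuotient_halfSqDist _ _ _ ht0.ne']

lemma c11At_inner_comp {x : X} (hx : x ∈ U) {A : Y →L[ℝ] X} :
    C11At (fun y => ⟪x - x₀, A (F y)⟫) x :=
  (hF.c11At hU hx).clm_comp ((innerSL ℝ (x - x₀)).comp A)

include hV

lemma fderiv_halfSqDist_comp_inverse_apply {x : X} (hx : x ∈ U) {A : Y →L[ℝ] X}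
    (hA : (fderiv ℝ F x).comp A = ContinuousLinearMap.id ℝ Y) (w : Y) :
    fderiv ℝ (halfSqDist x₀ ∘ G) (F x) w = ⟪x - x₀, A w⟫ := by
  rw [← fderiv_halfSqDist_apply, ← hF.fderiv_comp_inverse hU hV (contDiff_halfSqDist x₀) hx,
    ContinuousLinearMap.comp_apply, ← ContinuousLinearMap.comp_apply _ A, hA,
    ContinuousLinearMap.id_apply]

lemma fderiv_halfSqDist_comp_inverse_ne_zero {x : X} (hx : x ∈ U) (hne : x ≠ x₀) :
    fderiv ℝ (halfSqDist x₀ ∘ G) (F x) ≠ 0 := by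
  intro hzero
  have hradial :=
    DFunLike.congr_fun (hF.fderiv_comp_inverse hU hV (contDiff_halfSqDist x₀) hx) (x - x₀)
  rw [hzero, ContinuousLinearMap.zero_comp, fderiv_halfSqDist_apply] at hradial
  exact hne (sub_eq_zero.1 (inner_self_eq_zero.1 hradial.symm))

lemma upD2p_inner_comp {x : X} (hx : x ∈ U) {A : Y →L[ℝ] X}
    (hA : (fderiv ℝ F x).comp A = ContinuousLinearMap.id ℝ Y) (h : X) :
    upD2p (fun y => ⟪x - x₀, A (F y)⟫) x h h
      = ‖h‖ ^ 2 - lowD2p (halfSqDist x₀ ∘ G) (F x) (fderiv ℝ F x h) (fderiv ℝ F x h) := by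
  simp_rw [← hF.fderiv_halfSqDist_comp_inverse_apply hU hV hx hA]
  exact upD2p_fderiv_comp (hF.c11At_comp_inverse hV (contDiff_halfSqDist x₀) (hF.mapsTo hx))
    (hF.c11At hU hx) (hF.tendsto_secondQuotient_halfSqDist hU hx h)

lemma lowD2p_inner_comp {x : X} (hx : x ∈ U) {A : Y →L[ℝ] X}
    (hA : (fderiv ℝ F x).comp A = ContinuousLinearMap.id ℝ Y) (h : X) :
    lowD2p (fun y => ⟪x - x₀, A (F y)⟫) x h h
      = ‖h‖ ^ 2 - upD2p (halfSqDist x₀ ∘ G) (F x) (fderiv ℝ F x h) (fderiv ℝ F x h) := by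
  simp_rw [← hF.fderiv_halfSqDist_comp_inverse_apply hU hV hx hA]
  exact lowD2p_fderiv_comp (hF.c11At_comp_inverse hV (contDiff_halfSqDist x₀) (hF.mapsTo hx))
    (hF.c11At hU hx) (hF.tendsto_secondQuotient_halfSqDist hU hx h)

variable (hr : 0 < r) (hΩ : closedBall x₀ r ⊆ U)
include hr hΩ

theorem lowD2p_nonneg_of_convex_image_closedBall (hconv : Convex ℝ (F '' closedBall x₀ r)) {x : X}
    (hx : x ∈ sphere x₀ r) {v : Y} (hv : fderiv ℝ (halfSqDist x₀ ∘ G) (F x) v = 0) :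
    0 ≤ lowD2p (halfSqDist x₀ ∘ G) (F x) v v := by
  have hxU : x ∈ U := hΩ (sphere_subset_closedBall hx)
  have hlevel : (halfSqDist x₀ ∘ G) (F x) = r ^ 2 / 2 := by
    rw [Function.comp_apply, hF.left_inv hxU, (halfSqDist_eq_iff hr.le).2 hx]
  rw [hF.image_closedBall hr.le hΩ, ← hlevel] at hconv
  exact lowD2p_nonneg_of_convex_sublevel hV (hF.mapsTo hxU) hconv
    (hF.c11At_comp_inverse hV (contDiff_halfSqDist x₀) (hF.mapsTo hxU))
    (hF.fderiv_halfSqDist_comp_inverse_ne_zero hU hV hxU (ne_of_mem_sphere hx hr.ne')) hv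

theorem convex_image_closedBall_of_upD2p_nonneg (hcl : IsClosed (F '' closedBall x₀ r))
    (hD : ∀ x ∈ sphere x₀ r, ∀ v, fderiv ℝ (halfSqDist x₀ ∘ G) (F x) v = 0 →
      0 ≤ upD2p (halfSqDist x₀ ∘ G) (F x) v v) : Convex ℝ (F '' closedBall x₀ r) := by
  have hpre : IsPreconnected (F '' ball x₀ r) :=
    (convex_ball x₀ r).isPreconnected.image F fun x hx =>
      (hF.c11At hU (hΩ (ball_subset_closedBall hx))).1.continuousAt.continuousWithinAt
  have hlevel {q : Y} (hq : q ∈ V) (hqr : (halfSqDist x₀ ∘ G) q = r ^ 2 / 2) :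
      ∃ x ∈ sphere x₀ r, F x = q :=
    ⟨G q, (halfSqDist_eq_iff hr.le).1 hqr, hF.symm.left_inv hq⟩
  rw [hF.image_ball hr.le (ball_subset_closedBall.trans hΩ)] at hpre
  rw [hF.image_closedBall hr.le hΩ] at hcl ⊢
  refine convex_sublevel_of_upD2p_nonneg hV
    (fun q => hF.c11At_comp_inverse hV (contDiff_halfSqDist x₀)) hcl hpre (fun q hq hqr => ?_)
    fun q hq hqr v hv => ?_
  · obtain ⟨x, hx, rfl⟩ := hlevel hq hqr
    exact hF.fderiv_halfSqDist_comp_inverse_ne_zero hU hV (hΩ (sphere_subset_closedBall hx))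
      (ne_of_mem_sphere hx hr.ne')
  · obtain ⟨x, hx, rfl⟩ := hlevel hq hqr
    exact hD x hx v hv

variable {Finv' : X → Y →L[ℝ] X}
  (hFinv' : ∀ x ∈ U, (fderiv ℝ F x).comp (Finv' x) = ContinuousLinearMap.id ℝ Y)
include hFinv'

theorem upD2p_inner_le_one_of_convex_image_closedBall (hconv : Convex ℝ (F '' closedBall x₀ r))
    {x h : X} (hx : x ∈ sphere x₀ r) (hperp : ⟪h, x - x₀⟫ = 0) (hunit : ‖h‖ = 1) :
    upD2p (fun y => ⟪x - x₀, Finv' x (F y)⟫) x h h ≤ 1 := by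
  have hxU : x ∈ U := hΩ (sphere_subset_closedBall hx)
  have htangent : fderiv ℝ (halfSqDist x₀ ∘ G) (F x) (fderiv ℝ F x h) = 0 := by
    rw [← ContinuousLinearMap.comp_apply, hF.fderiv_comp_inverse hU hV (contDiff_halfSqDist x₀) hxU,
      fderiv_halfSqDist_apply, real_inner_comm, hperp]
  rw [hF.upD2p_inner_comp hU hV hxU (hFinv' x hxU), hunit, one_pow]
  exact sub_le_self 1
    (hF.lowD2p_nonneg_of_convex_image_closedBall hU hV hr hΩ hconv hx htangent)

theorem convex_image_closedBall_of_lowD2p_inner_le_one (hcl : IsClosed (F '' closedBall x₀ r))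
    (hD : ∀ x ∈ sphere x₀ r, ∀ h : X, ⟪h, x - x₀⟫ = 0 → ‖h‖ = 1 →
      lowD2p (fun y => ⟪x - x₀, Finv' x (F y)⟫) x h h ≤ 1) :
    Convex ℝ (F '' closedBall x₀ r) := by
  refine hF.convex_image_closedBall_of_upD2p_nonneg hU hV hr hΩ hcl fun x hx v hv => ?_
  have hxU : x ∈ U := hΩ (sphere_subset_closedBall hx)
  set k : X := Finv' x v
  have hk : fderiv ℝ F x k = v := DFunLike.congr_fun (hFinv' x hxU) v
  have hperp : ⟪k, x - x₀⟫ = 0 := by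
    rw [real_inner_comm, ← hF.fderiv_halfSqDist_comp_inverse_apply hU hV hxU (hFinv' x hxU), hv]
  rcases eq_or_ne k 0 with hk0 | hk0
  · rw [← hk, hk0, map_zero]
    simp [upD2p]
  · have hunit : lowD2p (fun y => ⟪x - x₀, Finv' x (F y)⟫) x (‖k‖⁻¹ • k) (‖k‖⁻¹ • k) ≤ 1 :=
      hD x hx _ (by rw [real_inner_smul_left, hperp, mul_zero]) (norm_smul_inv_norm (𝕜 := ℝ) hk0)
    rw [(hF.c11At_inner_comp hU hxU).lowD2p_smul k (inv_pos.2 (norm_pos_iff.2 hk0)), inv_pow,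
      inv_mul_le_one₀ (pow_pos (norm_pos_iff.2 hk0) 2),
      hF.lowD2p_inner_comp hU hV hxU (hFinv' x hxU), hk] at hunit
    exact (sub_le_self_iff _).1 hunit

theorem convex_image_closedBall_iff_upD2p (hcl : IsClosed (F '' closedBall x₀ r)) :
    Convex ℝ (F '' closedBall x₀ r) ↔
      ∀ x ∈ sphere x₀ r, ∀ h : X, ⟪h, x - x₀⟫ = 0 → ‖h‖ = 1 →
        upD2p (fun y => ⟪x - x₀, Finv' x (F y)⟫) x h h ≤ 1 := by
  refine ⟨fun hconv x hx h => hF.upD2p_inner_le_one_of_convex_image_closedBall hU hV hr hΩ hFinv'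
    hconv hx, fun hD => ?_⟩
  refine hF.convex_image_closedBall_of_lowD2p_inner_le_one hU hV hr hΩ hFinv' hcl
    fun x hx h hperp hunit => ?_
  exact ((hF.c11At_inner_comp hU (hΩ (sphere_subset_closedBall hx))).lowD2p_le_upD2p h).trans
    (hD x hx h hperp hunit)

theorem convex_image_closedBall_iff_lowD2p (hcl : IsClosed (F '' closedBall x₀ r)) :
    Convex ℝ (F '' closedBall x₀ r) ↔
      ∀ x ∈ sphere x₀ r, ∀ h : X, ⟪h, x - x₀⟫ = 0 → ‖h‖ = 1 →
        lowD2p (fun y => ⟪x - x₀, Finv' x (F y)⟫) x h h ≤ 1 := by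
  refine ⟨fun hconv x hx h hperp hunit => ?_,
    hF.convex_image_closedBall_of_lowD2p_inner_le_one hU hV hr hΩ hFinv' hcl⟩
  exact ((hF.c11At_inner_comp hU (hΩ (sphere_subset_closedBall hx))).lowD2p_le_upD2p h).trans
    (hF.upD2p_inner_le_one_of_convex_image_closedBall hU hV hr hΩ hFinv' hconv hx hperp hunit)

end IsC11DiffeoOn

end Diffeomorphism

lemma forall_inner_eq_zero_norm_eq_one_neg {X : Type*} [NormedAddCommGroup X]
    [InnerProductSpace ℝ X] (w : X) (P : X → Prop) :
    (∀ h, ⟪h, w⟫ = 0 → ‖h‖ = 1 → P (-h)) ↔ ∀ h, ⟪h, w⟫ = 0 → ‖h‖ = 1 → P h :=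
  (Equiv.neg X).forall_congr fun h => by simp

theorem stmt_4_general {X Y : Type*} [NormedAddCommGroup X] [InnerProductSpace ℝ X]
    [NormedAddCommGroup Y] [NormedSpace ℝ Y]
    (U : Set X) (V : Set Y) (hUo : IsOpen U) (hVo : IsOpen V)
    (F : X → Y) (G : Y → X) (hF : IsC11DiffeoOn F G U V)
    (x₀ : X) (r : ℝ) (hr : 0 < r) (hΩU : closedBall x₀ r ⊆ U)
    (hFΩcl : IsClosed (F '' closedBall x₀ r))
    (Finv' : X → Y →L[ℝ] X)
    (hFinv' : ∀ x ∈ U, (Finv' x).comp (fderiv ℝ F x) = ContinuousLinearMap.id ℝ X ∧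
      (fderiv ℝ F x).comp (Finv' x) = ContinuousLinearMap.id ℝ Y)
    (D : (X → ℝ) → X → X → X → ℝ)
    (hD : D = lowD2p ∨ D = upD2p ∨ D = lowD2m ∨ D = upD2m) :
    Convex ℝ (F '' closedBall x₀ r) ↔
      ∀ x ∈ sphere x₀ r, ∀ h : X, ⟪h, x - x₀⟫ = 0 → ‖h‖ = 1 →
        D (fun y => ⟪x - x₀, Finv' x (F y)⟫) x h h ≤ 1 := by
  have hright (x) (hx : x ∈ U) := (hFinv' x hx).2
  have hup := hF.convex_image_closedBall_iff_upD2p hUo hVo hr hΩU hright hFΩcl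
  have hlow := hF.convex_image_closedBall_iff_lowD2p hUo hVo hr hΩU hright hFΩcl
  rcases hD with rfl | rfl | rfl | rfl
  · exact hlow
  · exact hup
  · simp only [lowD2m_eq_lowD2p_neg]
    exact hlow.trans (forall₂_congr fun x _ => (forall_inner_eq_zero_norm_eq_one_neg _ _).symm)
  · simp only [upD2m_eq_upD2p_neg]
    exact hup.trans (forall₂_congr fun x _ => (forall_inner_eq_zero_norm_eq_one_neg _ _).symm)

/-- Let `X, Y` be real Hilbert spaces, `U ⊆ X`, `V ⊆ Y` open,
`F : U → V` a `C^{1,1}`-diffeomorphism, `Ω ⊆ U` a closed ball centered at `x₀`, and `F(Ω)`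
closed.  Let `𝒟²` be any of the four generalized second-order directional derivative
operators.  Then `F(Ω)` is convex iff `𝒟²(y ↦ ⟨x−x₀, F'(x)⁻¹F(y)⟩)(x,h²) ≤ 1` for all
`x ∈ ∂Ω` and all unit `h ⟂ (x−x₀)`. -/
theorem stmt_4 {X Y : Type*} [NormedAddCommGroup X] [InnerProductSpace ℝ X] [CompleteSpace X]
    [NormedAddCommGroup Y] [InnerProductSpace ℝ Y] [CompleteSpace Y]
    (U : Set X) (V : Set Y) (hUo : IsOpen U) (hVo : IsOpen V)
    (F : X → Y) (G : Y → X) (hF : IsC11DiffeoOn F G U V)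
    (x₀ : X) (r : ℝ) (hr : 0 < r) (hΩU : closedBall x₀ r ⊆ U)
    (hFΩcl : IsClosed (F '' closedBall x₀ r))
    (Finv' : X → Y →L[ℝ] X)
    (hFinv' : ∀ x ∈ U, (Finv' x).comp (fderiv ℝ F x) = ContinuousLinearMap.id ℝ X ∧
      (fderiv ℝ F x).comp (Finv' x) = ContinuousLinearMap.id ℝ Y)
    (D : (X → ℝ) → X → X → X → ℝ)
    (hD : D = lowD2p ∨ D = upD2p ∨ D = lowD2m ∨ D = upD2m) :
    Convex ℝ (F '' closedBall x₀ r) ↔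
      ∀ x ∈ sphere x₀ r, ∀ h : X, ⟪h, x - x₀⟫ = 0 → ‖h‖ = 1 →
        D (fun y => ⟪x - x₀, Finv' x (F y)⟫) x h h ≤ 1 :=
  stmt_4_general U V hUo hVo F G hF x₀ r hr hΩU hFΩcl Finv' hFinv' D hD
end

section
/- Endow ℝ² with the norm ‖x‖ = (|x₁|^p + |x₂|^p)^{1/p} for some real p > 2 (a uniformly convex norm), and for ε > 0 let F : ℝ² → ℝ² be defined by F(x) = (x₁ + ε x₂², x₂). Then for every r > 0 and every ε > 0 the image F(B̄(0,r)) of the closed ball of radius r centered at the origin (taken with respect to the p-norm) is not a convex subset of ℝ². In particular, the convexity of images of small balls under C^{1,1}-diffeomorphisms does not extend from Hilbert spaces to uniformly convex Banach spaces. -/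
/-!
The `p`-sphere is so flat at `(r, 0)` that `(r - s, ±y)` lie in the ball whenever `s` is small and
`|y| ^ p = o(s)`. An even `f` with `|y| ^ p = o(f y - f 0)` allows the choice `s = (f y - f 0) / 2`
(say `s > 0`). The shear by `f` moves both points by `f y` in the first direction, so the midpoint
of their images is the image of `(r + s, 0)`, which lies outside the ball.
-/

open Asymptotics Filter Topology

section Shear

variable {E F : Type*} [AddCommGroup E] [Module ℝ E] [AddCommGroup F] [Module ℝ F]

theorem add_sub_mem_of_convex_image_shear {f : F → E} (hf : f.Even) {S : Set (E × F)}
    (hS : Convex ℝ ((fun x : E × F => (x.1 + f x.2, x.2)) '' S)) {a : E} {y : F}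
    (hy : (a, y) ∈ S) (hy' : (a, -y) ∈ S) : (a + (f y - f 0), 0) ∈ S := by
  obtain ⟨⟨b, z⟩, hbz, heq⟩ := hS.midpoint_mem (Set.mem_image_of_mem _ hy)
    (Set.mem_image_of_mem _ hy')
  obtain ⟨hb, rfl⟩ : b + f z = a + f y ∧ z = 0 := by
    simpa [Prod.ext_iff, midpoint_eq_smul_add, hf y, ← two_smul ℝ (a + f y)] using heq
  rwa [← add_sub_assoc, ← hb, add_sub_cancel_right]

end Shear

theorem eventually_add_le_of_hasDerivAt {α : Type*} {l : Filter α} {φ : ℝ → ℝ} {φ' r : ℝ}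
    (hφ : HasDerivAt φ φ' r) (hφ' : 0 < φ') {s δ : α → ℝ} (hs : Tendsto s l (𝓝 0))
    (hs_nonneg : ∀ i, 0 ≤ s i) (hδ : δ =o[l] s) :
    ∀ᶠ i in l, φ (r - s i) + δ i ≤ φ r := by
  have hlim : Tendsto (fun i => r - s i) l (𝓝 r) := by simpa using hs.const_sub r
  have hexpand : (fun i => φ (r - s i) - φ r + s i * φ') =o[l] s := by
    simpa [Function.comp_def] using hφ.isLittleO.comp_tendsto hlim
  filter_upwards [(hexpand.add hδ).bound hφ'] with i hi
  rw [Real.norm_of_nonneg (hs_nonneg i)] at hi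
  linarith [(abs_le.mp hi).2]

section NormedGroup

variable {E F : Type*} [SeminormedAddCommGroup E] [SeminormedAddCommGroup F]

theorem isLittleO_norm_rpow_norm_rpow {p q : ℝ} (hq : 0 < q) (hqp : q < p) :
    (fun y : F => ‖y‖ ^ p) =o[𝓝 0] fun y => ‖y‖ ^ q := by
  have hlim : Tendsto (fun y : F => ‖y‖ ^ (p - q)) (𝓝 0) (𝓝 0) := by
    simpa [Real.zero_rpow (sub_pos.mpr hqp).ne'] using
      (tendsto_norm_zero (E := F)).rpow_const (Or.inr (sub_pos.mpr hqp).le)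
  have hmul := ((isLittleO_one_iff ℝ).mpr hlim).mul_isBigO (isBigO_refl (fun y : F => ‖y‖ ^ q) _)
  refine hmul.congr (fun y => ?_) fun y => one_mul _
  rw [← Real.rpow_add_of_nonneg (norm_nonneg y) (by linarith) hq.le, sub_add_cancel]

theorem norm_rpow_add_norm_rpow_rpow_one_div_le_iff {p r : ℝ} (hp : 0 < p) (hr : 0 ≤ r)
    (x : E) (y : F) :
    (‖x‖ ^ p + ‖y‖ ^ p) ^ (1 / p) ≤ r ↔ ‖x‖ ^ p + ‖y‖ ^ p ≤ r ^ p := by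
  rw [one_div, Real.rpow_inv_le_iff_of_pos (by positivity) hr hp]

end NormedGroup

section NormedSpace

variable {E F : Type*} [NormedAddCommGroup E] [NormedAddCommGroup F] [NormedSpace ℝ F]

theorem exists_ne_zero_and_sub_norm_rpow_add_norm_rpow_le [Nontrivial F] {p r : ℝ} (hp : 0 < p)
    (hr : 0 < r) {g : F → E} (hg : Tendsto g (𝓝 0) (𝓝 0))
    (hpg : (fun y => ‖y‖ ^ p) =o[𝓝 0] g) :
    ∃ y, g y ≠ 0 ∧ ‖g y‖ ≤ r ∧ (r - ‖g y‖) ^ p + ‖y‖ ^ p ≤ r ^ p := by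
  have hg_norm : Tendsto (fun y => ‖g y‖) (𝓝 0) (𝓝 0) := tendsto_zero_iff_norm_tendsto_zero.mp hg
  have hball : ∀ᶠ y in 𝓝 0, (r - ‖g y‖) ^ p + ‖y‖ ^ p ≤ r ^ p :=
    eventually_add_le_of_hasDerivAt (Real.hasDerivAt_rpow_const (Or.inl hr.ne')) (by positivity)
      hg_norm (fun _ => norm_nonneg _) hpg.norm_right
  have hsmall : ∀ᶠ y in 𝓝 0, ‖g y‖ ≤ r := hg_norm.eventually_le_const hr
  have hdom : ∀ᶠ y in 𝓝 0, ‖‖y‖ ^ p‖ ≤ 1 * ‖g y‖ := hpg.bound one_pos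
  obtain ⟨y, hy, hy_ball, hy_small, hy_dom⟩ := (eventually_mem_nhdsWithin.and
    ((hball.and (hsmall.and hdom)).filter_mono nhdsWithin_le_nhds)).exists (f := 𝓝[≠] 0)
  have hy_pos : 0 < ‖y‖ ^ p := Real.rpow_pos_of_pos (norm_pos_iff.mpr hy) p
  rw [Real.norm_of_nonneg hy_pos.le, one_mul] at hy_dom
  exact ⟨y, norm_pos_iff.mp (hy_pos.trans_le hy_dom), hy_small, hy_ball⟩

variable [NormedSpace ℝ E]

theorem exists_norm_sub_eq_and_norm_add_eq {u : E} (hu : u ≠ 0) {r : ℝ} (hr : ‖u‖ ≤ r) :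
    ∃ a : E, ‖a - u‖ = r - ‖u‖ ∧ ‖a + u‖ = r + ‖u‖ := by
  have hratio : 0 ≤ r / ‖u‖ := div_nonneg ((norm_nonneg u).trans hr) (norm_nonneg u)
  have hray : SameRay ℝ ((r / ‖u‖) • u) u := SameRay.sameRay_nonneg_smul_left u hratio
  have hnorm : ‖(r / ‖u‖) • u‖ = r := by
    rw [norm_smul, Real.norm_of_nonneg hratio, div_mul_cancel₀ r (norm_ne_zero_iff.mpr hu)]
  refine ⟨(r / ‖u‖) • u, ?_, ?_⟩
  · rw [hray.norm_sub, hnorm, abs_of_nonneg (sub_nonneg.mpr hr)]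
  · rw [hray.norm_add, hnorm]

theorem stmt_5_general [Nontrivial F] {p r : ℝ} (hp : 0 < p) (hr : 0 < r) {f : F → E}
    (hf : f.Even) (hf_cont : ContinuousAt f 0)
    (hpf : (fun y => ‖y‖ ^ p) =o[𝓝 0] fun y => f y - f 0) :
    ¬ Convex ℝ ((fun x : E × F => (x.1 + f x.2, x.2)) ''
      {x : E × F | (‖x.1‖ ^ p + ‖x.2‖ ^ p) ^ (1 / p) ≤ r}) := by
  intro hconv
  simp only [norm_rpow_add_norm_rpow_rpow_one_div_le_iff hp hr.le] at hconv
  let g : F → E := fun y => (2⁻¹ : ℝ) • (f y - f 0)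
  have hg : Tendsto g (𝓝 0) (𝓝 0) := by
    simpa using (hf_cont.tendsto.sub_const (f 0)).const_smul (2⁻¹ : ℝ)
  have hpg : (fun y => ‖y‖ ^ p) =o[𝓝 0] g := (isLittleO_const_smul_right (by norm_num)).mpr hpf
  obtain ⟨y, hy_ne, hy_le, hy⟩ :=
    exists_ne_zero_and_sub_norm_rpow_add_norm_rpow_le hp hr hg hpg
  obtain ⟨a, ha_sub, ha_add⟩ := exists_norm_sub_eq_and_norm_add_eq hy_ne hy_le
  have hmem := add_sub_mem_of_convex_image_shear hf hconv (a := a - g y) (y := y)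
    (by simpa [ha_sub] using hy) (by simpa [ha_sub] using hy)
  have htwo : a - g y + (f y - f 0) = a + g y := by module
  have hle : (r + ‖g y‖) ^ p ≤ r ^ p := by
    simpa [htwo, ha_add, Real.zero_rpow hp.ne'] using hmem
  exact hle.not_gt (Real.rpow_lt_rpow hr.le (lt_add_of_pos_right r (norm_pos_iff.mpr hy_ne)) hp)

end NormedSpace

/-- Endow `ℝ²` with the `p`-norm for some real `p > 2`, and for `ε > 0` let
`F(x) = (x₁ + ε x₂², x₂)`.  Then for every `r > 0` and every `ε > 0` the image under `F` of the
closed `p`-norm ball of radius `r` centered at the origin is not convex. -/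
theorem stmt_5 (p : ℝ) (hp : 2 < p) (ε : ℝ) (hε : 0 < ε) (r : ℝ) (hr : 0 < r) :
    ¬ Convex ℝ ((fun x : ℝ × ℝ => (x.1 + ε * x.2 ^ 2, x.2)) ''
      {x : ℝ × ℝ | (|x.1| ^ p + |x.2| ^ p) ^ (1 / p) ≤ r}) := by
  have hlittle : (fun y : ℝ => ‖y‖ ^ p) =o[𝓝 0] fun y => ε * y ^ 2 - ε * 0 ^ 2 := by
    simpa [isLittleO_const_mul_right_iff hε.ne'] using
      isLittleO_norm_rpow_norm_rpow (F := ℝ) two_pos hp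
  exact stmt_5_general (by linarith) hr (fun y => by rw [neg_sq]) (by fun_prop) hlittle
end

section
/- Let X be a real Hilbert space, I ⊆ ℝ an interval, U ⊆ I × X relatively open in I × X, and f : U → X continuous and of class C^{1,1} with respect to its second argument. Let φ denote the general solution of ẋ = f(t,x). Let x₀ ∈ X, r > 0, and t₀, t₁ ∈ I with (t₁, t₀, x) ∈ dom φ for all x ∈ B̄(x₀,r). Suppose M₁, M₂ ∈ ℝ satisfy, for all (τ,x) ∈ U: M₁ ≥ 2μ₊(D₂f(τ,x)) − μ₋(D₂f(τ,x)) if t₁ ≥ t₀ and M₁ ≥ μ₊(D₂f(τ,x)) − 2μ₋(D₂f(τ,x)) otherwise, and M₂ ≥ limsup_{h→0} ‖D₂f(τ,x+h) − D₂f(τ,x)‖/‖h‖. Define K(α) = |t₁−t₀| if α = 0 and K(α) = (exp(α|t₁−t₀|)−1)/α otherwise. If r·M₂·K(M₁) ≤ 1, then the reachable set φ(t₁,t₀,B̄(x₀,r)) is convex. -/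
open Filter Topology Metric Set RealInnerProductSpace

/-- `μ₋(A) = inf {⟨Ax,x⟩ : ‖x‖ = 1}`. -/
noncomputable def muMinus {X : Type*} [NormedAddCommGroup X] [InnerProductSpace ℝ X]
    (A : X →L[ℝ] X) : ℝ :=
  sInf {c : ℝ | ∃ y : X, ‖y‖ = 1 ∧ c = ⟪A y, y⟫}

/-- `μ₊(A) = sup {⟨Ax,x⟩ : ‖x‖ = 1}`. -/
noncomputable def muPlus {X : Type*} [NormedAddCommGroup X] [InnerProductSpace ℝ X]
    (A : X →L[ℝ] X) : ℝ :=
  sSup {c : ℝ | ∃ y : X, ‖y‖ = 1 ∧ c = ⟪A y, y⟫}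

/-!
Reversing time if necessary, let `t₀ = 0` and `t₁ = T ≥ 0`, and let `g = φ(T, 0, ·)`, with inverse
`h`.  The image of the ball is convex because `y ↦ ‖h y - x₀‖ ^ 2` is strictly midpoint convex near
each point of the image of the open ball: by the maximum principle, a segment in that image which
joins two points of the image of a smaller concentric ball stays in the image of the smaller ball.
The segment from `g a` to `g b` is reached by moving `a` and `b` along the rays from `x₀`.

For midpoint convexity, take solutions `η₁`, `η₂` near a solution `ξ` with `ξ T` the midpoint of
`η₁ T` and `η₂ T`.  Then `ω = η₁ + η₂ - 2 ξ` satisfies `ω' = D₂f(s, ξ) ω + R`, where the remainder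
`R` is at most `M₂ / 2 * (‖η₁ - ξ‖ ^ 2 + ‖η₂ - ξ‖ ^ 2)` by Taylor's formula.  Forward in time,
`‖ηᵢ - ξ‖` grows at most at the rate `μ₊`; backward in time from `ω T = 0`, the norm of `ω` grows
at most at the rate `-μ₋`.  Integrating the product of the two growth factors bounds `‖ω 0‖` by
`M₂ / 2 * K(M₁) * (‖η₁ 0 - ξ 0‖ ^ 2 + ‖η₂ 0 - ξ 0‖ ^ 2)`, up to a factor close to `1`, and
`r * M₂ * K(M₁) ≤ 1` makes this too small for `ξ 0` to be as far from `x₀` as `η₁ 0` and `η₂ 0` are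
in the quadratic mean.
-/

open AffineMap (lineMap)
open scoped NNReal

section Calm

variable {α β : Type*} [PseudoMetricSpace α] [PseudoMetricSpace β]

/-- Pointwise form of the Lipschitz condition with constant `C` on `s`: near each `x ∈ s`, only the
distances from the fixed point `x` are compared.  Unlike `LipschitzOnWith C f s` it is a
pointwise condition, but the two agree on convex sets (`CalmOn.lipschitzOnWith`). -/
def CalmOn (C : ℝ≥0) (f : α → β) (s : Set α) : Prop :=
  ∀ x ∈ s, ∀ᶠ y in 𝓝[s] x, dist (f y) (f x) ≤ C * dist y x

namespace CalmOn

theorem continuousOn {C : ℝ≥0} {f : α → β} {s : Set α} (hf : CalmOn C f s) :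
    ContinuousOn f s := by
  intro x hx
  rw [ContinuousWithinAt, tendsto_iff_dist_tendsto_zero]
  have hbound : Tendsto (fun y => C * dist y x) (𝓝[s] x) (𝓝 0) := by
    have : Continuous fun y => C * dist y x := by fun_prop
    simpa using this.continuousWithinAt.tendsto (x := x) (s := s)
  exact squeeze_zero' (Eventually.of_forall fun _ => dist_nonneg) (hf x hx) hbound

theorem comp_lipschitzOnWith {γ : Type*} [PseudoMetricSpace γ] {C L : ℝ≥0} {f : α → β}
    {s : Set α} {y : γ → α} {t : Set γ} (hf : CalmOn C f s) (hy : LipschitzOnWith L y t)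
    (hmaps : MapsTo y t s) : CalmOn (C * L) (f ∘ y) t := by
  intro a ha
  have htend : Tendsto y (𝓝[t] a) (𝓝[s] (y a)) :=
    (hy.continuousOn a ha).tendsto_nhdsWithin hmaps
  filter_upwards [htend.eventually (hf _ (hmaps ha)), self_mem_nhdsWithin] with b hb hbt
  calc dist (f (y b)) (f (y a)) ≤ C * dist (y b) (y a) := hb
    _ ≤ C * (L * dist b a) := by gcongr; exact hy.dist_le_mul b hbt a ha
    _ = (C * L : ℝ≥0) * dist b a := by push_cast; ring

theorem dist_le_mul_sub {C : ℝ≥0} {f : ℝ → α} {a b : ℝ} (hf : CalmOn C f (Icc a b))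
    (hab : a ≤ b) : dist (f b) (f a) ≤ C * (b - a) := by
  let S : Set ℝ := {t | dist (f t) (f a) ≤ C * (t - a)}
  suffices Icc a b ⊆ S from this ⟨hab, le_rfl⟩
  refine IsClosed.Icc_subset_of_forall_mem_nhdsWithin ?_ (by simp [S]) ?_
  · rw [inter_comm]
    have hpair : ContinuousOn (fun t => (dist (f t) (f a), C * (t - a))) (Icc a b) :=
      (continuous_dist.comp_continuousOn (hf.continuousOn.prodMk continuousOn_const)).prodMk
        (by fun_prop)
    exact hpair.preimage_isClosed_of_isClosed isClosed_Icc
      (isClosed_le continuous_fst continuous_snd)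
  · rintro t ⟨htS, ht⟩
    have hle : 𝓝[>] t ≤ 𝓝[Icc a b] t :=
      nhdsWithin_le_of_mem (mem_of_superset (Ioo_mem_nhdsGT ht.2)
        fun u hu => ⟨ht.1.trans hu.1.le, hu.2.le⟩)
    filter_upwards [hle (hf t ⟨ht.1, ht.2.le⟩), self_mem_nhdsWithin] with u hu htu
    rw [Real.dist_eq, abs_of_pos (sub_pos.2 htu)] at hu
    calc dist (f u) (f a) ≤ dist (f u) (f t) + dist (f t) (f a) := dist_triangle _ _ _
      _ ≤ C * (u - t) + C * (t - a) := add_le_add hu htS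
      _ = C * (u - a) := by ring

theorem lipschitzOnWith {E : Type*} [SeminormedAddCommGroup E] [NormedSpace ℝ E] {C : ℝ≥0}
    {f : E → β} {s : Set E} (hf : CalmOn C f s) (hs : Convex ℝ s) : LipschitzOnWith C f s := by
  refine LipschitzOnWith.of_dist_le_mul fun x hx y hy => ?_
  have hline : CalmOn (C * nndist y x) (f ∘ lineMap y x) (Icc (0 : ℝ) 1) :=
    hf.comp_lipschitzOnWith (lipschitzWith_lineMap y x).lipschitzOnWith
      fun _ ht => hs.lineMap_mem hy hx ht
  simpa [dist_comm x y] using hline.dist_le_mul_sub zero_le_one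

end CalmOn

end Calm

section Segment

theorem Icc_subset_of_forall_Ico_subset_imp_mem {S : Set ℝ} {a b : ℝ}
    (hclosed : ∀ t ∈ Icc a b, Ico a t ⊆ S → t ∈ S)
    (hopen : ∀ t ∈ Ico a b, t ∈ S → S ∈ 𝓝[>] t) : Icc a b ⊆ S := by
  by_contra hS
  have hne : (Icc a b \ S).Nonempty := sdiff_nonempty.2 hS
  have hbdd : BddBelow (Icc a b \ S) := ⟨a, fun t ht => ht.1.1⟩
  set c := sInf (Icc a b \ S)
  obtain ⟨t, ht, htS⟩ := hne
  have hac : a ≤ c := le_csInf ⟨t, ht, htS⟩ fun u hu => hu.1.1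
  have hct : c ≤ t := csInf_le hbdd ⟨ht, htS⟩
  have hcS : c ∈ S := hclosed c ⟨hac, hct.trans ht.2⟩ fun u hu => by
    by_contra huS
    exact hu.2.not_ge (csInf_le hbdd ⟨⟨hu.1, hu.2.le.trans (hct.trans ht.2)⟩, huS⟩)
  have hct' : c < t := hct.lt_of_ne fun h => htS (h ▸ hcS)
  obtain ⟨m, hcm, hmS⟩ := (mem_nhdsGT_iff_exists_Ioo_subset' hct').1
    (hopen c ⟨hac, hct'.trans_le ht.2⟩ hcS)
  obtain ⟨u, hu, hum⟩ := exists_lt_of_csInf_lt (s := Icc a b \ S) ⟨t, ht, htS⟩ hcm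
  have hcu : c < u := (csInf_le hbdd hu).lt_of_ne fun h => hu.2 (h ▸ hcS)
  exact hu.2 (hmS ⟨hcu, hum⟩)

theorem le_max_of_eventually_two_mul_lt_add {u : ℝ → ℝ} {a b : ℝ}
    (hu : ContinuousOn u (Icc a b))
    (hmid : ∀ t ∈ Ioo a b, ∀ᶠ h in 𝓝[>] 0, 2 * u t < u (t + h) + u (t - h)) :
    ∀ t ∈ Icc a b, u t ≤ max (u a) (u b) := by
  intro t ht
  obtain ⟨m, hm, hmax⟩ := isCompact_Icc.exists_isMaxOn ⟨t, ht⟩ hu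
  refine (hmax ht).trans ?_
  rcases hm.1.eq_or_lt with rfl | ham
  · exact le_max_left _ _
  rcases hm.2.eq_or_lt with rfl | hmb
  · exact le_max_right _ _
  obtain ⟨h, ⟨hlt, hleft⟩, hright⟩ := ((hmid m ⟨ham, hmb⟩).and
    (Ioo_mem_nhdsGT (sub_pos.2 ham))).and (Ioo_mem_nhdsGT (sub_pos.2 hmb)) |>.exists
  have hplus : u (m + h) ≤ u m := hmax ⟨by linarith [hleft.1], by linarith [hright.2]⟩
  have hminus : u (m - h) ≤ u m := hmax ⟨by linarith [hleft.2], by linarith [hleft.1]⟩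
  linarith

variable {E : Type*} [NormedAddCommGroup E] [NormedSpace ℝ E]

theorem le_max_of_mem_segment_of_eventually_two_mul_lt_add {N : E → ℝ} {p q : E}
    (hN : ContinuousOn N (segment ℝ p q))
    (hmid : ∀ y ∈ segment ℝ p q, ∀ᶠ v in 𝓝[≠] 0, 2 * N y < N (y + v) + N (y - v)) :
    ∀ y ∈ segment ℝ p q, N y ≤ max (N p) (N q) := by
  rcases eq_or_ne p q with rfl | hpq
  · simp
  intro y hy
  rw [segment_eq_image_lineMap] at hy
  obtain ⟨t, ht, rfl⟩ := hy
  have hmem : MapsTo (lineMap p q) (Icc (0 : ℝ) 1) (segment ℝ p q) := fun s hs =>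
    (convex_segment p q).lineMap_mem (left_mem_segment ℝ p q) (right_mem_segment ℝ p q) hs
  have hline := le_max_of_eventually_two_mul_lt_add (u := N ∘ lineMap p q)
    (hN.comp AffineMap.lineMap_continuous.continuousOn hmem) ?_ t ht
  · simpa using hline
  intro s hs
  have htend : Tendsto (fun h : ℝ => h • (q - p)) (𝓝[>] 0) (𝓝[≠] 0) := by
    refine tendsto_nhdsWithin_iff.2 ⟨?_, ?_⟩
    · have : Continuous fun h : ℝ => h • (q - p) := by fun_prop
      simpa using this.continuousWithinAt.tendsto (x := 0) (s := Ioi 0)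
    · filter_upwards [self_mem_nhdsWithin] with h hh
      exact smul_ne_zero (ne_of_gt hh) (sub_ne_zero.2 hpq.symm)
  filter_upwards [htend.eventually (hmid _ (hmem ⟨hs.1.le, hs.2.le⟩))] with h hh
  convert! hh using 3 <;>
  · simp only [Function.comp_apply, AffineMap.lineMap_apply_module']
    congr 1
    module

theorem eventually_segment_subset {Ω : Set E} (hΩ : IsOpen Ω) {p q : E}
    (hpq : segment ℝ p q ⊆ Ω) : ∀ᶠ z in 𝓝 (p, q), segment ℝ z.1 z.2 ⊆ Ω := by
  have hcont : Continuous fun w : (E × E) × ℝ => lineMap w.1.1 w.1.2 w.2 := by fun_prop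
  have hev : ∀ᶠ z in 𝓝 (p, q), ∀ σ ∈ Icc (0 : ℝ) 1, lineMap z.1 z.2 σ ∈ Ω :=
    isCompact_Icc.eventually_forall_of_forall_eventually fun σ hσ =>
      hcont.continuousAt.eventually (hΩ.mem_nhds (hpq (by
        rw [segment_eq_image_lineMap]
        exact mem_image_of_mem _ hσ)))
  filter_upwards [hev] with z hz
  rw [segment_eq_image_lineMap]
  rintro _ ⟨σ, hσ, rfl⟩
  exact hz σ hσ

end Segment

section ImageOfBall

theorem mem_image_of_forall_Ico_mem_image {α β : Type*} [MetricSpace α] [CompleteSpace α]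
    [MetricSpace β] {g : α → β} {h : β → α} {A B : Set α} {C L : ℝ≥0} {y : ℝ → β} {a b : ℝ}
    (hA : IsClosed A) (hg : ContinuousOn g A) (hinv : LeftInvOn h g B) (hh : CalmOn C h (g '' B))
    (hab : a < b) (hy : LipschitzOnWith L y (Icc a b))
    (hmem : ∀ s ∈ Ico a b, y s ∈ g '' (A ∩ B)) : y b ∈ g '' A := by
  have hlip : LipschitzOnWith (C * L) (h ∘ y) (Ico a b) :=
    (hh.comp_lipschitzOnWith (hy.mono Ico_subset_Icc_self)
      fun s hs => image_mono inter_subset_right (hmem s hs)).lipschitzOnWith (convex_Ico a b)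
  have hinvy : ∀ s ∈ Ico a b, h (y s) ∈ A ∧ g (h (y s)) = y s := by
    intro s hs
    obtain ⟨x, hx, hxy⟩ := hmem s hs
    rw [← hxy, hinv hx.2]
    exact ⟨hx.1, rfl⟩
  have hne : (𝓝[Ico a b] b).NeBot := by
    rw [← mem_closure_iff_nhdsWithin_neBot, closure_Ico hab.ne]
    exact right_mem_Icc.2 hab.le
  have hcauchy : Cauchy (map (h ∘ y) (𝓝[Ico a b] b)) :=
    (cauchy_nhds.mono nhdsWithin_le_nhds).map_of_le hlip.uniformContinuousOn
      (le_principal_iff.2 self_mem_nhdsWithin)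
  obtain ⟨x, hx⟩ : ∃ x, Tendsto (h ∘ y) (𝓝[Ico a b] b) (𝓝 x) := CompleteSpace.complete hcauchy
  have hevA : ∀ᶠ s in 𝓝[Ico a b] b, h (y s) ∈ A :=
    eventually_mem_nhdsWithin.mono fun s hs => (hinvy s hs).1
  have hxA : x ∈ A := hA.mem_of_tendsto hx hevA
  refine ⟨x, hxA, tendsto_nhds_unique (f := y) (l := 𝓝[Ico a b] b) ?_
    ((hy.continuousOn b (right_mem_Icc.2 hab.le)).mono Ico_subset_Icc_self)⟩
  refine ((hg x hxA).tendsto.comp (tendsto_nhdsWithin_iff.2 ⟨hx, hevA⟩)).congr' ?_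
  exact eventually_mem_nhdsWithin.mono fun s hs => (hinvy s hs).2

variable {E F : Type*} [NormedAddCommGroup E] [NormedAddCommGroup F] [NormedSpace ℝ F]

theorem lipschitzOnWith_lineMap_of_lipschitzOnWith {p q : ℝ → F} {L L' : ℝ≥0} {s : Set ℝ}
    (hp : LipschitzOnWith L p s) (hq : LipschitzOnWith L' q s) (σ : ℝ) :
    LipschitzOnWith (‖1 - σ‖₊ * L + ‖σ‖₊ * L') (fun t => lineMap (p t) (q t) σ) s := by
  simp only [AffineMap.lineMap_apply_module]
  exact ((lipschitzWith_smul (1 - σ)).comp_lipschitzOnWith hp).add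
    ((lipschitzWith_smul σ).comp_lipschitzOnWith hq)

variable {g : E → F} {h : F → E} {x₀ : E} {r : ℝ} {K C : ℝ≥0}

theorem segment_subset_image_closedBall {ρ : ℝ} {p q : F} (hρ : ρ < r)
    (hinv : LeftInvOn h g (ball x₀ r)) (hh : ContinuousOn h (g '' ball x₀ r))
    (hmid : ∀ y ∈ g '' ball x₀ r, ∀ᶠ v in 𝓝[≠] 0,
      2 * ‖h y - x₀‖ ^ 2 < ‖h (y + v) - x₀‖ ^ 2 + ‖h (y - v) - x₀‖ ^ 2)
    (hp : p ∈ g '' closedBall x₀ ρ) (hq : q ∈ g '' closedBall x₀ ρ)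
    (hpq : segment ℝ p q ⊆ g '' ball x₀ r) : segment ℝ p q ⊆ g '' closedBall x₀ ρ := by
  have hend : ∀ z ∈ g '' closedBall x₀ ρ, ‖h z - x₀‖ ^ 2 ≤ ρ ^ 2 := by
    rintro _ ⟨x, hx, rfl⟩
    rw [hinv (closedBall_subset_ball hρ hx)]
    exact pow_le_pow_left₀ (norm_nonneg _) (mem_closedBall_iff_norm.1 hx) 2
  have hρ0 : 0 ≤ ρ := by
    obtain ⟨x, hx, -⟩ := hp
    exact dist_nonneg.trans hx
  intro y hy
  have hle : ‖h y - x₀‖ ^ 2 ≤ max (‖h p - x₀‖ ^ 2) (‖h q - x₀‖ ^ 2) :=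
    le_max_of_mem_segment_of_eventually_two_mul_lt_add (N := fun y => ‖h y - x₀‖ ^ 2)
      (((hh.mono hpq).sub continuousOn_const).norm.pow 2) (fun z hz => hmid z (hpq hz)) y hy
  obtain ⟨x, hx, rfl⟩ := hpq hy
  rw [hinv hx] at hle
  exact ⟨x, mem_closedBall_iff_norm.2 (le_of_sq_le_sq
    (hle.trans (max_le (hend p hp) (hend q hq))) hρ0), rfl⟩

/-- The set of `t` such that the segment from `p t` to `q t` lies in the image of the ball of radius
`t * r` is closed, because paths lift through `h`, and open, by the maximum principle for
`‖h y - x₀‖ ^ 2`. -/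
theorem segment_subset_image_closedBall_of_paths [CompleteSpace E] {L L' : ℝ≥0} {p q : ℝ → F}
    (hr : 0 < r) (hg : ContinuousOn g (closedBall x₀ r)) (hinv : LeftInvOn h g (ball x₀ r))
    (hopen : IsOpen (g '' ball x₀ r)) (hh : CalmOn C h (g '' ball x₀ r))
    (hmid : ∀ y ∈ g '' ball x₀ r, ∀ᶠ v in 𝓝[≠] 0,
      2 * ‖h y - x₀‖ ^ 2 < ‖h (y + v) - x₀‖ ^ 2 + ‖h (y - v) - x₀‖ ^ 2)
    (hp : LipschitzOnWith L p (Icc 0 1)) (hq : LipschitzOnWith L' q (Icc 0 1))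
    (hpmem : ∀ t ∈ Icc (0 : ℝ) 1, p t ∈ g '' closedBall x₀ (t * r))
    (hqmem : ∀ t ∈ Icc (0 : ℝ) 1, q t ∈ g '' closedBall x₀ (t * r)) :
    segment ℝ (p 1) (q 1) ⊆ g '' closedBall x₀ r := by
  let S : Set ℝ := {t | segment ℝ (p t) (q t) ⊆ g '' closedBall x₀ (t * r)}
  suffices hS : Icc (0 : ℝ) 1 ⊆ S by simpa [S] using hS (right_mem_Icc.2 zero_le_one)
  refine Icc_subset_of_forall_Ico_subset_imp_mem (fun t ht hlt => ?_) fun t ht htS => ?_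
  · rcases ht.1.eq_or_lt with rfl | ht0
    · have hp0 : p 0 = g x₀ := by simpa using hpmem 0 ht
      have hq0 : q 0 = g x₀ := by simpa using hqmem 0 ht
      simp [S, hp0, hq0]
    intro z hz
    obtain ⟨σ, hσ, rfl⟩ := segment_eq_image_lineMap ℝ (p t) (q t) ▸ hz
    have hy := (lipschitzOnWith_lineMap_of_lipschitzOnWith hp hq σ).mono
      (Icc_subset_Icc_right ht.2)
    refine mem_image_of_forall_Ico_mem_image (y := fun s => lineMap (p s) (q s) σ)
      isClosed_closedBall (hg.mono ?_) hinv hh ht0 hy fun s hs => ?_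
    · exact closedBall_subset_closedBall (mul_le_of_le_one_left hr.le ht.2)
    have hsub : closedBall x₀ (s * r) ⊆ closedBall x₀ (t * r) ∩ ball x₀ r := subset_inter
      (closedBall_subset_closedBall (mul_le_mul_of_nonneg_right hs.2.le hr.le))
      (closedBall_subset_ball (mul_lt_of_lt_one_left hr (hs.2.trans_le ht.2)))
    exact image_mono hsub (hlt hs ((convex_segment _ _).lineMap_mem (left_mem_segment ℝ _ _)
      (right_mem_segment ℝ _ _) hσ))
  · have hball : ∀ s < 1, closedBall x₀ (s * r) ⊆ ball x₀ r := fun s hs =>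
      closedBall_subset_ball (mul_lt_of_lt_one_left hr hs)
    have hle : 𝓝[>] t ≤ 𝓝[Icc 0 1] t := nhdsWithin_le_of_mem
      (mem_of_superset (Ioo_mem_nhdsGT ht.2) fun s hs => ⟨ht.1.trans hs.1.le, hs.2.le⟩)
    have htI : t ∈ Icc (0 : ℝ) 1 := ⟨ht.1, ht.2.le⟩
    have hpq : Tendsto (fun s => (p s, q s)) (𝓝[>] t) (𝓝 (p t, q t)) :=
      ((hp.continuousOn t htI).prodMk (hq.continuousOn t htI)).mono_left hle
    filter_upwards [hpq.eventually (eventually_segment_subset hopen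
      (htS.trans (image_mono (hball t ht.2)))), Ioo_mem_nhdsGT ht.2] with s hs hst
    have hsI : s ∈ Icc (0 : ℝ) 1 := ⟨ht.1.trans hst.1.le, hst.2.le⟩
    exact segment_subset_image_closedBall (mul_lt_of_lt_one_left hr hst.2) hinv hh.continuousOn
      hmid (hpmem s hsI) (hqmem s hsI) hs

theorem convex_image_closedBall [NormedSpace ℝ E] [CompleteSpace E] (hr : 0 < r)
    (hg : LipschitzOnWith K g (closedBall x₀ r)) (hinv : LeftInvOn h g (ball x₀ r))
    (hopen : IsOpen (g '' ball x₀ r)) (hh : CalmOn C h (g '' ball x₀ r))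
    (hmid : ∀ y ∈ g '' ball x₀ r, ∀ᶠ v in 𝓝[≠] 0,
      2 * ‖h y - x₀‖ ^ 2 < ‖h (y + v) - x₀‖ ^ 2 + ‖h (y - v) - x₀‖ ^ 2) :
    Convex ℝ (g '' closedBall x₀ r) := by
  rw [convex_iff_segment_subset]
  have hmem : ∀ {a}, a ∈ closedBall x₀ r → ∀ t ∈ Icc (0 : ℝ) 1,
      lineMap x₀ a t ∈ closedBall x₀ (t * r) := fun ha t ht => by
    rw [mem_closedBall, dist_lineMap_left, Real.norm_of_nonneg ht.1]
    exact mul_le_mul_of_nonneg_left (mem_closedBall'.1 ha) ht.1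
  have hpath : ∀ {a}, a ∈ closedBall x₀ r →
      LipschitzOnWith (K * nndist x₀ a) (g ∘ lineMap x₀ a) (Icc (0 : ℝ) 1) := fun ha =>
    hg.comp (lipschitzWith_lineMap x₀ _).lipschitzOnWith fun t ht =>
      closedBall_subset_closedBall (mul_le_of_le_one_left hr.le ht.2) (hmem ha t ht)
  rintro _ ⟨a, ha, rfl⟩ _ ⟨b, hb, rfl⟩
  simpa using segment_subset_image_closedBall_of_paths hr hg.continuousOn hinv hopen hh hmid
    (hpath ha) (hpath hb) (fun t ht => mem_image_of_mem g (hmem ha t ht))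
    (fun t ht => mem_image_of_mem g (hmem hb t ht))

end ImageOfBall

section NumericalRange

variable {X : Type*} [NormedAddCommGroup X] [InnerProductSpace ℝ X]

theorem inner_apply_self_le_opNorm_mul_sq (A : X →L[ℝ] X) (y : X) :
    ⟪A y, y⟫ ≤ ‖A‖ * ‖y‖ ^ 2 :=
  calc ⟪A y, y⟫ ≤ ‖A y‖ * ‖y‖ := real_inner_le_norm _ _
    _ ≤ ‖A‖ * ‖y‖ * ‖y‖ := by gcongr; exact A.le_opNorm y
    _ = ‖A‖ * ‖y‖ ^ 2 := by ring

theorem inner_apply_self_le_muPlus_mul_sq (A : X →L[ℝ] X) (y : X) :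
    ⟪A y, y⟫ ≤ muPlus A * ‖y‖ ^ 2 := by
  rcases eq_or_ne y 0 with rfl | hy
  · simp
  have hbdd : BddAbove {c : ℝ | ∃ y : X, ‖y‖ = 1 ∧ c = ⟪A y, y⟫} := by
    refine ⟨‖A‖, ?_⟩
    rintro _ ⟨y, hy, rfl⟩
    simpa [hy] using inner_apply_self_le_opNorm_mul_sq A y
  have hunit : ⟪A (‖y‖⁻¹ • y), ‖y‖⁻¹ • y⟫ ≤ muPlus A :=
    le_csSup hbdd ⟨_, norm_smul_inv_norm (𝕜 := ℝ) hy, rfl⟩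
  have hn : ‖y‖ ≠ 0 := norm_ne_zero_iff.2 hy
  rw [map_smul, real_inner_smul_left, real_inner_smul_right] at hunit
  calc ⟪A y, y⟫ = ‖y‖⁻¹ * (‖y‖⁻¹ * ⟪A y, y⟫) * ‖y‖ ^ 2 := by field_simp
    _ ≤ muPlus A * ‖y‖ ^ 2 := by gcongr

theorem muPlus_neg (A : X →L[ℝ] X) : muPlus (-A) = -muMinus A := by
  rw [muMinus, muPlus, Real.sInf_def, neg_neg]
  congr 1
  ext c
  simp only [neg_apply, inner_neg_left, Set.mem_neg, mem_ofPred_eq, neg_eq_iff_eq_neg]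

theorem muMinus_neg (A : X →L[ℝ] X) : muMinus (-A) = -muPlus A := by
  rw [← neg_neg A, muPlus_neg, neg_neg, neg_neg]

theorem muMinus_mul_sq_le_inner_apply_self (A : X →L[ℝ] X) (y : X) :
    muMinus A * ‖y‖ ^ 2 ≤ ⟪A y, y⟫ := by
  have := inner_apply_self_le_muPlus_mul_sq (-A) y
  rw [muPlus_neg, neg_apply, inner_neg_left] at this
  linarith

theorem muPlus_le_add_norm_sub (A B : X →L[ℝ] X) : muPlus A ≤ muPlus B + ‖A - B‖ := by
  rcases subsingleton_or_nontrivial X with hX | hX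
  · rw [Subsingleton.elim A B]
    simp
  obtain ⟨y, hy⟩ := exists_norm_eq X zero_le_one
  refine csSup_le ⟨_, y, hy, rfl⟩ ?_
  rintro _ ⟨y, hy, rfl⟩
  have hB := inner_apply_self_le_muPlus_mul_sq B y
  have hsub := inner_apply_self_le_opNorm_mul_sq (A - B) y
  rw [sub_apply, inner_sub_left] at hsub
  rw [hy] at hB hsub
  linarith

theorem continuous_muPlus : Continuous (muPlus : (X →L[ℝ] X) → ℝ) :=
  (LipschitzWith.of_le_add fun A B => by
    simpa [dist_eq_norm] using muPlus_le_add_norm_sub A B).continuous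

theorem continuous_muMinus : Continuous (muMinus : (X →L[ℝ] X) → ℝ) := by
  have h : (muMinus : (X →L[ℝ] X) → ℝ) = fun A => -muPlus (-A) :=
    funext fun A => by rw [muPlus_neg, neg_neg]
  rw [h]
  exact (continuous_muPlus.comp continuous_neg).neg

theorem muMinus_le_muPlus (A : X →L[ℝ] X) : muMinus A ≤ muPlus A := by
  rcases subsingleton_or_nontrivial X with hX | hX
  · simp [muMinus, muPlus, Subsingleton.elim _ (0 : X)]
  obtain ⟨y, hy⟩ := exists_norm_eq X zero_le_one
  simpa [hy] using (muMinus_mul_sq_le_inner_apply_self A y).trans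
    (inner_apply_self_le_muPlus_mul_sq A y)

end NumericalRange

section DifferentialInequalities

theorem exists_hasDerivWithinAt_Icc_of_continuousOn {E : Type*} [NormedAddCommGroup E]
    [NormedSpace ℝ E] [CompleteSpace E] {m : ℝ → E} {a b : ℝ} (hab : a ≤ b)
    (hm : ContinuousOn m (Icc a b)) :
    ∃ G : ℝ → E, G a = 0 ∧ ∀ s ∈ Icc a b, HasDerivWithinAt G (m s) (Icc a b) s := by
  have hcont : Continuous (IccExtend hab ((Icc a b).domRestrict m)) :=
    (continuousOn_iff_continuous_domRestrict.1 hm).Icc_extend'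
  refine ⟨fun t => ∫ x in a..t, IccExtend hab ((Icc a b).domRestrict m) x, by simp,
    fun s hs => ?_⟩
  have hderiv := (hcont.integral_hasStrictDerivAt a s).hasDerivAt.hasDerivWithinAt (s := Icc a b)
  rwa [IccExtend_of_mem _ _ hs] at hderiv

theorem le_mul_sub_of_hasDerivWithinAt_le {G G' : ℝ → ℝ} {a b C : ℝ}
    (hG : ∀ s ∈ Icc a b, HasDerivWithinAt G (G' s) (Icc a b) s) (hC : ∀ s ∈ Icc a b, G' s ≤ C) :
    ∀ s ∈ Icc a b, G s ≤ G a + C * (s - a) := by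
  refine fun s hs => image_le_of_deriv_right_le_deriv_boundary
    (fun s hs => (hG s hs).continuousWithinAt)
    (fun s hs => (hG s (Ico_subset_Icc_self hs)).mono_of_mem_nhdsWithin
      (Icc_mem_nhdsGE_of_mem hs)) (B := fun s => G a + C * (s - a)) (B' := fun _ => C)
    (by simp) (by fun_prop) (fun s _ => ?_)
    (fun s hs => hC s (Ico_subset_Icc_self hs)) hs
  simpa using ((((hasDerivAt_id s).sub_const a).const_mul C).const_add (G a)).hasDerivWithinAt

variable {X : Type*} [NormedAddCommGroup X] [InnerProductSpace ℝ X] {Z Z' : ℝ → X} {a b : ℝ}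

theorem norm_le_of_inner_deriv_lt_mul_deriv {B B' : ℝ → ℝ}
    (hZ : ∀ s ∈ Icc a b, HasDerivWithinAt Z (Z' s) (Icc a b) s)
    (hB : ∀ s ∈ Icc a b, HasDerivWithinAt B (B' s) (Icc a b) s) (hB0 : ∀ s ∈ Icc a b, 0 ≤ B s)
    (ha : ‖Z a‖ ≤ B a) (hlt : ∀ s ∈ Ico a b, ‖Z s‖ = B s → ⟪Z s, Z' s⟫ < B s * B' s) :
    ∀ s ∈ Icc a b, ‖Z s‖ ≤ B s := by
  intro s hs
  have hZsq : ∀ s ∈ Icc a b, HasDerivWithinAt (fun s => ‖Z s‖ ^ 2) (2 * ⟪Z s, Z' s⟫)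
      (Icc a b) s := fun s hs => (hZ s hs).norm_sq
  have hBsq : ∀ s ∈ Icc a b, HasDerivWithinAt (fun s => B s ^ 2) (2 * (B s * B' s))
      (Icc a b) s := fun s hs => by simpa [mul_assoc] using (hB s hs).fun_pow 2
  refine (sq_le_sq₀ (norm_nonneg _) (hB0 s hs)).1 ?_
  refine image_le_of_deriv_right_lt_deriv_boundary'
    (fun s hs => (hZsq s hs).continuousWithinAt)
    (fun s hs => (hZsq s (Ico_subset_Icc_self hs)).mono_of_mem_nhdsWithin
      (Icc_mem_nhdsGE_of_mem hs)) (pow_le_pow_left₀ (norm_nonneg _) ha 2)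
    (fun s hs => (hBsq s hs).continuousWithinAt)
    (fun s hs => (hBsq s (Ico_subset_Icc_self hs)).mono_of_mem_nhdsWithin
      (Icc_mem_nhdsGE_of_mem hs)) (fun s hs heq => ?_) hs
  have := hlt s hs ((sq_eq_sq₀ (norm_nonneg _) (hB0 s (Ico_subset_Icc_self hs))).1 heq)
  gcongr

theorem norm_le_mul_exp_of_inner_deriv_lt_of_norm_lt {G m : ℝ → ℝ} {ρ κ : ℝ}
    (hZ : ∀ s ∈ Icc a b, HasDerivWithinAt Z (Z' s) (Icc a b) s)
    (hG : ∀ s ∈ Icc a b, HasDerivWithinAt G (m s) (Icc a b) s) (hGa : G a = 0)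
    (hρ : ∀ s ∈ Icc a b, κ * Real.exp (G s) ≤ ρ) (ha : ‖Z a‖ < κ)
    (hlt : ∀ s ∈ Icc a b, Z s ≠ 0 → ‖Z s‖ ≤ ρ → ⟪Z s, Z' s⟫ < m s * ‖Z s‖ ^ 2) :
    ∀ s ∈ Icc a b, ‖Z s‖ ≤ κ * Real.exp (G s) := by
  have hκ : 0 < κ := (norm_nonneg _).trans_lt ha
  refine norm_le_of_inner_deriv_lt_mul_deriv hZ (fun s hs => (hG s hs).exp.const_mul κ)
    (fun s _ => by positivity) (by simpa [hGa] using ha.le) fun s hs heq => ?_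
  have hs' := Ico_subset_Icc_self hs
  have hpos : 0 < ‖Z s‖ := by rw [heq]; positivity
  calc ⟪Z s, Z' s⟫ < m s * ‖Z s‖ ^ 2 := hlt s hs' (norm_pos_iff.1 hpos) (heq.trans_le (hρ s hs'))
    _ = κ * Real.exp (G s) * (κ * (Real.exp (G s) * m s)) := by rw [heq]; ring

theorem norm_le_mul_exp_of_inner_deriv_lt {G m : ℝ → ℝ} {ρ C : ℝ}
    (hZ : ∀ s ∈ Icc a b, HasDerivWithinAt Z (Z' s) (Icc a b) s)
    (hG : ∀ s ∈ Icc a b, HasDerivWithinAt G (m s) (Icc a b) s) (hGa : G a = 0)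
    (hC : ∀ s ∈ Icc a b, Real.exp (G s) ≤ C) (ha : ‖Z a‖ * C < ρ)
    (hlt : ∀ s ∈ Icc a b, Z s ≠ 0 → ‖Z s‖ ≤ ρ → ⟪Z s, Z' s⟫ < m s * ‖Z s‖ ^ 2) :
    ∀ s ∈ Icc a b, ‖Z s‖ ≤ ‖Z a‖ * Real.exp (G s) := by
  intro s hs
  have hev : ∀ᶠ κ in 𝓝[>] ‖Z a‖, κ * C < ρ :=
    nhdsWithin_le_nhds ((continuous_mul_const C).continuousAt.eventually_lt_const ha)
  have htend : Tendsto (fun κ => κ * Real.exp (G s)) (𝓝[>] ‖Z a‖)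
      (𝓝 (‖Z a‖ * Real.exp (G s))) := (continuous_mul_const _).continuousWithinAt
  refine ge_of_tendsto htend ?_
  filter_upwards [hev, self_mem_nhdsWithin] with κ hκ hlt_κ
  refine norm_le_mul_exp_of_inner_deriv_lt_of_norm_lt hZ hG hGa (fun u hu => ?_) hlt_κ hlt s hs
  have : 0 ≤ κ := (norm_nonneg _).trans (le_of_lt hlt_κ)
  exact (mul_le_mul_of_nonneg_left (hC u hu) this).trans hκ.le

/-- The norm is not differentiable where `Z` vanishes, so it is regularized to
`√(‖Z s‖ ^ 2 + κ ^ 2)` before letting `κ` tend to `0`. -/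
theorem norm_left_le_norm_right_add_sub {B B' : ℝ → ℝ} (hab : a ≤ b)
    (hZ : ∀ s ∈ Icc a b, HasDerivWithinAt Z (Z' s) (Icc a b) s)
    (hB : ∀ s ∈ Icc a b, HasDerivWithinAt B (B' s) (Icc a b) s) (hB' : ∀ s ∈ Icc a b, 0 ≤ B' s)
    (hle : ∀ s ∈ Icc a b, -(B' s * ‖Z s‖) ≤ ⟪Z s, Z' s⟫) :
    ‖Z a‖ ≤ ‖Z b‖ + (B b - B a) := by
  refine le_of_forall_pos_le_add fun κ hκ => ?_
  let N : ℝ → ℝ := fun s => √(‖Z s‖ ^ 2 + κ ^ 2)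
  have hNpos : ∀ s, 0 < N s := fun s => Real.sqrt_pos.2 (by positivity)
  have hZN : ∀ s, ‖Z s‖ ≤ N s := fun s => Real.le_sqrt_of_sq_le (by linarith [sq_nonneg κ])
  have hderiv : ∀ s ∈ Icc a b,
      HasDerivWithinAt (fun s => N s + B s) (⟪Z s, Z' s⟫ / N s + B' s) (Icc a b) s := by
    intro s hs
    have hsqrt := ((hZ s hs).norm_sq.add_const (κ ^ 2)).sqrt (by positivity)
    rw [mul_div_mul_left _ _ two_ne_zero] at hsqrt
    exact hsqrt.add (hB s hs)
  have hmono : MonotoneOn (fun s => N s + B s) (Icc a b) := by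
    refine monotoneOn_of_hasDerivWithinAt_nonneg (convex_Icc a b)
      (fun s hs => (hderiv s hs).continuousWithinAt)
      (fun s hs => (hderiv s (interior_subset hs)).mono interior_subset) fun s hs => ?_
    have hs := interior_subset hs
    rw [← neg_le_iff_add_nonneg, le_div_iff₀ (hNpos s), neg_mul]
    exact (neg_le_neg (mul_le_mul_of_nonneg_left (hZN s) (hB' s hs))).trans (hle s hs)
  have hNb : N b ≤ ‖Z b‖ + κ :=
    Real.sqrt_le_iff.2 ⟨by positivity, by nlinarith [norm_nonneg (Z b)]⟩
  have hend : N a + B a ≤ N b + B b := hmono (left_mem_Icc.2 hab) (right_mem_Icc.2 hab) hab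
  linarith [hZN a]

end DifferentialInequalities

section RadialRetraction

variable {E : Type*} [NormedAddCommGroup E] [NormedSpace ℝ E] {ρ : ℝ}

/-- The retraction of `E` along rays onto the closed ball of radius `ρ > 0` centered at `c`.  It
extends a vector field from a tubular neighborhood of a curve to the whole space. -/
noncomputable def radialRetraction (c : E) (ρ : ℝ) (x : E) : E :=
  c + (ρ / max ‖x - c‖ ρ) • (x - c)

theorem radialRetraction_of_mem_closedBall (hρ : 0 < ρ) {c x : E} (hx : x ∈ closedBall c ρ) :
    radialRetraction c ρ x = x := by
  rw [radialRetraction, max_eq_right (mem_closedBall_iff_norm.1 hx), div_self hρ.ne', one_smul,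
    add_sub_cancel]

theorem radialRetraction_mem_closedBall (hρ : 0 < ρ) (c x : E) :
    radialRetraction c ρ x ∈ closedBall c ρ := by
  have hmax : 0 < max ‖x - c‖ ρ := lt_max_of_lt_right hρ
  rw [radialRetraction, mem_closedBall_iff_norm, add_sub_cancel_left, norm_smul,
    Real.norm_of_nonneg (by positivity), div_mul_eq_mul_div, div_le_iff₀ hmax]
  gcongr
  exact le_max_left _ _

theorem continuous_radialRetraction_left (hρ : 0 < ρ) (x : E) :
    Continuous fun c => radialRetraction c ρ x := by
  unfold radialRetraction
  have hmax : ∀ c, max ‖x - c‖ ρ ≠ 0 := fun c => (lt_max_of_lt_right hρ).ne'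
  fun_prop (disch := exact hmax _)

theorem lipschitzWith_radialRetraction (hρ : 0 < ρ) (c : E) :
    LipschitzWith 2 (radialRetraction c ρ) := by
  refine LipschitzWith.of_dist_le_mul fun x y => ?_
  rw [dist_eq_norm, dist_eq_norm, NNReal.coe_ofNat, ← sub_sub_sub_cancel_right x y c,
    radialRetraction, radialRetraction, add_sub_add_left_eq_sub]
  generalize x - c = x, y - c = y
  have hx : 0 < max ‖x‖ ρ := lt_max_of_lt_right hρ
  have hy : 0 < max ‖y‖ ρ := lt_max_of_lt_right hρ
  have hρx : ρ / max ‖x‖ ρ ≤ 1 := (div_le_one hx).2 (le_max_right _ _)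
  have hyy : ‖y‖ / max ‖y‖ ρ ≤ 1 := (div_le_one hy).2 (le_max_left _ _)
  have hmax : |max ‖y‖ ρ - max ‖x‖ ρ| ≤ ‖x - y‖ :=
    (abs_max_sub_max_le_abs _ _ _).trans (abs_sub_comm ‖x‖ ‖y‖ ▸ abs_norm_sub_norm_le x y)
  have hscalar : ‖ρ / max ‖x‖ ρ - ρ / max ‖y‖ ρ‖ * ‖y‖ ≤ ‖x - y‖ := by
    calc ‖ρ / max ‖x‖ ρ - ρ / max ‖y‖ ρ‖ * ‖y‖
        = ρ / max ‖x‖ ρ * (|max ‖y‖ ρ - max ‖x‖ ρ| * (‖y‖ / max ‖y‖ ρ)) := by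
          rw [div_sub_div _ _ hx.ne' hy.ne', mul_comm (max ‖x‖ ρ) ρ, ← mul_sub,
            Real.norm_eq_abs, abs_div, abs_mul, abs_of_pos hρ, abs_of_pos (mul_pos hx hy)]
          field_simp
      _ ≤ 1 * (‖x - y‖ * 1) := by gcongr
      _ = ‖x - y‖ := by ring
  calc ‖(ρ / max ‖x‖ ρ) • x - (ρ / max ‖y‖ ρ) • y‖
      = ‖(ρ / max ‖x‖ ρ) • (x - y) + (ρ / max ‖x‖ ρ - ρ / max ‖y‖ ρ) • y‖ := by
        congr 1; module
    _ ≤ ρ / max ‖x‖ ρ * ‖x - y‖ + ‖ρ / max ‖x‖ ρ - ρ / max ‖y‖ ρ‖ * ‖y‖ := by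
        refine (norm_add_le _ _).trans_eq ?_
        rw [norm_smul, norm_smul, Real.norm_of_nonneg (by positivity)]
    _ ≤ 1 * ‖x - y‖ + ‖x - y‖ := by gcongr
    _ = 2 * ‖x - y‖ := by ring

end RadialRetraction

section IntegralCurve

variable {E : Type*} [NormedAddCommGroup E] [NormedSpace ℝ E] {F : ℝ → E → E} {ξ : ℝ → E}
  {a b ρ : ℝ} {K : ℝ≥0}

theorem exists_isIntegralCurveOn_of_lipschitzWith [CompleteSpace E] {C : ℝ} (hab : a ≤ b)
    (hF : ∀ s ∈ Icc a b, LipschitzWith K (F s)) (hcont : ∀ x, ContinuousOn (F · x) (Icc a b))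
    (hC : ∀ s ∈ Icc a b, ∀ x, ‖F s x‖ ≤ C) (v : E) :
    ∃ η, IsIntegralCurveOn η F (Icc a b) ∧ η a = v := by
  have hC0 : 0 ≤ C := (norm_nonneg _).trans (hC a (left_mem_Icc.2 hab) 0)
  lift C to ℝ≥0 using hC0
  have hPL : IsPicardLindelof F (⟨a, left_mem_Icc.2 hab⟩ : Icc a b) v
      (C * (b - a).toNNReal) 0 C K :=
    { lipschitzOnWith := fun s hs => (hF s hs).lipschitzOnWith
      continuousOn := fun x _ => hcont x
      norm_le := fun s hs x _ => hC s hs x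
      mul_max_le := by simp [hab] }
  obtain ⟨η, hηa, hη⟩ := hPL.exists_eq_forall_mem_Icc_hasDerivWithinAt₀
  exact ⟨η, hη, hηa⟩

theorem dist_le_of_isIntegralCurveOn_of_lipschitzWith {η : ℝ → E}
    (hF : ∀ s ∈ Icc a b, LipschitzWith K (F s)) (hη : IsIntegralCurveOn η F (Icc a b))
    (hξ : IsIntegralCurveOn ξ F (Icc a b)) :
    ∀ s ∈ Icc a b, dist (η s) (ξ s) ≤ dist (η a) (ξ a) * Real.exp (K * (s - a)) := by
  have hright : ∀ {γ : ℝ → E}, IsIntegralCurveOn γ F (Icc a b) →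
      ∀ s ∈ Ico a b, HasDerivWithinAt γ (F s (γ s)) (Ici s) s := fun hγ s hs =>
    (hγ s (Ico_subset_Icc_self hs)).mono_of_mem_nhdsWithin (Icc_mem_nhdsGE_of_mem hs)
  exact dist_le_of_trajectories_ODE_of_mem (s := fun _ => univ)
    (fun s hs => (hF s (Ico_subset_Icc_self hs)).lipschitzOnWith) hη.continuousOn (hright hη)
    (fun _ _ => trivial) hξ.continuousOn (hright hξ) (fun _ _ => trivial) le_rfl

/-- Composing the vector field with the radial retraction onto the tube makes it globally Lipschitz,
so that the perturbed integral curve exists on all of `[a, b]`; by Grönwall's inequality it stays in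
the tube. -/
theorem exists_isIntegralCurveOn_of_lipschitzOnWith_closedBall [CompleteSpace E] (hab : a ≤ b)
    (hξ : IsIntegralCurveOn ξ F (Icc a b)) (hρ : 0 < ρ)
    (hcont : ContinuousOn (fun p : ℝ × E => F p.1 p.2)
      {p | p.1 ∈ Icc a b ∧ p.2 ∈ closedBall (ξ p.1) ρ})
    (hK : ∀ s ∈ Icc a b, LipschitzOnWith K (F s) (closedBall (ξ s) ρ)) {x : E}
    (hx : dist x (ξ a) * Real.exp (K * 2 * (b - a)) ≤ ρ) :
    ∃ η, IsIntegralCurveOn η F (Icc a b) ∧ η a = x ∧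
      ∀ s ∈ Icc a b, dist (η s) (ξ s) ≤ dist x (ξ a) * Real.exp (K * 2 * (b - a)) := by
  let G : ℝ → E → E := fun s y => F s (radialRetraction (ξ s) ρ y)
  have hmem : ∀ s y, radialRetraction (ξ s) ρ y ∈ closedBall (ξ s) ρ := fun s y =>
    radialRetraction_mem_closedBall hρ _ _
  have hG : ∀ s ∈ Icc a b, LipschitzWith (K * 2) (G s) := fun s hs => lipschitzOnWith_univ.1
    ((hK s hs).comp (lipschitzWith_radialRetraction hρ (ξ s)).lipschitzOnWith fun y _ => hmem s y)
  have hG_eq : ∀ {γ : ℝ → E} {s}, dist (γ s) (ξ s) ≤ ρ → G s (γ s) = F s (γ s) := fun h =>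
    congrArg (F _) (radialRetraction_of_mem_closedBall hρ h)
  have hξG : IsIntegralCurveOn ξ G (Icc a b) := fun s hs => by
    simpa only [hG_eq ((dist_self (ξ s)).trans_le hρ.le)] using hξ s hs
  obtain ⟨C, hC⟩ := isCompact_Icc.exists_bound_of_continuousOn
    (hcont.comp (continuousOn_id.prodMk hξ.continuousOn)
      fun s hs => ⟨hs, mem_closedBall_self hρ.le⟩ : ContinuousOn (fun s => F s (ξ s)) (Icc a b))
  have hGbound : ∀ s ∈ Icc a b, ∀ y, ‖G s y‖ ≤ C + K * ρ := fun s hs y => by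
    have hdist : dist (G s y) (F s (ξ s)) ≤ K * ρ :=
      ((hK s hs).dist_le_mul _ (hmem s y) _ (mem_closedBall_self hρ.le)).trans
        (mul_le_mul_of_nonneg_left (hmem s y) K.2)
    rw [dist_eq_norm] at hdist
    exact (norm_le_norm_add_norm_sub' _ (F s (ξ s))).trans (add_le_add (hC s hs) hdist)
  have hGcont : ∀ y, ContinuousOn (G · y) (Icc a b) := fun y =>
    hcont.comp (continuousOn_id.prodMk ((continuous_radialRetraction_left hρ y).comp_continuousOn
      hξ.continuousOn)) fun s hs => ⟨hs, hmem s y⟩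
  obtain ⟨η, hη, rfl⟩ := exists_isIntegralCurveOn_of_lipschitzWith hab hG hGcont hGbound x
  have hdist : ∀ s ∈ Icc a b, dist (η s) (ξ s) ≤ dist (η a) (ξ a) * Real.exp (K * 2 * (b - a)) :=
    fun s hs => (dist_le_of_isIntegralCurveOn_of_lipschitzWith hG hη hξG s hs).trans
      (by push_cast; gcongr; exact hs.2)
  exact ⟨η, fun s hs => hG_eq ((hdist s hs).trans hx) ▸ hη s hs, rfl, hdist⟩

end IntegralCurve

section Taylor

variable {E G : Type*} [NormedAddCommGroup E] [NormedSpace ℝ E] [NormedAddCommGroup G]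
  [NormedSpace ℝ G]

theorem norm_image_sub_sub_le_of_lipschitzOnWith_fderiv {f : E → G} {f' : E → E →L[ℝ] G}
    {M : ℝ≥0} {s : Set E} (hs : Convex ℝ s) (hf : ∀ x ∈ s, HasFDerivWithinAt f (f' x) s x)
    (hf' : LipschitzOnWith M f' s) {x y : E} (hx : x ∈ s) (hy : y ∈ s) :
    ‖f y - f x - f' x (y - x)‖ ≤ M / 2 * ‖y - x‖ ^ 2 := by
  have hmem : MapsTo (lineMap x y) (Icc (0 : ℝ) 1) s := fun t ht => hs.lineMap_mem hx hy ht
  let R : ℝ → G := fun t => f (lineMap x y t) - f x - t • f' x (y - x)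
  have hR : ∀ t ∈ Icc (0 : ℝ) 1,
      HasDerivWithinAt R (f' (lineMap x y t) (y - x) - f' x (y - x)) (Icc 0 1) t := by
    intro t ht
    have hcomp := (hf _ (hmem ht)).comp_hasDerivWithinAt t AffineMap.hasDerivWithinAt_lineMap hmem
    exact ((hcomp.sub_const (f x)).sub
      ((hasDerivWithinAt_id t (Icc 0 1)).smul_const (f' x (y - x)))).congr_deriv (by rw [one_smul])
  have hR' : ∀ t ∈ Icc (0 : ℝ) 1,
      ‖f' (lineMap x y t) (y - x) - f' x (y - x)‖ ≤ M * ‖y - x‖ ^ 2 * t := by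
    intro t ht
    calc ‖f' (lineMap x y t) (y - x) - f' x (y - x)‖
        ≤ ‖f' (lineMap x y t) - f' x‖ * ‖y - x‖ := (f' (lineMap x y t) - f' x).le_opNorm _
      _ ≤ M * dist (lineMap x y t) x * ‖y - x‖ := by
        rw [← dist_eq_norm]; gcongr; exact hf'.dist_le_mul _ (hmem ht) _ hx
      _ = M * ‖y - x‖ ^ 2 * t := by
        rw [dist_lineMap_left, Real.norm_of_nonneg ht.1, dist_comm, dist_eq_norm]; ring
  have hfinal := image_norm_le_of_norm_deriv_right_le_deriv_boundary' (f := R)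
    (B := fun t => M / 2 * ‖y - x‖ ^ 2 * t ^ 2) (B' := fun t => M * ‖y - x‖ ^ 2 * t)
    (fun t ht => (hR t ht).continuousWithinAt)
    (fun t ht => (hR t (Ico_subset_Icc_self ht)).mono_of_mem_nhdsWithin
      (Icc_mem_nhdsGE_of_mem ht)) (by simp [R]) (by fun_prop)
    (fun t _ => (((hasDerivAt_pow 2 t).const_mul (M / 2 * ‖y - x‖ ^ 2)).congr_deriv
      (by norm_num; ring)).hasDerivWithinAt)
    (fun t ht => hR' t (Ico_subset_Icc_self ht)) (right_mem_Icc.2 zero_le_one)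
  simpa [R] using hfinal

end Taylor

section TimeChange

variable {E V : Type*}

/-- The affine change of time `t = t₀ + σ * s`: if `ξ` is a solution of `ẋ = F(t,x)`, then
`s ↦ ξ (t₀ + σ * s)` is a solution of `ẋ = timeChange t₀ σ F s x`. -/
def timeChange [SMul ℝ V] (t₀ σ : ℝ) (F : ℝ → E → V) (s : ℝ) (x : E) : V :=
  σ • F (t₀ + σ * s) x

/-- The time-space domain of `timeChange t₀ σ F`, where `W` is that of `F`. -/
def timeChangeDomain (t₀ σ : ℝ) (W : Set (ℝ × E)) : Set (ℝ × E) :=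
  {p | (t₀ + σ * p.1, p.2) ∈ W}

theorem timeChange_timeChange_neg_one [AddCommGroup V] [Module ℝ V] (T : ℝ) (F : ℝ → E → V) :
    timeChange T (-1) (timeChange T (-1) F) = F := by
  ext s x
  simp [timeChange]

theorem timeChangeDomain_timeChangeDomain_neg_one (T : ℝ) (W : Set (ℝ × E)) :
    timeChangeDomain T (-1) (timeChangeDomain T (-1) W) = W := by
  ext ⟨s, x⟩
  simp [timeChangeDomain]

theorem mapsTo_add_neg_one_mul_Icc (T : ℝ) :
    MapsTo (fun s => T + -1 * s) (Icc 0 T) (Icc 0 T) := fun s hs => by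
  constructor <;> linarith [hs.1, hs.2]

end TimeChange

section C11

variable {E : Type*} [NormedAddCommGroup E] [NormedSpace ℝ E] {F : ℝ → E → E}
  {F' : ℝ → E → E →L[ℝ] E} {W : Set (ℝ × E)} {J : Set ℝ} {M : ℝ≥0}

/-- The time-dependent vector field `F` is of class `C^{1,1}` in its second argument on the open set
`W`, over the times in `J`: its partial derivative is `F'`, and `F'` is `M`-Lipschitz.  Since `W`
need not have convex slices, the latter is required on convex subsets of the slices only. -/
structure IsC11On (F : ℝ → E → E) (F' : ℝ → E → E →L[ℝ] E) (W : Set (ℝ × E)) (J : Set ℝ)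
    (M : ℝ≥0) : Prop where
  isOpen : IsOpen W
  continuousOn : ContinuousOn (fun p : ℝ × E => F p.1 p.2) (W ∩ J ×ˢ univ)
  continuousOn_fderiv : ContinuousOn (fun p : ℝ × E => F' p.1 p.2) (W ∩ J ×ˢ univ)
  hasFDerivAt : ∀ s ∈ J, ∀ x, (s, x) ∈ W → HasFDerivAt (F s) (F' s x) x
  lipschitzOnWith_fderiv : ∀ s ∈ J, ∀ C : Set E, Convex ℝ C → (∀ x ∈ C, (s, x) ∈ W) →
    LipschitzOnWith M (F' s) C

/-- The curve `ξ` is a solution of `ẋ = F(t,x)` over the times in `J` with graph in the domain `W`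
of `F`. -/
structure IsSolutionOn (F : ℝ → E → E) (W : Set (ℝ × E)) (J : Set ℝ) (ξ : ℝ → E) : Prop where
  mem : ∀ s ∈ J, (s, ξ s) ∈ W
  isIntegralCurveOn : IsIntegralCurveOn ξ F J

theorem IsC11On.timeChange (hF : IsC11On F F' W J M) {t₀ σ : ℝ} {J' : Set ℝ}
    (hJ : MapsTo (fun s => t₀ + σ * s) J' J) :
    IsC11On (timeChange t₀ σ F) (timeChange t₀ σ F') (timeChangeDomain t₀ σ W) J'
      (‖σ‖₊ * M) := by
  have hmaps : MapsTo (fun p : ℝ × E => (t₀ + σ * p.1, p.2))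
      (timeChangeDomain t₀ σ W ∩ J' ×ˢ univ) (W ∩ J ×ˢ univ) :=
    fun p hp => ⟨hp.1, hJ hp.2.1, trivial⟩
  exact
    { isOpen := hF.isOpen.preimage (by fun_prop)
      continuousOn := (hF.continuousOn.comp (by fun_prop) hmaps).const_smul σ
      continuousOn_fderiv := (hF.continuousOn_fderiv.comp (by fun_prop) hmaps).const_smul σ
      hasFDerivAt := fun s hs x hx => (hF.hasFDerivAt _ (hJ hs) x hx).const_smul σ
      lipschitzOnWith_fderiv := fun s hs C hC hCW => (lipschitzWith_smul σ).comp_lipschitzOnWith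
        (hF.lipschitzOnWith_fderiv _ (hJ hs) C hC hCW) }

theorem IsSolutionOn.timeChange {ξ : ℝ → E} (hξ : IsSolutionOn F W J ξ) {t₀ σ : ℝ} {J' : Set ℝ}
    (hJ : MapsTo (fun s => t₀ + σ * s) J' J) :
    IsSolutionOn (timeChange t₀ σ F) (timeChangeDomain t₀ σ W) J' (fun s => ξ (t₀ + σ * s)) where
  mem s hs := hξ.mem _ (hJ hs)
  isIntegralCurveOn s hs := by
    have haffine : HasDerivWithinAt (fun s => t₀ + σ * s) σ J' s := by
      simpa using ((hasDerivAt_id s).const_mul σ).const_add t₀ |>.hasDerivWithinAt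
    exact HasDerivWithinAt.scomp s (hξ.isIntegralCurveOn _ (hJ hs)) haffine hJ

theorem IsSolutionOn.continuousOn_comp {ξ : ℝ → E} (hξ : IsSolutionOn F W J ξ) {V : Type*}
    [TopologicalSpace V] {Φ : ℝ → E → V}
    (hΦ : ContinuousOn (fun p : ℝ × E => Φ p.1 p.2) (W ∩ J ×ˢ univ)) :
    ContinuousOn (fun s => Φ s (ξ s)) J :=
  hΦ.comp (f := fun s => (s, ξ s)) (continuousOn_id.prodMk hξ.isIntegralCurveOn.continuousOn)
    fun s hs => ⟨hξ.mem s hs, hs, trivial⟩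

theorem IsSolutionOn.exists_closedBall_subset {ξ : ℝ → E} (hξ : IsSolutionOn F W J ξ)
    (hJ : IsCompact J) (hW : IsOpen W) :
    ∃ ρ > 0, ∀ s ∈ J, ∀ x ∈ closedBall (ξ s) ρ, (s, x) ∈ W := by
  have hgraph : IsCompact ((fun s => (s, ξ s)) '' J) :=
    hJ.image_of_continuousOn (continuousOn_id.prodMk hξ.isIntegralCurveOn.continuousOn)
  obtain ⟨ρ, hρ, hsub⟩ := hgraph.exists_cthickening_subset_open hW
    (image_subset_iff.2 hξ.mem)
  refine ⟨ρ, hρ, fun s hs x hx => hsub ?_⟩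
  refine mem_cthickening_of_dist_le (s, x) (s, ξ s) ρ _ (mem_image_of_mem _ hs) ?_
  simpa [Prod.dist_eq, hρ.le] using hx

theorem IsC11On.calmOn_fderiv (hF : IsC11On F F' W J M) {s : ℝ} (hs : s ∈ J) :
    CalmOn M (F' s) {x | (s, x) ∈ W} := by
  intro x hx
  have hopen : IsOpen {x | (s, x) ∈ W} := hF.isOpen.preimage (by fun_prop)
  obtain ⟨ε, hε, hsub⟩ := isOpen_iff.1 hopen x hx
  filter_upwards [nhdsWithin_le_nhds (ball_mem_nhds x hε)] with y hy
  exact (hF.lipschitzOnWith_fderiv s hs _ (convex_ball x ε) hsub).dist_le_mul y hy x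
    (mem_ball_self hε)

theorem IsC11On.norm_image_sub_sub_le (hF : IsC11On F F' W J M) {s ρ : ℝ} {x y : E} (hs : s ∈ J)
    (hW : ∀ z ∈ closedBall x ρ, (s, z) ∈ W) (hy : y ∈ closedBall x ρ) :
    ‖F s y - F s x - F' s x (y - x)‖ ≤ M / 2 * ‖y - x‖ ^ 2 :=
  norm_image_sub_sub_le_of_lipschitzOnWith_fderiv (convex_closedBall x ρ)
    (fun z hz => (hF.hasFDerivAt s hs z (hW z hz)).hasFDerivWithinAt)
    (hF.lipschitzOnWith_fderiv s hs _ (convex_closedBall x ρ) hW)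
    (mem_closedBall_self (dist_nonneg.trans hy)) hy

theorem IsC11On.lipschitzOnWith_closedBall (hF : IsC11On F F' W J M) {s ρ : ℝ} {x : E} {L : ℝ≥0}
    (hs : s ∈ J) (hW : ∀ z ∈ closedBall x ρ, (s, z) ∈ W) (hL : ‖F' s x‖ ≤ L) (hρ : M * ρ ≤ 1) :
    LipschitzOnWith (L + 1) (F s) (closedBall x ρ) := by
  refine (convex_closedBall x ρ).lipschitzOnWith_of_nnnorm_hasFDerivWithin_le
    (fun z hz => (hF.hasFDerivAt s hs z (hW z hz)).hasFDerivWithinAt) fun z hz => ?_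
  have hdist := (hF.lipschitzOnWith_fderiv s hs _ (convex_closedBall x ρ) hW).dist_le_mul _ hz _
    (mem_closedBall_self (dist_nonneg.trans hz))
  rw [dist_eq_norm] at hdist
  rw [← NNReal.coe_le_coe, coe_nnnorm, NNReal.coe_add, NNReal.coe_one]
  calc ‖F' s z‖ ≤ ‖F' s x‖ + ‖F' s z - F' s x‖ := norm_le_norm_add_norm_sub' _ _
    _ ≤ L + M * dist z x := add_le_add hL hdist
    _ ≤ L + 1 := by gcongr; exact (mul_le_mul_of_nonneg_left hz M.2).trans hρ

theorem IsC11On.exists_isSolutionOn_near [CompleteSpace E] {T : ℝ} (hT : 0 ≤ T)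
    (hF : IsC11On F F' W (Icc 0 T) M) {ξ : ℝ → E} (hξ : IsSolutionOn F W (Icc 0 T) ξ) {L : ℝ≥0}
    (hL : ∀ s ∈ Icc 0 T, ‖F' s (ξ s)‖ ≤ L) :
    ∀ᶠ x in 𝓝 (ξ 0), ∃ η, IsSolutionOn F W (Icc 0 T) η ∧ η 0 = x ∧
      ∀ s ∈ Icc 0 T, dist (η s) (ξ s) ≤ Real.exp ((L + 1) * 2 * T) * dist x (ξ 0) := by
  obtain ⟨ρ₀, hρ₀, htube₀⟩ := hξ.exists_closedBall_subset isCompact_Icc hF.isOpen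
  obtain ⟨ρ, hρ, hρmin⟩ := exists_between (lt_min hρ₀ (by positivity : (0 : ℝ) < 1 / (M + 1)))
  have htube : ∀ s ∈ Icc 0 T, ∀ x ∈ closedBall (ξ s) ρ, (s, x) ∈ W := fun s hs x hx =>
    htube₀ s hs x (closedBall_subset_closedBall (hρmin.le.trans (min_le_left _ _)) hx)
  have hMρ : M * ρ ≤ 1 := by
    have := hρmin.le.trans (min_le_right _ _)
    rw [le_div_iff₀ (by positivity)] at this
    linarith
  have hsmall : Tendsto (fun x => dist x (ξ 0) * Real.exp ((L + 1) * 2 * T)) (𝓝 (ξ 0)) (𝓝 0) := by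
    have : Continuous fun x => dist x (ξ 0) * Real.exp ((L + 1) * 2 * T) := by fun_prop
    simpa using this.tendsto (ξ 0)
  filter_upwards [hsmall.eventually_lt_const hρ] with x hx
  obtain ⟨η, hη, hη0, hdist⟩ := exists_isIntegralCurveOn_of_lipschitzOnWith_closedBall
    (K := L + 1) (x := x) hT hξ.isIntegralCurveOn hρ
    (hF.continuousOn.mono fun p hp => ⟨htube p.1 hp.1 p.2 hp.2, hp.1, trivial⟩)
    (fun s hs => hF.lipschitzOnWith_closedBall hs (htube s hs) (hL s hs) hMρ)
    (by simpa using hx.le)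
  have hdist' : ∀ s ∈ Icc 0 T, dist (η s) (ξ s) ≤ dist x (ξ 0) * Real.exp ((L + 1) * 2 * T) := by
    simpa using hdist
  exact ⟨η, ⟨fun s hs => htube s hs _ ((hdist' s hs).trans hx.le), hη⟩, hη0,
    fun s hs => (hdist' s hs).trans_eq (mul_comm _ _)⟩

theorem IsC11On.exists_isSolutionOn_near_right [CompleteSpace E] {T : ℝ} (hT : 0 ≤ T)
    (hF : IsC11On F F' W (Icc 0 T) M) {ξ : ℝ → E} (hξ : IsSolutionOn F W (Icc 0 T) ξ) {L : ℝ≥0}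
    (hL : ∀ s ∈ Icc 0 T, ‖F' s (ξ s)‖ ≤ L) :
    ∀ᶠ y in 𝓝 (ξ T), ∃ η, IsSolutionOn F W (Icc 0 T) η ∧ η T = y ∧
      ∀ s ∈ Icc 0 T, dist (η s) (ξ s) ≤ Real.exp ((L + 1) * 2 * T) * dist y (ξ T) := by
  have hmaps := mapsTo_add_neg_one_mul_Icc T
  have hnear := (hF.timeChange hmaps).exists_isSolutionOn_near hT (hξ.timeChange hmaps) (L := L)
    fun s hs => by simpa [_root_.timeChange] using hL _ (hmaps hs)
  simp only [mul_zero, add_zero] at hnear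
  filter_upwards [hnear] with y hy
  obtain ⟨η, hη, hη0, hdist⟩ := hy
  have hrev := hη.timeChange hmaps
  rw [timeChange_timeChange_neg_one, timeChangeDomain_timeChangeDomain_neg_one] at hrev
  exact ⟨_, hrev, by simpa, fun s hs => by simpa using hdist _ (hmaps hs)⟩

end C11

section HilbertODE

variable {X : Type*} [NormedAddCommGroup X] [InnerProductSpace ℝ X]

theorem inner_lt_muPlus_add_mul_sq {A : X →L[ℝ] X} {v w : X} {M ε : ℝ} (hv : v ≠ 0)
    (hw : ‖w - A v‖ ≤ M / 2 * ‖v‖ ^ 2) (hε : M / 2 * ‖v‖ < ε) :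
    ⟪v, w⟫ < (muPlus A + ε) * ‖v‖ ^ 2 := by
  have : 0 < ‖v‖ := norm_pos_iff.2 hv
  calc ⟪v, w⟫ = ⟪A v, v⟫ + ⟪v, w - A v⟫ := by rw [inner_sub_right, real_inner_comm v]; ring
    _ ≤ muPlus A * ‖v‖ ^ 2 + ‖v‖ * (M / 2 * ‖v‖ ^ 2) :=
      add_le_add (inner_apply_self_le_muPlus_mul_sq A v)
        ((real_inner_le_norm _ _).trans (by gcongr))
    _ = (muPlus A + M / 2 * ‖v‖) * ‖v‖ ^ 2 := by ring
    _ < (muPlus A + ε) * ‖v‖ ^ 2 := by gcongr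

theorem neg_norm_mul_norm_le_inner_apply_add_sub_muMinus_smul (A : X →L[ℝ] X) (v w : X) :
    -(‖w‖ * ‖v‖) ≤ ⟪v, A v + w - muMinus A • v⟫ := by
  have hA := muMinus_mul_sq_le_inner_apply_self A v
  have hw := neg_le_of_abs_le (abs_real_inner_le_norm v w)
  rw [inner_sub_right, inner_add_right, real_inner_smul_right, real_inner_self_eq_norm_sq,
    real_inner_comm (A v)]
  linarith

theorem norm_left_le_of_hasDerivWithinAt_apply_add {ω R : ℝ → X} {A : ℝ → X →L[ℝ] X}
    {D B B' : ℝ → ℝ} {a b : ℝ} (hab : a ≤ b)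
    (hω : ∀ s ∈ Icc a b, HasDerivWithinAt ω (A s (ω s) + R s) (Icc a b) s) (hDa : D a = 0)
    (hD : ∀ s ∈ Icc a b, HasDerivWithinAt D (muMinus (A s)) (Icc a b) s)
    (hB : ∀ s ∈ Icc a b, HasDerivWithinAt B (B' s) (Icc a b) s)
    (hR : ∀ s ∈ Icc a b, Real.exp (-D s) * ‖R s‖ ≤ B' s) :
    ‖ω a‖ ≤ Real.exp (-D b) * ‖ω b‖ + (B b - B a) := by
  let Z : ℝ → X := fun s => Real.exp (-D s) • ω s
  let Z' : ℝ → X := fun s => Real.exp (-D s) • (A s (ω s) + R s - muMinus (A s) • ω s)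
  have hZ : ∀ s ∈ Icc a b, HasDerivWithinAt Z (Z' s) (Icc a b) s := fun s hs =>
    ((hD s hs).fun_neg.exp.fun_smul (hω s hs)).congr_deriv (by simp only [Z']; module)
  have hnorm : ∀ s, ‖Z s‖ = Real.exp (-D s) * ‖ω s‖ := fun s => by
    simp only [Z, norm_smul, Real.norm_eq_abs, Real.abs_exp]
  have hinner : ∀ s ∈ Icc a b, -(B' s * ‖Z s‖) ≤ ⟪Z s, Z' s⟫ := by
    intro s hs
    calc -(B' s * ‖Z s‖) ≤ -(Real.exp (-D s) * ‖R s‖ * ‖Z s‖) := by gcongr; exact hR s hs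
      _ = Real.exp (-D s) * (Real.exp (-D s) * -(‖R s‖ * ‖ω s‖)) := by rw [hnorm]; ring
      _ ≤ Real.exp (-D s) * (Real.exp (-D s) *
          ⟪ω s, A s (ω s) + R s - muMinus (A s) • ω s⟫) := by
        gcongr; exact neg_norm_mul_norm_le_inner_apply_add_sub_muMinus_smul _ _ _
      _ = ⟪Z s, Z' s⟫ := by simp only [Z, Z', real_inner_smul_left, real_inner_smul_right]
  have := norm_left_le_norm_right_add_sub hab hZ hB
    (fun s hs => (by positivity : (0 : ℝ) ≤ _).trans (hR s hs)) hinner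
  simpa only [hnorm, hDa, neg_zero, Real.exp_zero, one_mul] using this

variable {F : ℝ → X → X} {F' : ℝ → X → X →L[ℝ] X} {W : Set (ℝ × X)} {M : ℝ≥0} {T : ℝ}
  {ξ : ℝ → X}

theorem IsC11On.exists_norm_sub_le_mul_exp (hF : IsC11On F F' W (Icc 0 T) M)
    (hξ : IsSolutionOn F W (Icc 0 T) ξ) {E : ℝ → ℝ} (hE0 : E 0 = 0)
    (hE : ∀ s ∈ Icc 0 T, HasDerivWithinAt E (muPlus (F' s (ξ s))) (Icc 0 T) s)
    {ε ρ : ℝ} (hε : 0 < ε) (hρ : 0 < ρ) :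
    ∃ δ > 0, ∀ η, IsSolutionOn F W (Icc 0 T) η → ‖η 0 - ξ 0‖ < δ → ∀ s ∈ Icc 0 T,
      ‖η s - ξ s‖ ≤ ρ ∧ ‖η s - ξ s‖ ≤ ‖η 0 - ξ 0‖ * Real.exp (E s + ε * s) := by
  obtain ⟨ρ₀, hρ₀, htube⟩ := hξ.exists_closedBall_subset isCompact_Icc hF.isOpen
  obtain ⟨ρ₁, hρ₁, hρ₁ρ, hρ₁ρ₀, hMρ₁⟩ : ∃ ρ₁ > 0, ρ₁ ≤ ρ ∧ ρ₁ ≤ ρ₀ ∧ M / 2 * ρ₁ < ε := by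
    have hlim : ∀ᶠ ρ₁ in 𝓝[>] (0 : ℝ), M / 2 * ρ₁ < ε :=
      nhdsWithin_le_nhds ((continuous_const_mul _).continuousAt.eventually_lt_const (by simpa))
    obtain ⟨ρ₁, hM, hpos, hle⟩ := (hlim.and (Ioc_mem_nhdsGT (lt_min hρ hρ₀))).exists
    exact ⟨ρ₁, hpos, hle.trans (min_le_left _ _), hle.trans (min_le_right _ _), hM⟩
  have hG : ∀ s ∈ Icc 0 T, HasDerivWithinAt (fun s => E s + ε * s) (muPlus (F' s (ξ s)) + ε)
      (Icc 0 T) s := fun s hs => (hE s hs).add <| by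
    simpa using ((hasDerivAt_id s).const_mul ε).hasDerivWithinAt
  obtain ⟨C, hC⟩ := isCompact_Icc.bddAbove_image
    fun s hs => (hG s hs).exp.continuousWithinAt
  have hC : ∀ s ∈ Icc 0 T, Real.exp (E s + ε * s) ≤ max C 1 :=
    fun s hs => (hC (mem_image_of_mem _ hs)).trans (le_max_left _ _)
  have hC0 : 0 < max C 1 := by positivity
  refine ⟨ρ₁ / max C 1, by positivity, fun η hη hδ => ?_⟩
  rw [lt_div_iff₀ hC0] at hδ
  have hgrowth := norm_le_mul_exp_of_inner_deriv_lt (Z := fun s => η s - ξ s)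
    (fun s hs => (hη.isIntegralCurveOn s hs).sub (hξ.isIntegralCurveOn s hs)) hG (by simp [hE0])
    hC hδ fun s hs hne hle => by
      refine inner_lt_muPlus_add_mul_sq hne (hF.norm_image_sub_sub_le hs
        (fun z hz => htube s hs z (closedBall_subset_closedBall hρ₁ρ₀ hz)) ?_) ?_
      · rwa [mem_closedBall, dist_eq_norm]
      · exact (by gcongr : (M : ℝ) / 2 * ‖η s - ξ s‖ ≤ M / 2 * ρ₁).trans_lt hMρ₁
  refine fun s hs => ⟨(hgrowth s hs).trans ?_, hgrowth s hs⟩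
  exact ((mul_le_mul_of_nonneg_left (hC s hs) (norm_nonneg _)).trans hδ.le).trans hρ₁ρ

theorem IsC11On.exists_hasDerivWithinAt_muPlus (hT : 0 ≤ T) (hF : IsC11On F F' W (Icc 0 T) M)
    (hξ : IsSolutionOn F W (Icc 0 T) ξ) :
    ∃ E : ℝ → ℝ, E 0 = 0 ∧
      ∀ s ∈ Icc 0 T, HasDerivWithinAt E (muPlus (F' s (ξ s))) (Icc 0 T) s :=
  exists_hasDerivWithinAt_Icc_of_continuousOn hT
    (continuous_muPlus.comp_continuousOn (hξ.continuousOn_comp hF.continuousOn_fderiv))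

theorem IsC11On.exists_hasDerivWithinAt_muMinus (hT : 0 ≤ T) (hF : IsC11On F F' W (Icc 0 T) M)
    (hξ : IsSolutionOn F W (Icc 0 T) ξ) :
    ∃ D : ℝ → ℝ, D 0 = 0 ∧
      ∀ s ∈ Icc 0 T, HasDerivWithinAt D (muMinus (F' s (ξ s))) (Icc 0 T) s :=
  exists_hasDerivWithinAt_Icc_of_continuousOn hT
    (continuous_muMinus.comp_continuousOn (hξ.continuousOn_comp hF.continuousOn_fderiv))

theorem IsC11On.exists_dist_le_mul_dist (hT : 0 ≤ T) (hF : IsC11On F F' W (Icc 0 T) M)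
    (hξ : IsSolutionOn F W (Icc 0 T) ξ) {m : ℝ} (hm : ∀ s ∈ Icc 0 T, muPlus (F' s (ξ s)) ≤ m) :
    ∃ δ > 0, ∀ η, IsSolutionOn F W (Icc 0 T) η → dist (η 0) (ξ 0) < δ → ∀ s ∈ Icc 0 T,
      dist (η s) (ξ s) ≤ Real.exp ((|m| + 1) * T) * dist (η 0) (ξ 0) := by
  obtain ⟨E, hE0, hE⟩ := hF.exists_hasDerivWithinAt_muPlus hT hξ
  obtain ⟨δ, hδ, hgrowth⟩ := hF.exists_norm_sub_le_mul_exp hξ hE0 hE one_pos one_pos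
  simp only [dist_eq_norm]
  refine ⟨δ, hδ, fun η hη hη0 s hs => ?_⟩
  have hEs : E s + 1 * s ≤ (|m| + 1) * T :=
    calc E s + 1 * s ≤ |m| * s + 1 * s := by
          simpa [hE0] using le_mul_sub_of_hasDerivWithinAt_le hE
            (fun s hs => (hm s hs).trans (le_abs_self m)) s hs
      _ = (|m| + 1) * s := by ring
      _ ≤ (|m| + 1) * T := by gcongr; exact hs.2
  calc ‖η s - ξ s‖ ≤ ‖η 0 - ξ 0‖ * Real.exp (E s + 1 * s) := (hgrowth η hη hη0 s hs).2
    _ ≤ Real.exp ((|m| + 1) * T) * ‖η 0 - ξ 0‖ := by rw [mul_comm]; gcongr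

theorem IsC11On.eqOn_of_left_eq (hF : IsC11On F F' W (Icc 0 T) M) {η : ℝ → X}
    (hη : IsSolutionOn F W (Icc 0 T) η) (hξ : IsSolutionOn F W (Icc 0 T) ξ) (h0 : η 0 = ξ 0) :
    EqOn η ξ (Icc 0 T) := by
  intro s hs
  obtain ⟨E, hE0, hE⟩ := hF.exists_hasDerivWithinAt_muPlus (hs.1.trans hs.2) hξ
  obtain ⟨δ, hδ, hgrowth⟩ := hF.exists_norm_sub_le_mul_exp hξ hE0 hE one_pos one_pos
  simpa [h0, sub_eq_zero] using (hgrowth η hη (by simpa [h0]) s hs).2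

theorem IsC11On.eqOn_of_right_eq (hF : IsC11On F F' W (Icc 0 T) M) {η : ℝ → X}
    (hη : IsSolutionOn F W (Icc 0 T) η) (hξ : IsSolutionOn F W (Icc 0 T) ξ) (hT : η T = ξ T) :
    EqOn η ξ (Icc 0 T) := fun s hs => by
  have hmaps := mapsTo_add_neg_one_mul_Icc T
  simpa using (hF.timeChange hmaps).eqOn_of_left_eq (hη.timeChange hmaps) (hξ.timeChange hmaps)
    (by simpa) (hmaps hs)

/-- The factor `exp (M₁ * s)` is the product of the decay `exp (-D s)` and of the growth
`exp (E s) ^ 2` of `‖η s - ξ s‖ ^ 2`, where `E` is an antiderivative of `muPlus`. -/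
theorem IsC11On.exists_exp_neg_mul_norm_sub_sub_le (hF : IsC11On F F' W (Icc 0 T) M)
    (hξ : IsSolutionOn F W (Icc 0 T) ξ) {M₁ : ℝ}
    (hM₁ : ∀ s ∈ Icc 0 T, 2 * muPlus (F' s (ξ s)) - muMinus (F' s (ξ s)) ≤ M₁) {D : ℝ → ℝ}
    (hD0 : D 0 = 0) (hD : ∀ s ∈ Icc 0 T, HasDerivWithinAt D (muMinus (F' s (ξ s))) (Icc 0 T) s)
    (hT : 0 ≤ T) {ε : ℝ} (hε : 0 < ε) :
    ∃ δ > 0, ∀ η, IsSolutionOn F W (Icc 0 T) η → ‖η 0 - ξ 0‖ < δ → ∀ s ∈ Icc 0 T,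
      Real.exp (-D s) * ‖F s (η s) - F s (ξ s) - F' s (ξ s) (η s - ξ s)‖ ≤
        M / 2 * Real.exp (2 * ε * T) * ‖η 0 - ξ 0‖ ^ 2 * Real.exp (M₁ * s) := by
  obtain ⟨ρ, hρ, htube⟩ := hξ.exists_closedBall_subset isCompact_Icc hF.isOpen
  obtain ⟨E, hE0, hE⟩ := hF.exists_hasDerivWithinAt_muPlus hT hξ
  obtain ⟨δ, hδ, hgrowth⟩ := hF.exists_norm_sub_le_mul_exp hξ hE0 hE hε hρ
  refine ⟨δ, hδ, fun η hη hη0 s hs => ?_⟩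
  obtain ⟨hηρ, hηexp⟩ := hgrowth η hη hη0 s hs
  have hED : 2 * E s - D s ≤ M₁ * s := by
    simpa [hE0, hD0] using le_mul_sub_of_hasDerivWithinAt_le
      (fun s hs => ((hE s hs).const_mul 2).sub (hD s hs)) hM₁ s hs
  have hexp : -D s + 2 * (E s + ε * s) ≤ 2 * ε * T + M₁ * s := by
    have := mul_le_mul_of_nonneg_left hs.2 hε.le
    linarith
  calc Real.exp (-D s) * ‖F s (η s) - F s (ξ s) - F' s (ξ s) (η s - ξ s)‖
      ≤ Real.exp (-D s) * (M / 2 * (‖η 0 - ξ 0‖ * Real.exp (E s + ε * s)) ^ 2) := by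
        gcongr
        refine (hF.norm_image_sub_sub_le hs (htube s hs) ?_).trans (by gcongr)
        rwa [mem_closedBall, dist_eq_norm]
    _ = M / 2 * ‖η 0 - ξ 0‖ ^ 2 * Real.exp (-D s + 2 * (E s + ε * s)) := by
        rw [Real.exp_add (-D s), two_mul (E s + ε * s), Real.exp_add (E s + ε * s)]; ring
    _ ≤ M / 2 * ‖η 0 - ξ 0‖ ^ 2 * Real.exp (2 * ε * T + M₁ * s) := by gcongr
    _ = M / 2 * Real.exp (2 * ε * T) * ‖η 0 - ξ 0‖ ^ 2 * Real.exp (M₁ * s) := by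
        rw [Real.exp_add]; ring

theorem IsC11On.exists_norm_add_sub_two_smul_le (hT : 0 ≤ T) (hF : IsC11On F F' W (Icc 0 T) M)
    (hξ : IsSolutionOn F W (Icc 0 T) ξ) {M₁ : ℝ}
    (hM₁ : ∀ s ∈ Icc 0 T, 2 * muPlus (F' s (ξ s)) - muMinus (F' s (ξ s)) ≤ M₁) {ε : ℝ}
    (hε : 0 < ε) :
    ∃ δ > 0, ∀ η₁ η₂, IsSolutionOn F W (Icc 0 T) η₁ → IsSolutionOn F W (Icc 0 T) η₂ →
      ‖η₁ 0 - ξ 0‖ < δ → ‖η₂ 0 - ξ 0‖ < δ → η₁ T + η₂ T = (2 : ℝ) • ξ T →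
      ‖η₁ 0 + η₂ 0 - (2 : ℝ) • ξ 0‖ ≤ M / 2 * Real.exp (2 * ε * T) *
        (‖η₁ 0 - ξ 0‖ ^ 2 + ‖η₂ 0 - ξ 0‖ ^ 2) * ∫ u in 0..T, Real.exp (M₁ * u) := by
  obtain ⟨D, hD0, hD⟩ := hF.exists_hasDerivWithinAt_muMinus hT hξ
  obtain ⟨δ, hδ, hrem⟩ := hF.exists_exp_neg_mul_norm_sub_sub_le hξ hM₁ hD0 hD hT hε
  refine ⟨δ, hδ, fun η₁ η₂ hη₁ hη₂ hδ₁ hδ₂ hend => ?_⟩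
  let ω : ℝ → X := fun s => η₁ s + η₂ s - (2 : ℝ) • ξ s
  let R : (ℝ → X) → ℝ → X := fun η s => F s (η s) - F s (ξ s) - F' s (ξ s) (η s - ξ s)
  set c : ℝ := M / 2 * Real.exp (2 * ε * T) * (‖η₁ 0 - ξ 0‖ ^ 2 + ‖η₂ 0 - ξ 0‖ ^ 2) with hc
  have hω : ∀ s ∈ Icc 0 T,
      HasDerivWithinAt ω (F' s (ξ s) (ω s) + (R η₁ s + R η₂ s)) (Icc 0 T) s := fun s hs =>
    (((hη₁.isIntegralCurveOn s hs).add (hη₂.isIntegralCurveOn s hs)).sub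
      ((hξ.isIntegralCurveOn s hs).const_smul (2 : ℝ))).congr_deriv <| by
        simp only [ω, R, map_sub, map_add, map_smul]; module
  have hB : ∀ s ∈ Icc 0 T, HasDerivWithinAt (fun s => c * ∫ u in 0..s, Real.exp (M₁ * u))
      (c * Real.exp (M₁ * s)) (Icc 0 T) s := fun s _ =>
    (((by fun_prop : Continuous fun u => Real.exp (M₁ * u)).integral_hasStrictDerivAt
      0 s).hasDerivAt.const_mul c).hasDerivWithinAt
  have hR : ∀ s ∈ Icc 0 T, Real.exp (-D s) * ‖R η₁ s + R η₂ s‖ ≤ c * Real.exp (M₁ * s) := by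
    intro s hs
    calc Real.exp (-D s) * ‖R η₁ s + R η₂ s‖
        ≤ Real.exp (-D s) * ‖R η₁ s‖ + Real.exp (-D s) * ‖R η₂ s‖ := by
          rw [← mul_add]; gcongr; exact norm_add_le _ _
      _ ≤ _ := add_le_add (hrem η₁ hη₁ hδ₁ s hs) (hrem η₂ hη₂ hδ₂ s hs)
      _ = c * Real.exp (M₁ * s) := by rw [hc]; ring
  simpa [ω, hend] using norm_left_le_of_hasDerivWithinAt_apply_add hT hω hD0 hD hB hR

end HilbertODE

section Flow

variable {X : Type*} [NormedAddCommGroup X] {F : ℝ → X → X} {W : Set (ℝ × X)} {T : ℝ}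
  {φ : ℝ → X → X} {S : Set X}

/-- On the times `Icc 0 T`, the curves `φ · x` are solutions of `ẋ = F(t,x)` with initial value `x`
at time `0`, for the initial values `x` in `S`. -/
structure IsFlowOn [NormedSpace ℝ X] (F : ℝ → X → X) (W : Set (ℝ × X)) (T : ℝ) (S : Set X)
    (φ : ℝ → X → X) : Prop where
  zero_apply : ∀ x ∈ S, φ 0 x = x
  isSolutionOn : ∀ x ∈ S, IsSolutionOn F W (Icc 0 T) fun s => φ s x

theorem IsFlowOn.mono [NormedSpace ℝ X] (hφ : IsFlowOn F W T S φ) {S' : Set X} (hS : S' ⊆ S) :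
    IsFlowOn F W T S' φ :=
  ⟨fun x hx => hφ.zero_apply x (hS hx), fun x hx => hφ.isSolutionOn x (hS hx)⟩

variable [InnerProductSpace ℝ X] {F' : ℝ → X → X →L[ℝ] X} {M : ℝ≥0} {m s : ℝ}

theorem IsFlowOn.calmOn (hφ : IsFlowOn F W T S φ) (hF : IsC11On F F' W (Icc 0 T) M)
    (hm : ∀ s ∈ Icc 0 T, ∀ x, (s, x) ∈ W → muPlus (F' s x) ≤ m) (hs : s ∈ Icc 0 T) :
    CalmOn (Real.exp ((|m| + 1) * T)).toNNReal (φ s) S := by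
  intro x hx
  have hsol := hφ.isSolutionOn x hx
  obtain ⟨δ, hδ, hdist⟩ := hF.exists_dist_le_mul_dist (hs.1.trans hs.2) hsol
    fun s hs => hm s hs _ (hsol.mem s hs)
  rw [Real.coe_toNNReal _ (Real.exp_pos _).le]
  filter_upwards [nhdsWithin_le_nhds (ball_mem_nhds x hδ), self_mem_nhdsWithin] with y hy hyS
  simpa [hφ.zero_apply, hx, hyS] using hdist _ (hφ.isSolutionOn y hyS)
    (by simpa [hφ.zero_apply, hx, hyS] using hy) s hs

theorem IsFlowOn.exists_norm_fderiv_le (hφ : IsFlowOn F W T S φ)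
    (hF : IsC11On F F' W (Icc 0 T) M)
    (hm : ∀ s ∈ Icc 0 T, ∀ x, (s, x) ∈ W → muPlus (F' s x) ≤ m) (hS : Convex ℝ S)
    (hSbdd : Bornology.IsBounded S) :
    ∃ L : ℝ≥0, ∀ x ∈ S, ∀ s ∈ Icc 0 T, ‖F' s (φ s x)‖ ≤ L := by
  rcases S.eq_empty_or_nonempty with rfl | ⟨x₀, hx₀⟩
  · simp
  obtain ⟨B, hB⟩ := isCompact_Icc.bddAbove_image
    ((hφ.isSolutionOn x₀ hx₀).continuousOn_comp hF.continuousOn_fderiv).norm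
  obtain ⟨R, hR⟩ := hSbdd.subset_closedBall x₀
  set C : ℝ≥0 := M * (Real.exp ((|m| + 1) * T)).toNNReal
  refine ⟨(B + C * R).toNNReal, fun x hx s hs => le_trans ?_ (Real.le_coe_toNNReal _)⟩
  have hlip : LipschitzOnWith C (F' s ∘ φ s) S :=
    ((hF.calmOn_fderiv hs).comp_lipschitzOnWith ((hφ.calmOn hF hm hs).lipschitzOnWith hS)
      fun x hx => (hφ.isSolutionOn x hx).mem s hs).lipschitzOnWith hS
  calc ‖F' s (φ s x)‖ ≤ ‖F' s (φ s x₀)‖ + ‖F' s (φ s x) - F' s (φ s x₀)‖ :=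
        norm_le_norm_add_norm_sub' _ _
    _ ≤ B + C * R := add_le_add (hB (mem_image_of_mem _ hs)) <| by
        rw [← dist_eq_norm]
        exact (hlip.dist_le_mul x hx x₀ hx₀).trans (by gcongr; exact hR hx)

theorem IsFlowOn.injOn (hφ : IsFlowOn F W T S φ) (hF : IsC11On F F' W (Icc 0 T) M)
    (hT : 0 ≤ T) : InjOn (φ T) S := fun x hx y hy hxy => by
  simpa [hφ.zero_apply, hx, hy] using hF.eqOn_of_right_eq (hφ.isSolutionOn x hx)
    (hφ.isSolutionOn y hy) hxy (left_mem_Icc.2 hT)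

theorem IsFlowOn.eventually_exists_apply_eq [CompleteSpace X] (hφ : IsFlowOn F W T S φ)
    (hF : IsC11On F F' W (Icc 0 T) M) (hT : 0 ≤ T) (hS : IsOpen S) {L : ℝ≥0}
    (hL : ∀ x ∈ S, ∀ s ∈ Icc 0 T, ‖F' s (φ s x)‖ ≤ L) {x : X} (hx : x ∈ S) :
    ∀ᶠ y in 𝓝 (φ T x), ∃ x' ∈ S, φ T x' = y ∧
      dist x' x ≤ Real.exp ((L + 1) * 2 * T) * dist y (φ T x) := by
  obtain ⟨ρ, hρ, hsub⟩ := isOpen_iff.1 hS x hx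
  have hsmall : Tendsto (fun y => Real.exp ((L + 1) * 2 * T) * dist y (φ T x)) (𝓝 (φ T x))
      (𝓝 0) := by
    have : Continuous fun y => Real.exp ((L + 1) * 2 * T) * dist y (φ T x) := by fun_prop
    simpa using this.tendsto (φ T x)
  filter_upwards [hF.exists_isSolutionOn_near_right hT (hφ.isSolutionOn x hx) (hL x hx),
    hsmall.eventually_lt_const hρ] with y hy hyρ
  obtain ⟨η, hη, hηT, hdist⟩ := hy
  have hdist0 : dist (η 0) x ≤ Real.exp ((L + 1) * 2 * T) * dist y (φ T x) := by
    simpa [hφ.zero_apply x hx] using hdist 0 (left_mem_Icc.2 hT)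
  have hη0 : η 0 ∈ S := hsub (hdist0.trans_lt hyρ)
  refine ⟨η 0, hη0, ?_, hdist0⟩
  rw [← hηT]
  exact hF.eqOn_of_left_eq (hφ.isSolutionOn _ hη0) hη (hφ.zero_apply _ hη0) (right_mem_Icc.2 hT)

theorem IsFlowOn.isOpen_image [CompleteSpace X] (hφ : IsFlowOn F W T S φ)
    (hF : IsC11On F F' W (Icc 0 T) M) (hT : 0 ≤ T) (hS : IsOpen S) {L : ℝ≥0}
    (hL : ∀ x ∈ S, ∀ s ∈ Icc 0 T, ‖F' s (φ s x)‖ ≤ L) : IsOpen (φ T '' S) := by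
  rw [isOpen_iff_mem_nhds]
  rintro _ ⟨x, hx, rfl⟩
  filter_upwards [hφ.eventually_exists_apply_eq hF hT hS hL hx] with y ⟨x', hx', hy, _⟩
  exact ⟨x', hx', hy⟩

theorem IsFlowOn.calmOn_leftInverse [CompleteSpace X] (hφ : IsFlowOn F W T S φ)
    (hF : IsC11On F F' W (Icc 0 T) M) (hT : 0 ≤ T) (hS : IsOpen S) {L : ℝ≥0}
    (hL : ∀ x ∈ S, ∀ s ∈ Icc 0 T, ‖F' s (φ s x)‖ ≤ L) {h : X → X} (hh : LeftInvOn h (φ T) S) :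
    CalmOn (Real.exp ((L + 1) * 2 * T)).toNNReal h (φ T '' S) := by
  rintro _ ⟨x, hx, rfl⟩
  filter_upwards [nhdsWithin_le_nhds (hφ.eventually_exists_apply_eq hF hT hS hL hx)]
    with y ⟨x', hx', hy, hdist⟩
  rw [Real.coe_toNNReal _ (Real.exp_pos _).le, hh hx]
  rw [← hy, hh hx'] at *
  exact hdist

theorem two_mul_sq_norm_sub_lt_add_of_mul_norm_lt {x x₁ x₂ z : X}
    (h : 2 * ‖x₁ + x₂ - (2 : ℝ) • x‖ * ‖x - z‖ < ‖x₁ - x‖ ^ 2 + ‖x₂ - x‖ ^ 2) :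
    2 * ‖x - z‖ ^ 2 < ‖x₁ - z‖ ^ 2 + ‖x₂ - z‖ ^ 2 := by
  have hexpand : ∀ y, ‖y - z‖ ^ 2 = ‖y - x‖ ^ 2 + 2 * ⟪y - x, x - z⟫ + ‖x - z‖ ^ 2 := fun y => by
    rw [← norm_add_sq_real, sub_add_sub_cancel]
  have hsum : ⟪x₁ - x, x - z⟫ + ⟪x₂ - x, x - z⟫ = ⟪x₁ + x₂ - (2 : ℝ) • x, x - z⟫ := by
    rw [← inner_add_left]; congr 1; module
  have hcs := neg_le_of_abs_le (abs_real_inner_le_norm (x₁ + x₂ - (2 : ℝ) • x) (x - z))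
  rw [hexpand x₁, hexpand x₂]
  linarith

theorem exists_pos_mul_exp_lt_one {a : ℝ} (ha : a < 1) (T : ℝ) :
    ∃ ε > 0, a * Real.exp (2 * ε * T) < 1 := by
  have hcont : Continuous fun ε => a * Real.exp (2 * ε * T) := by fun_prop
  have hev : ∀ᶠ ε in 𝓝[>] (0 : ℝ), a * Real.exp (2 * ε * T) < 1 :=
    nhdsWithin_le_nhds (hcont.continuousAt.eventually_lt_const (by simpa))
  obtain ⟨ε, hlt, hε⟩ := (hev.and self_mem_nhdsWithin).exists
  exact ⟨ε, hε, hlt⟩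

theorem IsFlowOn.exists_two_mul_sq_norm_sub_lt (hφ : IsFlowOn F W T S φ)
    (hF : IsC11On F F' W (Icc 0 T) M) (hT : 0 ≤ T) {M₁ : ℝ} {x x₀ : X} (hx : x ∈ S)
    (hM₁ : ∀ s ∈ Icc 0 T, 2 * muPlus (F' s (φ s x)) - muMinus (F' s (φ s x)) ≤ M₁)
    (hlt : ‖x - x₀‖ * M * ∫ u in 0..T, Real.exp (M₁ * u) < 1) :
    ∃ δ > 0, ∀ x₁ ∈ S, ∀ x₂ ∈ S, dist x₁ x < δ → dist x₂ x < δ → x₁ ≠ x →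
      φ T x₁ + φ T x₂ = (2 : ℝ) • φ T x →
      2 * ‖x - x₀‖ ^ 2 < ‖x₁ - x₀‖ ^ 2 + ‖x₂ - x₀‖ ^ 2 := by
  obtain ⟨ε, hε, hltε⟩ := exists_pos_mul_exp_lt_one hlt T
  obtain ⟨δ, hδ, hsecond⟩ := hF.exists_norm_add_sub_two_smul_le hT (hφ.isSolutionOn x hx) hM₁ hε
  refine ⟨δ, hδ, fun x₁ hx₁ x₂ hx₂ hδ₁ hδ₂ hne hmid =>
    two_mul_sq_norm_sub_lt_add_of_mul_norm_lt ?_⟩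
  have hω := hsecond _ _ (hφ.isSolutionOn x₁ hx₁) (hφ.isSolutionOn x₂ hx₂)
  simp only [hφ.zero_apply, hx, hx₁, hx₂, ← dist_eq_norm _ x, hδ₁, hδ₂, hmid, true_imp_iff] at hω
  have hpos : 0 < ‖x₁ - x‖ ^ 2 + ‖x₂ - x‖ ^ 2 := by
    have := norm_pos_iff.2 (sub_ne_zero.2 hne)
    positivity
  simp only [dist_eq_norm] at hω
  calc 2 * ‖x₁ + x₂ - (2 : ℝ) • x‖ * ‖x - x₀‖
      ≤ 2 * (M / 2 * Real.exp (2 * ε * T) * (‖x₁ - x‖ ^ 2 + ‖x₂ - x‖ ^ 2) *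
          ∫ u in 0..T, Real.exp (M₁ * u)) * ‖x - x₀‖ := by gcongr
    _ = ((‖x - x₀‖ * M * ∫ u in 0..T, Real.exp (M₁ * u)) * Real.exp (2 * ε * T)) *
          (‖x₁ - x‖ ^ 2 + ‖x₂ - x‖ ^ 2) := by ring
    _ < ‖x₁ - x‖ ^ 2 + ‖x₂ - x‖ ^ 2 := mul_lt_of_lt_one_left hpos hltε

theorem IsFlowOn.eventually_two_mul_sq_norm_sub_lt (hφ : IsFlowOn F W T S φ)
    (hF : IsC11On F F' W (Icc 0 T) M) (hT : 0 ≤ T) {M₁ : ℝ} {x x₀ : X} (hx : x ∈ S)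
    (hM₁ : ∀ s ∈ Icc 0 T, 2 * muPlus (F' s (φ s x)) - muMinus (F' s (φ s x)) ≤ M₁)
    (hlt : ‖x - x₀‖ * M * ∫ u in 0..T, Real.exp (M₁ * u) < 1) {h : X → X}
    (hh : LeftInvOn h (φ T) S) (hopen : IsOpen (φ T '' S)) (hcont : ContinuousOn h (φ T '' S)) :
    ∀ᶠ v in 𝓝[≠] 0, 2 * ‖x - x₀‖ ^ 2 <
      ‖h (φ T x + v) - x₀‖ ^ 2 + ‖h (φ T x - v) - x₀‖ ^ 2 := by
  obtain ⟨δ, hδ, hmid⟩ := hφ.exists_two_mul_sq_norm_sub_lt hF hT hx hM₁ hlt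
  have hnhds : φ T '' S ∈ 𝓝 (φ T x) := hopen.mem_nhds (mem_image_of_mem _ hx)
  have hnear : ∀ᶠ y in 𝓝 (φ T x), y ∈ φ T '' S ∧ dist (h y) x < δ := by
    have htend := (hcont.continuousAt hnhds).tendsto
    rw [hh hx] at htend
    exact (eventually_mem_set.2 hnhds).and (htend.eventually (ball_mem_nhds x hδ))
  have hadd : Tendsto (fun v => φ T x + v) (𝓝[≠] 0) (𝓝 (φ T x)) := by
    simpa using ((continuous_const_add (φ T x)).tendsto 0).mono_left nhdsWithin_le_nhds
  have hsub : Tendsto (fun v => φ T x - v) (𝓝[≠] 0) (𝓝 (φ T x)) := by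
    simpa using ((continuous_sub_left (φ T x)).tendsto 0).mono_left nhdsWithin_le_nhds
  filter_upwards [hadd.eventually hnear, hsub.eventually hnear, self_mem_nhdsWithin]
    with v ⟨⟨x₁, hx₁, hv₁⟩, hδ₁⟩ ⟨⟨x₂, hx₂, hv₂⟩, hδ₂⟩ hv
  rw [← hv₁, hh hx₁] at hδ₁ ⊢
  rw [← hv₂, hh hx₂] at hδ₂ ⊢
  refine hmid x₁ hx₁ x₂ hx₂ hδ₁ hδ₂ ?_ ?_
  · rintro rfl
    exact hv (by simpa using hv₁)
  · rw [hv₁, hv₂]; module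

theorem IsFlowOn.convex_image_closedBall [CompleteSpace X] {x₀ : X} {r M₁ : ℝ} (hr : 0 < r)
    (hT : 0 ≤ T) (hφ : IsFlowOn F W T (closedBall x₀ r) φ) (hF : IsC11On F F' W (Icc 0 T) M)
    (hM₁ : ∀ s ∈ Icc 0 T, ∀ x, (s, x) ∈ W → 2 * muPlus (F' s x) - muMinus (F' s x) ≤ M₁)
    (hrad : r * M * ∫ u in 0..T, Real.exp (M₁ * u) ≤ 1) :
    Convex ℝ (φ T '' closedBall x₀ r) := by
  have hm : ∀ s ∈ Icc 0 T, ∀ x, (s, x) ∈ W → muPlus (F' s x) ≤ M₁ := fun s hs x hx => by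
    linarith [hM₁ s hs x hx, muMinus_le_muPlus (F' s x)]
  have hφball := hφ.mono ball_subset_closedBall
  have hlip := (hφ.calmOn hF hm (right_mem_Icc.2 hT)).lipschitzOnWith (convex_closedBall x₀ r)
  obtain ⟨L, hL⟩ := hφball.exists_norm_fderiv_le hF hm (convex_ball x₀ r) isBounded_ball
  have hinv : LeftInvOn (Function.invFunOn (φ T) (ball x₀ r)) (φ T) (ball x₀ r) :=
    (hφball.injOn hF hT).leftInvOn_invFunOn
  have hopen := hφball.isOpen_image hF hT isOpen_ball hL
  have hcalm := hφball.calmOn_leftInverse hF hT isOpen_ball hL hinv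
  refine _root_.convex_image_closedBall hr hlip hinv hopen hcalm ?_
  rintro _ ⟨x, hx, rfl⟩
  rw [hinv hx]
  refine hφball.eventually_two_mul_sq_norm_sub_lt hF hT hx
    (fun s hs => hM₁ s hs _ ((hφball.isSolutionOn x hx).mem s hs)) ?_ hinv hopen
    hcalm.continuousOn
  have hI : 0 ≤ ∫ u in 0..T, Real.exp (M₁ * u) :=
    intervalIntegral.integral_nonneg hT fun _ _ => (Real.exp_pos _).le
  rw [mul_assoc] at hrad ⊢
  rcases (mul_nonneg M.2 hI).eq_or_lt with h0 | hpos
  · exact (mul_eq_zero_of_right _ h0.symm).trans_lt one_pos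
  · exact (mul_lt_mul_of_pos_right (mem_ball_iff_norm.1 hx) hpos).trans_le hrad

end Flow

section Slope

variable {E Y : Type*} [NormedAddCommGroup E] [NormedAddCommGroup Y] {G : E → Y}

theorem isBoundedUnder_norm_sub_div_norm {p : E} {L : ℝ}
    (hG : ∀ᶠ x in 𝓝 p, ‖G x - G p‖ ≤ L * ‖x - p‖) :
    IsBoundedUnder (· ≤ ·) (𝓝[≠] 0) fun h => ‖G (p + h) - G p‖ / ‖h‖ := by
  have hadd : Tendsto (fun h => p + h) (𝓝[≠] 0) (𝓝 p) := by
    simpa using ((continuous_const_add p).tendsto 0).mono_left nhdsWithin_le_nhds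
  refine ⟨L, eventually_map.2 ?_⟩
  filter_upwards [hadd.eventually hG, self_mem_nhdsWithin] with h hh hne
  rw [div_le_iff₀ (norm_pos_iff.2 hne)]
  simpa using hh

theorem eventually_dist_le_mul_dist_of_limsup_lt {p : E} {c : ℝ}
    (hbdd : IsBoundedUnder (· ≤ ·) (𝓝[≠] 0) fun h => ‖G (p + h) - G p‖ / ‖h‖)
    (hlim : limsup (fun h => ‖G (p + h) - G p‖ / ‖h‖) (𝓝[≠] 0) < c) :
    ∀ᶠ x in 𝓝 p, dist (G x) (G p) ≤ c * dist x p := by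
  have hsub : Tendsto (fun x => x - p) (𝓝 p) (𝓝 0) := by
    simpa using (continuous_sub_right p).tendsto p
  filter_upwards [hsub.eventually (eventually_nhdsWithin_iff.1
    (eventually_lt_of_limsup_lt hlim hbdd))] with x hx
  rcases eq_or_ne x p with rfl | hne
  · simp
  have hlt := hx (sub_ne_zero.2 hne)
  rw [add_sub_cancel, div_lt_iff₀ (norm_pos_iff.2 (sub_ne_zero.2 hne))] at hlt
  simpa only [dist_eq_norm] using hlt.le

theorem limsup_norm_sub_div_norm_nonneg [(𝓝[≠] (0 : E)).NeBot] {p : E}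
    (hbdd : IsBoundedUnder (· ≤ ·) (𝓝[≠] 0) fun h => ‖G (p + h) - G p‖ / ‖h‖) :
    0 ≤ limsup (fun h => ‖G (p + h) - G p‖ / ‖h‖) (𝓝[≠] 0) :=
  le_limsup_of_frequently_le (Eventually.of_forall fun _ => by positivity).frequently hbdd

theorem lipschitzOnWith_of_limsup_le [NormedSpace ℝ E] {V : Set E} (hV : Convex ℝ V) {c : ℝ≥0}
    (hbdd : ∀ p ∈ V, IsBoundedUnder (· ≤ ·) (𝓝[≠] 0) fun h => ‖G (p + h) - G p‖ / ‖h‖)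
    (hlim : ∀ p ∈ V, limsup (fun h => ‖G (p + h) - G p‖ / ‖h‖) (𝓝[≠] 0) ≤ c) :
    LipschitzOnWith c G V := by
  have hlip : ∀ c' > c, LipschitzOnWith c' G V := fun c' hc' =>
    CalmOn.lipschitzOnWith (fun p hp => nhdsWithin_le_nhds <|
      eventually_dist_le_mul_dist_of_limsup_lt (hbdd p hp)
        ((hlim p hp).trans_lt (NNReal.coe_lt_coe.2 hc'))) hV
  refine LipschitzOnWith.of_dist_le_mul fun x hx y hy => ?_
  have hcont : Continuous fun c' : ℝ≥0 => (c' : ℝ) * dist x y := by fun_prop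
  refine ge_of_tendsto ((hcont.tendsto c).mono_left (nhdsWithin_le_nhds (s := Ioi c))) ?_
  filter_upwards [self_mem_nhdsWithin] with c' hc'
  exact (hlip c' hc').dist_le_mul x hx y hy

variable {F : ℝ → E → E} {W : Set (ℝ × E)} {J : Set ℝ} {M : ℝ≥0}

theorem isC11On_of_limsup_le [NormedSpace ℝ E] {F' : ℝ → E → E →L[ℝ] E} (hW : IsOpen W)
    (hF : ContinuousOn (fun p : ℝ × E => F p.1 p.2) (W ∩ J ×ˢ univ))
    (hF' : ContinuousOn (fun p : ℝ × E => F' p.1 p.2) (W ∩ J ×ˢ univ))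
    (hderiv : ∀ p ∈ W ∩ J ×ˢ univ, HasFDerivAt (F p.1) (F' p.1 p.2) p.2)
    (hbdd : ∀ p ∈ W ∩ J ×ˢ univ, IsBoundedUnder (· ≤ ·) (𝓝[≠] 0)
      fun h => ‖F' p.1 (p.2 + h) - F' p.1 p.2‖ / ‖h‖)
    (hlim : ∀ p ∈ W ∩ J ×ˢ univ,
      limsup (fun h => ‖F' p.1 (p.2 + h) - F' p.1 p.2‖ / ‖h‖) (𝓝[≠] 0) ≤ M) :
    IsC11On F F' W J M where
  isOpen := hW
  continuousOn := hF
  continuousOn_fderiv := hF'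
  hasFDerivAt s hs x hx := hderiv (s, x) ⟨hx, hs, trivial⟩
  lipschitzOnWith_fderiv s hs _ hC hCW := lipschitzOnWith_of_limsup_le hC
    (fun p hp => hbdd (s, p) ⟨hCW p hp, hs, trivial⟩)
    (fun p hp => hlim (s, p) ⟨hCW p hp, hs, trivial⟩)

theorem isBoundedUnder_norm_sub_div_norm_of_locallyLipschitz {V : Type*}
    [NormedAddCommGroup V] {Φ : ℝ → E → V} (hW : IsOpen W)
    (hlip : ∀ p ∈ W ∩ J ×ˢ univ, ∃ ε > 0, ∃ L : ℝ≥0, ∀ x ∈ ball p.2 ε, ∀ y ∈ ball p.2 ε,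
      (p.1, x) ∈ W ∩ J ×ˢ univ → (p.1, y) ∈ W ∩ J ×ˢ univ →
        ‖Φ p.1 x - Φ p.1 y‖ ≤ L * ‖x - y‖) :
    ∀ p ∈ W ∩ J ×ˢ univ, IsBoundedUnder (· ≤ ·) (𝓝[≠] 0)
      fun h => ‖Φ p.1 (p.2 + h) - Φ p.1 p.2‖ / ‖h‖ := by
  intro p hp
  obtain ⟨ε, hε, L, hL⟩ := hlip p hp
  have hslice : {x | (p.1, x) ∈ W} ∈ 𝓝 p.2 :=
    (hW.preimage (Continuous.prodMk_right p.1)).mem_nhds hp.1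
  refine isBoundedUnder_norm_sub_div_norm (L := L) ?_
  filter_upwards [hslice, ball_mem_nhds p.2 hε] with x hxW hx
  exact hL x hx p.2 (mem_ball_self hε) ⟨hxW, hp.2⟩ hp

end Slope

section TimeDirection

/-- The sign of the direction of time from `t₀` to `t₁`, so that `s ↦ t₀ + timeDirection t₀ t₁ * s`
runs from `t₀` to `t₁` over `Icc 0 |t₁ - t₀|`.  It is `1` rather than `0` for `t₀ = t₁`. -/
noncomputable def timeDirection (t₀ t₁ : ℝ) : ℝ :=
  if t₀ ≤ t₁ then 1 else -1

theorem nnnorm_timeDirection (t₀ t₁ : ℝ) : ‖timeDirection t₀ t₁‖₊ = 1 := by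
  unfold timeDirection
  split_ifs <;> simp

theorem add_timeDirection_mul_abs_sub (t₀ t₁ : ℝ) :
    t₀ + timeDirection t₀ t₁ * |t₁ - t₀| = t₁ := by
  unfold timeDirection
  split_ifs with h
  · rw [abs_of_nonneg (sub_nonneg.2 h)]; ring
  · rw [abs_of_neg (sub_neg.2 (not_le.1 h))]; ring

theorem mapsTo_add_timeDirection_mul (t₀ t₁ : ℝ) :
    MapsTo (fun s => t₀ + timeDirection t₀ t₁ * s) (Icc 0 |t₁ - t₀|) (uIcc t₀ t₁) := by
  intro s hs
  rw [mem_uIcc]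
  unfold timeDirection
  split_ifs with h
  · rw [abs_of_nonneg (sub_nonneg.2 h)] at hs
    left; constructor <;> linarith [hs.1, hs.2]
  · rw [abs_of_neg (sub_neg.2 (not_le.1 h))] at hs
    right; constructor <;> linarith [hs.1, hs.2]

variable {X : Type*} [NormedAddCommGroup X] [InnerProductSpace ℝ X]

theorem two_mul_muPlus_sub_muMinus_timeDirection_smul (t₀ t₁ : ℝ) (A : X →L[ℝ] X) :
    2 * muPlus (timeDirection t₀ t₁ • A) - muMinus (timeDirection t₀ t₁ • A) =
      if t₀ ≤ t₁ then 2 * muPlus A - muMinus A else muPlus A - 2 * muMinus A := by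
  unfold timeDirection
  split_ifs
  · rw [one_smul]
  · rw [neg_one_smul, muPlus_neg, muMinus_neg]; ring

theorem integral_exp_mul_eq_ite (α T : ℝ) :
    ∫ u in 0..T, Real.exp (α * u) = if α = 0 then T else (Real.exp (α * T) - 1) / α := by
  split_ifs with hα
  · simp [hα]
  · rw [intervalIntegral.integral_comp_mul_left _ hα, integral_exp, mul_zero, Real.exp_zero,
      smul_eq_mul, inv_mul_eq_div]

theorem convex_image_closedBall_of_isC11On [CompleteSpace X] {F : ℝ → X → X}
    {F' : ℝ → X → X →L[ℝ] X} {W : Set (ℝ × X)} {J : Set ℝ} {M : ℝ≥0}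
    {φ : ℝ → X → X} {x₀ : X} {r t₀ t₁ M₁ : ℝ}
    (hF : IsC11On F F' W J M) (hr : 0 < r) (hJ : uIcc t₀ t₁ ⊆ J)
    (hφ₀ : ∀ x ∈ closedBall x₀ r, φ t₀ x = x)
    (hφ : ∀ x ∈ closedBall x₀ r, IsSolutionOn F W (uIcc t₀ t₁) fun t => φ t x)
    (hM₁ : ∀ t ∈ uIcc t₀ t₁, ∀ x, (t, x) ∈ W →
      (if t₀ ≤ t₁ then 2 * muPlus (F' t x) - muMinus (F' t x)
        else muPlus (F' t x) - 2 * muMinus (F' t x)) ≤ M₁)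
    (hrad : r * M * ∫ u in 0..|t₁ - t₀|, Real.exp (M₁ * u) ≤ 1) :
    Convex ℝ (φ t₁ '' closedBall x₀ r) := by
  set σ := timeDirection t₀ t₁ with hσ
  have htime : MapsTo (fun s => t₀ + σ * s) (Icc 0 |t₁ - t₀|) (uIcc t₀ t₁) :=
    mapsTo_add_timeDirection_mul t₀ t₁
  have hflow : IsFlowOn (timeChange t₀ σ F) (timeChangeDomain t₀ σ W) |t₁ - t₀|
      (closedBall x₀ r) fun s => φ (t₀ + σ * s) :=
    ⟨fun x hx => by simpa using hφ₀ x hx, fun x hx => (hφ x hx).timeChange htime⟩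
  have hF_time := hF.timeChange (htime.mono_right hJ)
  rw [nnnorm_timeDirection, one_mul] at hF_time
  have hconvex := hflow.convex_image_closedBall hr (abs_nonneg _) hF_time
    (fun s hs x hx => (two_mul_muPlus_sub_muMinus_timeDirection_smul t₀ t₁ _).trans_le
      (hM₁ _ (htime hs) x hx)) hrad
  rwa [hσ, add_timeDirection_mul_abs_sub] at hconvex

end TimeDirection

/-- Let `X` be a real Hilbert space, `I ⊆ ℝ` an interval, `U ⊆ I × X`
relatively open, and `f : U → X` continuous and of class `C^{1,1}` with respect to its second
argument, with partial derivative `f'`.  Let `φ` be the general solution of `ẋ = f(t,x)`,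
`x₀ ∈ X`, `r > 0`, `t₀, t₁ ∈ I` with `(t₁,t₀,x) ∈ dom φ` for all `x ∈ B̄(x₀,r)`.  Suppose
`M₁ ≥ 2μ₊(D₂f(τ,x)) − μ₋(D₂f(τ,x))` (if `t₁ ≥ t₀`; `M₁ ≥ μ₊ − 2μ₋` otherwise) and
`M₂ ≥ limsup_{h→0} ‖D₂f(τ,x+h) − D₂f(τ,x)‖/‖h‖` on `U`, and let
`K(α) = |t₁−t₀|` for `α = 0`, `K(α) = (exp(α|t₁−t₀|)−1)/α` otherwise.  If `r·M₂·K(M₁) ≤ 1`,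
then the reachable set `φ(t₁,t₀,B̄(x₀,r))` is convex. -/
theorem stmt_6 {X : Type*} [NormedAddCommGroup X] [InnerProductSpace ℝ X] [CompleteSpace X]
    (I : Set ℝ) (hI : I.OrdConnected)
    (U : Set (ℝ × X)) (hU : ∃ W : Set (ℝ × X), IsOpen W ∧ U = W ∩ I ×ˢ (univ : Set X))
    (f : ℝ → X → X) (f' : ℝ → X → X →L[ℝ] X)
    (hfc : ContinuousOn (fun p : ℝ × X => f p.1 p.2) U)
    (hf'c : ContinuousOn (fun p : ℝ × X => f' p.1 p.2) U)
    (hderiv : ∀ p ∈ U, HasFDerivAt (fun x => f p.1 x) (f' p.1 p.2) p.2)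
    (hlip : ∀ p ∈ U, ∃ ε > 0, ∃ L : NNReal,
      ∀ x ∈ ball p.2 ε, ∀ y ∈ ball p.2 ε, (p.1, x) ∈ U → (p.1, y) ∈ U →
        ‖f' p.1 x - f' p.1 y‖ ≤ L * ‖x - y‖)
    (x₀ : X) (r : ℝ) (hr : 0 < r) (t₀ t₁ : ℝ) (ht₀ : t₀ ∈ I) (ht₁ : t₁ ∈ I)
    (φ : ℝ → ℝ → X → X)
    (hφ : ∀ x ∈ closedBall x₀ r, φ t₀ t₀ x = x ∧
      ∀ τ ∈ uIcc t₀ t₁, (τ, φ τ t₀ x) ∈ U ∧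
        HasDerivWithinAt (fun s => φ s t₀ x) (f τ (φ τ t₀ x)) (uIcc t₀ t₁) τ)
    (M₁ M₂ : ℝ)
    (hM₁ : ∀ p ∈ U, (if t₀ ≤ t₁ then 2 * muPlus (f' p.1 p.2) - muMinus (f' p.1 p.2)
      else muPlus (f' p.1 p.2) - 2 * muMinus (f' p.1 p.2)) ≤ M₁)
    (hM₂ : ∀ p ∈ U,
      limsup (fun h : X => ‖f' p.1 (p.2 + h) - f' p.1 p.2‖ / ‖h‖) (𝓝[≠] (0:X)) ≤ M₂)
    (K : ℝ → ℝ)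
    (hK : ∀ α : ℝ, K α = if α = 0 then |t₁ - t₀| else (Real.exp (α * |t₁ - t₀|) - 1) / α)
    (hrad : r * M₂ * K M₁ ≤ 1) :
    Convex ℝ ((fun x => φ t₁ t₀ x) '' closedBall x₀ r) := by
  rcases subsingleton_or_nontrivial X with hX | hX
  · exact subsingleton_of_subsingleton.convex
  obtain ⟨W, hW, rfl⟩ := hU
  have hJ : uIcc t₀ t₁ ⊆ I := hI.uIcc_subset ht₀ ht₁
  have hbdd := isBoundedUnder_norm_sub_div_norm_of_locallyLipschitz hW hlip
  have hM₂_nonneg : 0 ≤ M₂ := by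
    have hmem := ((hφ x₀ (mem_closedBall_self hr.le)).2 t₀ left_mem_uIcc).1
    have := Module.punctured_nhds_neBot ℝ X 0
    exact (limsup_norm_sub_div_norm_nonneg (hbdd _ hmem)).trans (hM₂ _ hmem)
  lift M₂ to ℝ≥0 using hM₂_nonneg
  have hf := isC11On_of_limsup_le hW hfc hf'c hderiv hbdd hM₂
  have hsol : ∀ x ∈ closedBall x₀ r, IsSolutionOn f W (uIcc t₀ t₁) fun t => φ t t₀ x :=
    fun x hx => ⟨fun s hs => ((hφ x hx).2 s hs).1.1, fun s hs => ((hφ x hx).2 s hs).2⟩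
  refine convex_image_closedBall_of_isC11On (φ := fun t => φ t t₀) hf hr hJ
    (fun x hx => (hφ x hx).1) hsol (fun t ht x hx => hM₁ (t, x) ⟨hx, hJ ht, trivial⟩) ?_
  rwa [integral_exp_mul_eq_ite, ← hK]
end
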